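/- arXiv:cs/0510017 — 2 statements merged into one kernel-verified Lean document; each statement's English description precedes it below -/
import Mathlib

section
/- Fix α ∈ (0,1) and p ∈ (0,1) with p ≠ 1/2, and let h = −p log p − q log q (logs base 2). Then D_n(α) / log log n → 1 / (−log(1 − h/log(1/√(pq)))) in probability as n → ∞; that is, for every ε > 0, P( |D_n(α) · (−log(1 − h/log(1/√(pq)))) / log log n − 1| > ε ) → 0. -/
/-!
Partial fillup in tries (Janson–Szpankowski), Theorem 1 (two-point concentration
of the α-fillup level `F_n(α)`).

Model: an outcome `ω : ℕ → ℕ → Bool` encodes infinitely many strings, where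
`ω i j` is the `j`-th bit of the `i`-th string; the measure `ν` makes all bits
i.i.d. with `P(bit = 1) = p`.  The trie on `n` strings uses strings `0,…,n-1`.
-/

open MeasureTheory ProbabilityTheory Real Filter

/-- The number of strings among the first `n` (encoded in `ω`) whose first `k` bits
form the word `r ∈ {0,1}^k`. -/
def prefCount (ω : ℕ → ℕ → Bool) (n k : ℕ) (r : Fin k → Bool) : ℕ :=
  ((Finset.range n).filter fun i => ∀ j : Fin k, ω i j = r j).card

/-- `X_k`: the number of words `r ∈ {0,1}^k` that are prefixes of at least two of the
first `n` strings. -/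
def fillCount (ω : ℕ → ℕ → Bool) (n k : ℕ) : ℕ :=
  (Finset.univ.filter fun r : Fin k → Bool => 2 ≤ prefCount ω n k r).card

/-- `X̄_k = X_k / 2^k`, the proportion of filled words at level `k`. -/
noncomputable def fracFilled (ω : ℕ → ℕ → Bool) (n k : ℕ) : ℝ :=
  (fillCount ω n k : ℝ) / 2 ^ k

/-- The α-fillup level `F_n(α) = max {k : X̄_k ≥ α}`. -/
noncomputable def fillupLevel (α : ℝ) (ω : ℕ → ℕ → Bool) (n : ℕ) : ℕ :=
  sSup {k | α ≤ fracFilled ω n k}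

/-- `ν` is a probability measure on `ℕ → ℕ → Bool` under which all the bits
`ω i j` are i.i.d. with `P(bit = 1) = p` (characterized by cylinder probabilities). -/
def IIDBits (p : ℝ) (ν : Measure (ℕ → ℕ → Bool)) : Prop :=
  IsProbabilityMeasure ν ∧
    ∀ (S : Finset (ℕ × ℕ)) (b : ℕ × ℕ → Bool),
      ν {ω | ∀ s ∈ S, ω s.1 s.2 = b s} =
        ∏ s ∈ S, ENNReal.ofReal (if b s then p else 1 - p)

/-- For a family of strings given by the index set `S` (with the first `t` bits already
consumed), the number of words `r ∈ {0,1}^k` that are prefixes of at least two of the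
(suffixes of the) strings of the family. -/
def fillCountFam (ω : ℕ → ℕ → Bool) (S : Finset ℕ) (t k : ℕ) : ℕ :=
  (Finset.univ.filter fun r : Fin k → Bool =>
    2 ≤ (S.filter fun i => ∀ j : Fin k, ω i (t + j) = r j).card).card

/-- The α-fillup level `F(S)` of the family of suffixes (first `t` bits removed) of the
strings with index in `S`. -/
noncomputable def fillupLevelFam (α : ℝ) (ω : ℕ → ℕ → Bool) (S : Finset ℕ) (t : ℕ) : ℕ :=
  sSup {k | α ≤ (fillCountFam ω S t k : ℝ) / 2 ^ k}

/-- One level-compression step along the designated string `ξ_1` (index `0`): the family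
`S` is replaced by the family of (suffixes of) those strings of `S` whose first
`F(S) + 1` remaining bits agree with those of `ξ_1`. -/
noncomputable def lcStep (α : ℝ) (ω : ℕ → ℕ → Bool) : Finset ℕ × ℕ → Finset ℕ × ℕ :=
  fun St =>
    (St.1.filter fun i => ∀ j < fillupLevelFam α ω St.1 St.2 + 1,
        ω i (St.2 + j) = ω 0 (St.2 + j),
      St.2 + fillupLevelFam α ω St.1 St.2 + 1)

/-- The family (with offset) after `m` level-compression steps, starting from the `n`
strings `ξ_1, …, ξ_n` (indices `0, …, n-1`). -/
noncomputable def lcIter (α : ℝ) (ω : ℕ → ℕ → Bool) (n : ℕ) : ℕ → Finset ℕ × ℕ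
  | 0 => (Finset.range n, 0)
  | m + 1 => lcStep α ω (lcIter α ω n m)

/-- The depth `D_n(α)` of the designated string `ξ_1` in the α-LC trie: the number of
level-compression steps needed until `ξ_1`'s family has size `1`. -/
noncomputable def lcDepth (α : ℝ) (ω : ℕ → ℕ → Bool) (n : ℕ) : ℕ :=
  sInf {m | (lcIter α ω n m).1.card ≤ 1}


namespace LC

/-- weight of a bit -/
noncomputable def wt (p : ℝ) (b : Bool) : ℝ := if b then p else 1 - p

/-- information of a bit -/
noncomputable def zt (p : ℝ) (b : Bool) : ℝ := -Real.logb 2 (wt p b)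

/-- probability of a prefix -/
noncomputable def PW (p : ℝ) (u : ℕ → Bool) (t : ℕ) : ℝ := ∏ j ∈ Finset.range t, wt p (u j)

/-- information of a prefix -/
noncomputable def Zs (p : ℝ) (u : ℕ → Bool) (t : ℕ) : ℝ := ∑ j ∈ Finset.range t, zt p (u j)

/-- string `i` has prefix `u` of length `t` -/
def pre (ω : ℕ → ℕ → Bool) (i : ℕ) (u : ℕ → Bool) (t : ℕ) : Prop := ∀ j < t, ω i j = u j

/-- extension of a finite word -/
def ext {t : ℕ} (r : Fin t → Bool) : ℕ → Bool := fun j => if h : j < t then r ⟨j, h⟩ else false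

/-- concatenation -/
def cat (t : ℕ) (u r : ℕ → Bool) : ℕ → Bool := fun j => if j < t then u j else r (j - t)

lemma wt_pos {p : ℝ} (hp : 0 < p) (hp1 : p < 1) (b : Bool) : 0 < wt p b := by
  unfold wt; split_ifs <;> linarith

lemma wt_lt {p : ℝ} (hp : 0 < p) (hp1 : p < 1) (b : Bool) : wt p b < 1 := by
  unfold wt; split_ifs <;> linarith

lemma zt_pos {p : ℝ} (hp : 0 < p) (hp1 : p < 1) (b : Bool) : 0 < zt p b := by
  unfold zt
  have := Real.logb_neg (b := 2) (by norm_num) (wt_pos hp hp1 b) (wt_lt hp hp1 b)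
  linarith

lemma wt_eq {p : ℝ} (hp : 0 < p) (hp1 : p < 1) (b : Bool) : wt p b = (2 : ℝ) ^ (-zt p b) := by
  unfold zt
  rw [neg_neg, Real.rpow_logb (by norm_num) (by norm_num) (wt_pos hp hp1 b)]

lemma PW_eq {p : ℝ} (hp : 0 < p) (hp1 : p < 1) (u : ℕ → Bool) (t : ℕ) :
    PW p u t = (2 : ℝ) ^ (-Zs p u t) := by
  unfold PW Zs
  rw [← Finset.sum_neg_distrib, Real.rpow_sum_of_pos (by norm_num)]
  exact Finset.prod_congr rfl fun j _ => wt_eq hp hp1 _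

lemma PW_pos {p : ℝ} (hp : 0 < p) (hp1 : p < 1) (u : ℕ → Bool) (t : ℕ) : 0 < PW p u t :=
  Finset.prod_pos fun _ _ => wt_pos hp hp1 _

lemma PW_le {p : ℝ} (hp : 0 < p) (hp1 : p < 1) (u : ℕ → Bool) (t : ℕ) : PW p u t ≤ 1 :=
  Finset.prod_le_one (fun _ _ => (wt_pos hp hp1 _).le) fun _ _ => (wt_lt hp hp1 _).le

lemma PW_cat (p : ℝ) (u r : ℕ → Bool) (t k : ℕ) :
    PW p (cat t u r) (t + k) = PW p u t * PW p r k := by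
  unfold PW
  rw [Finset.prod_range_add]
  congr 1
  · refine Finset.prod_congr rfl fun j hj => ?_
    rw [Finset.mem_range] at hj
    simp [cat, hj]
  · refine Finset.prod_congr rfl fun j hj => ?_
    simp [cat]

lemma Zs_add (p : ℝ) (u : ℕ → Bool) (t k : ℕ) :
    Zs p u (t + k) = Zs p u t + Zs p (fun j => u (t + j)) k := by
  unfold Zs
  rw [Finset.sum_range_add]

lemma Zs_mono {p : ℝ} (hp : 0 < p) (hp1 : p < 1) (u : ℕ → Bool) : Monotone (Zs p u) := by
  intro s t hst
  unfold Zs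
  exact Finset.sum_le_sum_of_subset_of_nonneg (Finset.range_mono hst)
    fun j _ _ => (zt_pos hp hp1 _).le

lemma Zs_congr {p : ℝ} {u v : ℕ → Bool} {t : ℕ} (h : ∀ j < t, u j = v j) : Zs p u t = Zs p v t := by
  unfold Zs
  exact Finset.sum_congr rfl fun j hj => by rw [h j (Finset.mem_range.1 hj)]

lemma PW_ext (p : ℝ) {t : ℕ} (r : Fin t → Bool) : PW p (ext r) t = ∏ i, wt p (r i) := by
  unfold PW
  rw [Finset.prod_range]
  simp [ext]

lemma Zs_ext (p : ℝ) {t : ℕ} (r : Fin t → Bool) : Zs p (ext r) t = ∑ i, zt p (r i) := by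
  unfold Zs
  rw [Finset.sum_range]
  simp [ext]

/-- potential function bound -/
lemma potential {p : ℝ} (hp : 0 < p) (hp1 : p < 1) (f Φ : ℝ → ℝ) (h0 : ∀ y, 0 ≤ Φ y)
    (h : ∀ y b, f y + Φ (y - zt p b) ≤ Φ y) (T : ℕ) : ∀ y : ℝ,
    ∑ t ∈ Finset.range T, ∑ v : Fin t → Bool,
      PW p (ext v) t * f (y - Zs p (ext v) t) ≤ Φ y := by
  simp only [PW_ext, Zs_ext]
  induction T with
  | zero => intro y; simpa using h0 y
  | succ T ih =>
    intro y
    rw [Finset.sum_range_succ']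
    have key : ∀ t : ℕ, ∑ v : Fin (t+1) → Bool, (∏ i, wt p (v i)) * f (y - ∑ i, zt p (v i))
        = ∑ b : Bool, wt p b * ∑ v : Fin t → Bool, (∏ i, wt p (v i)) *
          f ((y - zt p b) - ∑ i, zt p (v i)) := by
      intro t
      rw [← (Fin.consEquiv (fun _ : Fin (t+1) => Bool)).sum_comp, Fintype.sum_prod_type]
      refine Finset.sum_congr rfl fun b _ => ?_
      rw [Finset.mul_sum]
      refine Finset.sum_congr rfl fun v _ => ?_
      simp only [Fin.consEquiv_apply, Fin.prod_univ_succ, Fin.sum_univ_succ, Fin.cons_zero,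
        Fin.cons_succ]
      rw [mul_assoc, sub_sub]
    simp only [key]
    rw [Finset.sum_comm]
    simp only [← Finset.mul_sum]
    have hs : (∑ v : Fin 0 → Bool, (∏ i, wt p (v i)) * f (y - ∑ i, zt p (v i))) = f y := by simp
    rw [hs, Fintype.sum_bool]
    have h1 := ih (y - zt p true)
    have h2 := ih (y - zt p false)
    have h3 := h y true
    have h4 := h y false
    have hw1 : wt p true = p := by simp [wt]
    have hw2 : wt p false = 1 - p := by simp [wt]
    rw [hw1, hw2]
    nlinarith

/-- Chernoff bound over words -/
lemma chernoff (w y : Bool → ℝ) (hw : ∀ b, 0 ≤ w b) (hw1 : w true + w false = 1)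
    (hm : w true * y true + w false * y false < 0) :
    ∃ θ > (0:ℝ), ∀ s : ℕ, ∑ r : Fin s → Bool,
      (if 0 ≤ ∑ i, y (r i) then ∏ i, w (r i) else 0) ≤ (2:ℝ) ^ (-(θ * s)) := by
  set φ : ℝ → ℝ := fun l => w true * Real.exp (l * y true) + w false * Real.exp (l * y false)
    with hφ
  have hd : HasDerivAt φ (w true * y true + w false * y false) 0 := by
    have e : ∀ c : ℝ, HasDerivAt (fun l : ℝ => Real.exp (l * c)) c 0 := by
      intro c
      have := ((hasDerivAt_id (0:ℝ)).mul_const c).exp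
      simpa using this
    exact ((e _).const_mul _).add ((e _).const_mul _)
  have h0 : φ 0 = 1 := by simp [hφ, hw1]
  obtain ⟨l, hl, hφl⟩ : ∃ l > (0:ℝ), φ l < 1 := by
    by_contra hcon
    push Not at hcon
    have := hd.hasDerivWithinAt (s := Set.Ioi 0)
    rw [hasDerivWithinAt_iff_tendsto_slope' (by simp)] at this
    have h2 : (0:ℝ) ≤ w true * y true + w false * y false := by
      refine ge_of_tendsto this ?_
      filter_upwards [self_mem_nhdsWithin] with l hl
      rw [slope_def_field, h0]
      have : (0:ℝ) < l := hl
      have := hcon l this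
      apply div_nonneg <;> linarith
    linarith
  have hpos : 0 < φ l := by
    have : ∃ b, 0 < w b := by
      by_contra hc
      push Not at hc
      have := hc true; have := hc false
      linarith
    obtain ⟨b, hb⟩ := this
    have := hw true; have := hw false
    have := Real.exp_pos (l * y true)
    have := Real.exp_pos (l * y false)
    simp only [hφ]
    cases b
    · have := mul_pos hb this; positivity
    · have := mul_pos hb ‹0 < Real.exp (l * y true)›; positivity
  refine ⟨-Real.logb 2 (φ l), by
    have := Real.logb_neg (b := 2) (by norm_num) hpos hφl
    linarith, fun s => ?_⟩
  have e : (2:ℝ) ^ (-(-Real.logb 2 (φ l) * s)) = φ l ^ s := by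
    rw [neg_mul, neg_neg, Real.rpow_mul (by norm_num),
      Real.rpow_logb (by norm_num) (by norm_num) hpos, Real.rpow_natCast]
  rw [e]
  have e2 : φ l = ∑ b : Bool, w b * Real.exp (l * y b) := by simp [hφ]
  rw [e2, Fintype.sum_pow]
  refine Finset.sum_le_sum fun r _ => ?_
  rw [Finset.prod_mul_distrib, ← Real.exp_sum, ← Finset.mul_sum]
  have hP : 0 ≤ ∏ i, w (r i) := Finset.prod_nonneg fun _ _ => hw _
  split_ifs with hr
  · have : 1 ≤ Real.exp (l * ∑ i, y (r i)) := Real.one_le_exp (by positivity)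
    nlinarith
  · positivity

end LC

namespace LC

variable {p : ℝ} {ν : Measure (ℕ → ℕ → Bool)}

lemma measurableSet_pre (i : ℕ) (u : ℕ → Bool) (t : ℕ) : MeasurableSet {ω | pre ω i u t} := by
  have : {ω : ℕ → ℕ → Bool | pre ω i u t} = ⋂ j ∈ Finset.range t, {ω | ω i j = u j} := by
    ext ω; simp [pre]
  rw [this]
  refine Finset.measurableSet_biInter _ fun j _ => ?_
  have hm : Measurable fun ω : ℕ → ℕ → Bool => ω i j :=
    (measurable_pi_apply j).comp (measurable_pi_apply i)
  exact hm (measurableSet_singleton (u j))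

lemma cyl (hp : 0 < p) (hp1 : p < 1) (hν : IIDBits p ν) (I : Finset ℕ) (ℓ : ℕ → ℕ)
    (u : ℕ → ℕ → Bool) :
    ν.real {ω | ∀ i ∈ I, pre ω i (u i) (ℓ i)} = ∏ i ∈ I, PW p (u i) (ℓ i) := by
  set S : Finset (ℕ × ℕ) := I.biUnion fun i => (Finset.range (ℓ i)).map ⟨fun j => (i, j), fun a b h => by simpa using h⟩ with hS
  have hmem : ∀ s : ℕ × ℕ, s ∈ S ↔ s.1 ∈ I ∧ s.2 ∈ Finset.range (ℓ s.1) := by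
    rintro ⟨i, j⟩
    simp only [hS, Finset.mem_biUnion, Finset.mem_map, Finset.mem_range]
    constructor
    · rintro ⟨a, ha, b, hb, hab⟩; cases hab; exact ⟨ha, hb⟩
    · rintro ⟨ha, hb⟩; exact ⟨i, ha, j, hb, rfl⟩
  have h := hν.2 S (fun s => u s.1 s.2)
  have hset : {ω : ℕ → ℕ → Bool | ∀ s ∈ S, ω s.1 s.2 = u s.1 s.2}
      = {ω | ∀ i ∈ I, pre ω i (u i) (ℓ i)} := by
    ext ω
    simp only [Set.mem_ofPred_eq, pre]
    constructor
    · intro h i hi j hj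
      exact h (i, j) ((hmem _).2 ⟨hi, Finset.mem_range.2 hj⟩)
    · intro h s hs
      have := (hmem s).1 hs
      exact h s.1 this.1 s.2 (Finset.mem_range.1 this.2)
  rw [hset] at h
  rw [measureReal_def, h, ENNReal.toReal_prod]
  rw [Finset.prod_finset_product S I (fun i => Finset.range (ℓ i)) hmem]
  refine Finset.prod_congr rfl fun i _ => Finset.prod_congr rfl fun j _ => ?_
  have := wt_pos hp hp1 (u i j)
  simp only [wt] at this
  rw [ENNReal.toReal_ofReal this.le]
  rfl

lemma cyl1 (hp : 0 < p) (hp1 : p < 1) (hν : IIDBits p ν) (v : ℕ → Bool) (t : ℕ) :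
    ν.real {ω | pre ω 0 v t} = PW p v t := by
  have := cyl hp hp1 hν {0} (fun _ => t) (fun _ => v)
  simpa using this

lemma cyl2 (hp : 0 < p) (hp1 : p < 1) (hν : IIDBits p ν) (v : ℕ → Bool) (t : ℕ)
    (i : ℕ) (hi : i ≠ 0) (u : ℕ → Bool) (s : ℕ) :
    ν.real ({ω | pre ω 0 v t} ∩ {ω | pre ω i u s}) = PW p v t * PW p u s := by
  have := cyl hp hp1 hν {0, i} (fun k => if k = 0 then t else s) (fun k => if k = 0 then v else u)
  rw [Finset.prod_pair (Ne.symm hi)] at this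
  simp only [Finset.mem_insert, Finset.mem_singleton, forall_eq_or_imp, forall_eq, if_true,
    if_neg hi] at this
  exact this

lemma cyl3 (hp : 0 < p) (hp1 : p < 1) (hν : IIDBits p ν) (v : ℕ → Bool) (t : ℕ)
    (i : ℕ) (hi : i ≠ 0) (j : ℕ) (hj : j ≠ 0) (hij : i ≠ j) (u : ℕ → Bool) (s : ℕ) :
    ν.real ({ω | pre ω 0 v t} ∩ {ω | pre ω i u s} ∩ {ω | pre ω j u s})
      = PW p v t * (PW p u s * PW p u s) := by
  have := cyl hp hp1 hν {0, i, j} (fun k => if k = 0 then t else s)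
    (fun k => if k = 0 then v else u)
  rw [Finset.prod_insert (by simp [Ne.symm hi, Ne.symm hj]), Finset.prod_pair hij] at this
  simp only [Finset.mem_insert, Finset.mem_singleton, forall_eq_or_imp, forall_eq, if_true,
    if_neg hi, if_neg hj] at this
  rw [← this]
  congr 1
  ext ω
  simp [and_assoc]

open Classical in
/-- number of strings among `1..n-1` with prefix `u` -/
noncomputable def Mc (ω : ℕ → ℕ → Bool) (n : ℕ) (u : ℕ → Bool) (s : ℕ) : ℕ :=
  ((Finset.Ico 1 n).filter fun i => pre ω i u s).card

lemma Mc_low (hp : 0 < p) (hp1 : p < 1) (hν : IIDBits p ν) (v : ℕ → Bool) (t : ℕ)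
    (n : ℕ) (u : ℕ → Bool) (s : ℕ) (hn : 2 ≤ ((n - 1 : ℕ) : ℝ) * PW p u s) :
    ν.real ({ω | pre ω 0 v t} ∩ {ω | Mc ω n u s ≤ 1}) ≤
      PW p v t * (4 / (((n - 1 : ℕ) : ℝ) * PW p u s)) := by
  classical
  have := hν.1
  set A : Set (ℕ → ℕ → Bool) := {ω | pre ω 0 v t} with hA
  set E : ℕ → Set (ℕ → ℕ → Bool) := fun i => {ω | pre ω i u s} with hE
  have mA : MeasurableSet A := measurableSet_pre _ _ _
  have mE : ∀ i, MeasurableSet (E i) := fun i => measurableSet_pre _ _ _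
  set N : ℝ := ((n - 1 : ℕ) : ℝ) with hN
  set w0 : ℝ := PW p u s with hw
  set c : ℝ := N * w0 with hc
  have hcardI : ((Finset.Ico 1 n).card : ℝ) = N := by simp [hN]
  -- the integrand
  set g : (ℕ → ℕ → Bool) → ℝ := fun ω =>
    (∑ i ∈ Finset.Ico 1 n, ∑ j ∈ Finset.Ico 1 n, (A ∩ E i ∩ E j).indicator 1 ω)
      - 2 * c * (∑ i ∈ Finset.Ico 1 n, (A ∩ E i).indicator 1 ω) + c ^ 2 * A.indicator 1 ω with hg
  have intI : ∀ B : Set (ℕ → ℕ → Bool), MeasurableSet B →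
      Integrable (B.indicator (1 : (ℕ → ℕ → Bool) → ℝ)) ν := fun B hB =>
    (integrable_const (1:ℝ)).indicator hB
  have valI : ∀ B : Set (ℕ → ℕ → Bool), MeasurableSet B →
      ∫ ω, B.indicator (1 : (ℕ → ℕ → Bool) → ℝ) ω ∂ν = ν.real B := fun B hB => by
    rw [integral_indicator_one hB]
  have i2 : Integrable (fun ω => ∑ i ∈ Finset.Ico 1 n, ∑ j ∈ Finset.Ico 1 n,
      (A ∩ E i ∩ E j).indicator (1 : (ℕ → ℕ → Bool) → ℝ) ω) ν :=
    integrable_finsetSum _ fun i _ => integrable_finsetSum _ fun j _ =>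
      intI _ ((mA.inter (mE i)).inter (mE j))
  have i1 : Integrable (fun ω => ∑ i ∈ Finset.Ico 1 n,
      (A ∩ E i).indicator (1 : (ℕ → ℕ → Bool) → ℝ) ω) ν :=
    integrable_finsetSum _ fun i _ => intI _ (mA.inter (mE i))
  have hgint : Integrable g ν := (i2.sub (i1.const_mul _)).add ((intI A mA).const_mul _)
  have hgval : ∫ ω, g ω ∂ν = PW p v t * (c - c * w0) := by
    simp only [hg]
    have i3 : Integrable (fun ω => (∑ i ∈ Finset.Ico 1 n, ∑ j ∈ Finset.Ico 1 n,
        (A ∩ E i ∩ E j).indicator (1 : (ℕ → ℕ → Bool) → ℝ) ω) - 2 * c * (∑ i ∈ Finset.Ico 1 n,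
        (A ∩ E i).indicator (1 : (ℕ → ℕ → Bool) → ℝ) ω)) ν := i2.sub (i1.const_mul _)
    rw [integral_add i3 ((intI A mA).const_mul _),
      integral_sub i2 (i1.const_mul _), integral_const_mul, integral_const_mul,
      integral_finsetSum _ fun i _ => integrable_finsetSum _ fun j _ =>
        intI _ ((mA.inter (mE i)).inter (mE j)),
      integral_finsetSum _ fun i _ => intI _ (mA.inter (mE i)), valI A mA]
    have e1 : ∑ i ∈ Finset.Ico 1 n, ∫ ω, (A ∩ E i).indicator (1 : (ℕ → ℕ → Bool) → ℝ) ω ∂ν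
        = N * (PW p v t * w0) := by
      rw [← hcardI, ← nsmul_eq_mul]
      refine Finset.sum_eq_card_nsmul fun i hi => ?_
      rw [valI _ (mA.inter (mE i))]
      have : i ≠ 0 := by have := Finset.mem_Ico.1 hi; omega
      exact cyl2 hp hp1 hν v t i this u s
    have e2 : ∑ i ∈ Finset.Ico 1 n, ∫ ω, (∑ j ∈ Finset.Ico 1 n,
        (A ∩ E i ∩ E j).indicator (1 : (ℕ → ℕ → Bool) → ℝ) ω) ∂ν
        = N * (PW p v t * w0 + (N - 1) * (PW p v t * (w0 * w0))) := by
      rw [← hcardI, ← nsmul_eq_mul]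
      refine Finset.sum_eq_card_nsmul fun i hi => ?_
      rw [integral_finsetSum _ fun j _ => intI _ ((mA.inter (mE i)).inter (mE j))]
      have hi0 : i ≠ 0 := by have := Finset.mem_Ico.1 hi; omega
      rw [← Finset.add_sum_erase _ _ hi, valI _ ((mA.inter (mE i)).inter (mE i)),
        Set.inter_assoc, Set.inter_self]
      congr 1
      · exact cyl2 hp hp1 hν v t i hi0 u s
      · have hce : (((Finset.Ico 1 n).erase i).card : ℝ) = ((Finset.Ico 1 n).card : ℝ) - 1 := by
          rw [Finset.card_erase_of_mem hi, Nat.cast_sub, Nat.cast_one]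
          exact Finset.card_pos.2 ⟨i, hi⟩
        rw [← hce, ← nsmul_eq_mul]
        refine Finset.sum_eq_card_nsmul fun j hj => ?_
        rw [valI _ ((mA.inter (mE i)).inter (mE j))]
        have hj' := Finset.mem_erase.1 hj
        have hj0 : j ≠ 0 := by have := Finset.mem_Ico.1 hj'.2; omega
        exact cyl3 hp hp1 hν v t i hi0 j hj0 hj'.1.symm u s
    have e3 : ν.real A = PW p v t := cyl1 hp hp1 hν v t
    rw [e1, e2, e3, hc]
    ring
  have hgeq : ∀ ω, g ω = A.indicator 1 ω * ((Mc ω n u s : ℝ) - c) ^ 2 := by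
    intro ω
    have hM : (Mc ω n u s : ℝ) = ∑ i ∈ Finset.Ico 1 n, (E i).indicator (1 : (ℕ → ℕ → Bool) → ℝ) ω := by
      simp only [Mc, Set.indicator_apply, hE, Set.mem_ofPred_eq, Pi.one_apply]
      rw [Finset.sum_boole]
    have : g ω = A.indicator 1 ω * ((∑ i ∈ Finset.Ico 1 n, ∑ j ∈ Finset.Ico 1 n,
        (E i).indicator (1 : (ℕ → ℕ → Bool) → ℝ) ω * (E j).indicator (1 : (ℕ → ℕ → Bool) → ℝ) ω)
        - 2 * c * (∑ i ∈ Finset.Ico 1 n, (E i).indicator 1 ω) + c ^ 2) := by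
      simp only [hg, Set.inter_indicator_one, Pi.mul_apply]
      simp only [mul_assoc, ← Finset.mul_sum]
      ring
    rw [this, ← Finset.sum_mul_sum, hM]
    ring
  have hc2 : (2:ℝ) ≤ c := hn
  have hmark : (c - 1) ^ 2 * ν.real (A ∩ {ω | Mc ω n u s ≤ 1}) ≤ ∫ ω, g ω ∂ν := by
    have h1 : ν.real (A ∩ {ω | Mc ω n u s ≤ 1}) ≤ ν.real {ω | (c - 1) ^ 2 ≤ g ω} := by
      refine measureReal_mono ?_
      rintro ω ⟨hω, hω2⟩
      simp only [Set.mem_ofPred_eq] at hω2 ⊢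
      rw [hgeq, Set.indicator_of_mem hω]
      have : (Mc ω n u s : ℝ) ≤ 1 := by exact_mod_cast hω2
      simp only [Pi.one_apply, one_mul]
      nlinarith
    have h2 := mul_meas_ge_le_integral_of_nonneg (μ := ν) (f := g)
      (Filter.Eventually.of_forall fun ω => by
        rw [hgeq]
        exact mul_nonneg (Set.indicator_nonneg (fun _ _ => by simp) _) (sq_nonneg _)) hgint ((c-1)^2)
    calc _ ≤ (c - 1) ^ 2 * ν.real {ω | (c - 1) ^ 2 ≤ g ω} := by gcongr
      _ ≤ _ := h2
  rw [hgval] at hmark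
  have hP := PW_pos hp hp1 v t
  have hw0 : 0 < w0 := PW_pos hp hp1 u s
  have hx : 0 ≤ ν.real (A ∩ {ω | Mc ω n u s ≤ 1}) := measureReal_nonneg
  have h3 : c ^ 2 / 4 * ν.real (A ∩ {ω | Mc ω n u s ≤ 1}) ≤ PW p v t * c := by
    have q1 : c ^ 2 / 4 ≤ (c - 1) ^ 2 := by nlinarith
    have q2 : PW p v t * (c - c * w0) ≤ PW p v t * c := by
      have : 0 ≤ c * w0 := by positivity
      gcongr; linarith
    nlinarith
  have hc0 : 0 < c := by linarith
  rw [← mul_div_assoc, le_div_iff₀ hc0]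
  have : c * (ν.real (A ∩ {ω | Mc ω n u s ≤ 1}) * c) ≤ c * (PW p v t * 4) := by nlinarith
  exact le_of_mul_le_mul_left this hc0

end LC

namespace LC

variable {p : ℝ} {ν : Measure (ℕ → ℕ → Bool)}

/-- strings agreeing with string `0` on the first `t` bits -/
def fam (ω : ℕ → ℕ → Bool) (n t : ℕ) : Finset ℕ :=
  (Finset.range n).filter fun i => ∀ j < t, ω i j = ω 0 j

open Classical in
lemma markov {Ω ι : Type*} [MeasurableSpace Ω] (ν : Measure Ω) [IsProbabilityMeasure ν]
    (G : Finset ι) (B : ι → Set Ω) (E : Set Ω) (K : ℝ) (hK : 0 ≤ K)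
    (hE : ∀ ω ∈ E, K ≤ ((G.filter fun r => ω ∈ B r).card : ℝ)) :
    K * ν.real E ≤ ∑ r ∈ G, ν.real (B r) := by
  set f : Ω → ℝ := fun ω => ∑ r ∈ G, (toMeasurable ν (B r)).indicator 1 ω with hf
  have mB : ∀ r, MeasurableSet (toMeasurable ν (B r)) := fun r => measurableSet_toMeasurable _ _
  have hi : ∀ r, Integrable ((toMeasurable ν (B r)).indicator (1 : Ω → ℝ)) ν := fun r =>
    (integrable_const (1:ℝ)).indicator (mB r)
  have hintg : Integrable f ν := integrable_finsetSum _ fun r _ => hi r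
  have hval : ∫ ω, f ω ∂ν = ∑ r ∈ G, ν.real (B r) := by
    simp only [hf]
    rw [integral_finsetSum _ fun r _ => hi r]
    refine Finset.sum_congr rfl fun r _ => ?_
    rw [integral_indicator_one (mB r), measureReal_def, measure_toMeasurable, measureReal_def]
  rw [← hval]
  refine le_trans ?_ (mul_meas_ge_le_integral_of_nonneg (μ := ν) (f := f)
    (Filter.Eventually.of_forall fun ω => Finset.sum_nonneg fun r _ =>
      Set.indicator_nonneg (fun _ _ => by simp) _) hintg K)
  refine mul_le_mul_of_nonneg_left (measureReal_mono ?_) hK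
  intro ω hω
  refine (hE ω hω).trans ?_
  simp only [hf]
  rw [Finset.card_filter]
  push_cast
  refine Finset.sum_le_sum fun r _ => ?_
  split_ifs with h
  · rw [Set.indicator_of_mem (subset_toMeasurable _ _ h)]; simp
  · exact Set.indicator_nonneg (fun _ _ => by simp) _

lemma mem_filled {ω : ℕ → ℕ → Bool} {n t k : ℕ} {v : ℕ → Bool} (hv : pre ω 0 v t)
    (r : Fin k → Bool) (i : ℕ) :
    i ∈ (fam ω n t).filter (fun i => ∀ j : Fin k, ω i (t + j) = r j) ↔
      i < n ∧ pre ω i (cat t v (ext r)) (t + k) := by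
  simp only [fam, Finset.mem_filter, Finset.mem_range, and_assoc, pre]
  refine and_congr_right fun _ => ?_
  constructor
  · rintro ⟨h1, h2⟩ j hj
    unfold cat
    split_ifs with hjt
    · rw [h1 j hjt, hv j hjt]
    · have hjk : j - t < k := by omega
      have := h2 ⟨j - t, hjk⟩
      simp only at this
      rw [show t + (j - t) = j by omega] at this
      simp [ext, hjk, this]
  · intro h
    refine ⟨fun j hj => ?_, fun j => ?_⟩
    · rw [h j (by omega), hv j hj]; simp [cat, hj]
    · rw [h (t + j) (by omega)]
      simp [cat, ext]

lemma fill_low (hp : 0 < p) (hp1 : p < 1) (hν : IIDBits p ν) (v : ℕ → Bool) (n t k : ℕ)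
    (α β Λ : ℝ) (hβ : 0 < β) (hα : α = 1 - 2 * β) (hΛ : 4 ≤ Λ)
    (hG : ((Finset.univ.filter fun r : Fin k → Bool =>
      ¬ Λ ≤ n * (PW p v t * PW p (ext r) k)).card : ℝ) ≤ β * 2 ^ k) :
    ν.real ({ω | pre ω 0 v t} ∩ {ω | ¬ α ≤ (fillCountFam ω (fam ω n t) t k : ℝ) / 2 ^ k})
      ≤ PW p v t * (8 / β / Λ) := by
  classical
  have := hν.1
  set G : Finset (Fin k → Bool) := Finset.univ.filter fun r : Fin k → Bool =>
      Λ ≤ n * (PW p v t * PW p (ext r) k) with hGdef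
  set B : (Fin k → Bool) → Set (ℕ → ℕ → Bool) := fun r =>
    {ω | pre ω 0 v t} ∩ {ω | Mc ω n (cat t v (ext r)) (t + k) ≤ 1} with hB
  have h2k : (0:ℝ) < 2 ^ k := by positivity
  have hm := markov ν G B
    ({ω | pre ω 0 v t} ∩ {ω | ¬ α ≤ (fillCountFam ω (fam ω n t) t k : ℝ) / 2 ^ k})
    (β * 2 ^ k) (by positivity) ?_
  · have hb : ∀ r ∈ G, ν.real (B r) ≤ PW p v t * (8 / Λ) := by
      intro r hr
      have hr' : Λ ≤ n * (PW p v t * PW p (ext r) k) := (Finset.mem_filter.1 hr).2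
      rw [← PW_cat] at hr'
      have hq0 := PW_pos hp hp1 (cat t v (ext r)) (t + k)
      have hq1 := PW_le hp hp1 (cat t v (ext r)) (t + k)
      have hn4 : (4:ℝ) ≤ n := by nlinarith
      have hn4' : 4 ≤ n := by exact_mod_cast hn4
      have hcast : ((n - 1 : ℕ) : ℝ) = n - 1 := by
        rw [Nat.cast_sub (by omega), Nat.cast_one]
      have hN : Λ / 2 ≤ ((n - 1 : ℕ) : ℝ) * PW p (cat t v (ext r)) (t + k) := by
        rw [hcast]; nlinarith
      refine (Mc_low hp hp1 hν v t n _ _ (by linarith)).trans ?_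
      refine mul_le_mul_of_nonneg_left ?_ (PW_pos hp hp1 v t).le
      calc _ ≤ 4 / (Λ / 2) := by gcongr
        _ = 8 / Λ := by field_simp; norm_num
    have hsum : ∑ r ∈ G, ν.real (B r) ≤ 2 ^ k * (PW p v t * (8 / Λ)) := by
      calc _ ≤ G.card • (PW p v t * (8 / Λ)) := Finset.sum_le_card_nsmul _ _ _ hb
        _ = (G.card : ℝ) * (PW p v t * (8 / Λ)) := nsmul_eq_mul _ _
        _ ≤ _ := by
          have : (G.card : ℝ) ≤ 2 ^ k := by
            have := Finset.card_le_univ G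
            simp only [Fintype.card_fun, Fintype.card_fin, Fintype.card_bool] at this
            exact_mod_cast this
          have := PW_pos hp hp1 v t
          gcongr
    have h3 : (2:ℝ) ^ k * (β * ν.real ({ω | pre ω 0 v t} ∩
        {ω | ¬ α ≤ (fillCountFam ω (fam ω n t) t k : ℝ) / 2 ^ k}))
        ≤ 2 ^ k * (PW p v t * (8 / Λ)) := by
      calc _ = β * 2 ^ k * ν.real ({ω | pre ω 0 v t} ∩
        {ω | ¬ α ≤ (fillCountFam ω (fam ω n t) t k : ℝ) / 2 ^ k}) := by ring
        _ ≤ _ := hm.trans hsum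
    have h4 := le_of_mul_le_mul_left h3 h2k
    rw [show PW p v t * (8 / β / Λ) = PW p v t * (8 / Λ) / β by ring, le_div_iff₀ hβ]
    linarith
  · rintro ω ⟨hv, hω⟩
    simp only [Set.mem_ofPred_eq, not_le] at hv hω
    rw [div_lt_iff₀ h2k] at hω
    -- unfilled words
    have hsplit : Fintype.card (Fin k → Bool) ≤ fillCountFam ω (fam ω n t) t k +
        ((Finset.univ.filter fun r : Fin k → Bool =>
          ¬ Λ ≤ n * (PW p v t * PW p (ext r) k)).card + (G.filter fun r => ω ∈ B r).card) := by
      rw [← Finset.card_univ]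
      unfold fillCountFam
      refine le_trans ?_ (add_le_add_right (Finset.card_union_le _ _) _)
      refine le_trans ?_ (Finset.card_union_le _ _)
      refine Finset.card_le_card ?_
      intro r _
      simp only [Finset.mem_union, Finset.mem_filter, Finset.mem_univ, true_and, hGdef, hB]
      by_contra hcon
      push Not at hcon
      obtain ⟨h1, h2, h3⟩ := hcon
      apply h3 h2
      refine ⟨hv, ?_⟩
      have : Mc ω n (cat t v (ext r)) (t + k) ≤
        ((fam ω n t).filter (fun i => ∀ j : Fin k, ω i (t + j) = r j)).card := by
        refine Finset.card_le_card ?_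
        intro i hi
        rw [mem_filled hv]
        have := Finset.mem_filter.1 hi
        exact ⟨(Finset.mem_Ico.1 this.1).2, this.2⟩
      show Mc ω n (cat t v (ext r)) (t + k) ≤ 1
      omega
    simp only [Fintype.card_fun, Fintype.card_fin, Fintype.card_bool] at hsplit
    have hsplit' : (2:ℝ) ^ k ≤ fillCountFam ω (fam ω n t) t k +
        ((Finset.univ.filter fun r : Fin k → Bool =>
          ¬ Λ ≤ n * (PW p v t * PW p (ext r) k)).card + (G.filter fun r => ω ∈ B r).card) := by
      exact_mod_cast hsplit
    subst hα
    have hr : (1 - 2 * β) * (2:ℝ) ^ k = 2 ^ k - 2 * (β * 2 ^ k) := by ring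
    rw [hr] at hω
    refine le_of_le_of_eq (b := ((G.filter fun r => ω ∈ B r).card : ℝ)) (by linarith) (by congr)

lemma fill_up (hp : 0 < p) (hp1 : p < 1) (hν : IIDBits p ν) (v : ℕ → Bool) (n t k : ℕ)
    (α Λ : ℝ) (hα : 0 < α) (hΛ : 0 ≤ Λ)
    (hG : ((Finset.univ.filter fun r : Fin k → Bool =>
      ¬ n * (PW p v t * PW p (ext r) k) ≤ Λ).card : ℝ) ≤ α / 2 * 2 ^ k) :
    ν.real ({ω | pre ω 0 v t} ∩ {ω | α ≤ (fillCountFam ω (fam ω n t) t k : ℝ) / 2 ^ k})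
      ≤ PW p v t * (2 / α * Λ) := by
  classical
  have := hν.1
  set G : Finset (Fin k → Bool) := Finset.univ.filter fun r : Fin k → Bool =>
      n * (PW p v t * PW p (ext r) k) ≤ Λ with hGdef
  set B : (Fin k → Bool) → Set (ℕ → ℕ → Bool) := fun r =>
    ⋃ i ∈ Finset.Ico 1 n, {ω | pre ω 0 v t} ∩ {ω | pre ω i (cat t v (ext r)) (t + k)} with hB
  have h2k : (0:ℝ) < 2 ^ k := by positivity
  have hm := markov ν G B
    ({ω | pre ω 0 v t} ∩ {ω | α ≤ (fillCountFam ω (fam ω n t) t k : ℝ) / 2 ^ k})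
    (α / 2 * 2 ^ k) (by positivity) ?_
  · have hb : ∀ r ∈ G, ν.real (B r) ≤ PW p v t * Λ := by
      intro r hr
      have hr' : n * (PW p v t * PW p (ext r) k) ≤ Λ := (Finset.mem_filter.1 hr).2
      rw [← PW_cat] at hr'
      refine (measureReal_biUnion_finset_le _ _).trans ?_
      have : ∑ i ∈ Finset.Ico 1 n, ν.real ({ω | pre ω 0 v t} ∩
          {ω | pre ω i (cat t v (ext r)) (t + k)}) =
          (Finset.Ico 1 n).card • (PW p v t * PW p (cat t v (ext r)) (t + k)) := by
        refine Finset.sum_eq_card_nsmul fun i hi => ?_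
        have : i ≠ 0 := by have := Finset.mem_Ico.1 hi; omega
        exact cyl2 hp hp1 hν v t i this _ _
      rw [this, nsmul_eq_mul, Nat.card_Ico]
      have h1 : ((n - 1 : ℕ) : ℝ) ≤ n := by exact_mod_cast Nat.sub_le _ _
      have hq0 := PW_pos hp hp1 (cat t v (ext r)) (t + k)
      have hq1 := PW_pos hp hp1 v t
      calc _ ≤ (n:ℝ) * (PW p v t * PW p (cat t v (ext r)) (t + k)) := by gcongr
        _ = PW p v t * (n * PW p (cat t v (ext r)) (t + k)) := by ring
        _ ≤ _ := by gcongr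
    have hsum : ∑ r ∈ G, ν.real (B r) ≤ 2 ^ k * (PW p v t * Λ) := by
      calc _ ≤ G.card • (PW p v t * Λ) := Finset.sum_le_card_nsmul _ _ _ hb
        _ = (G.card : ℝ) * (PW p v t * Λ) := nsmul_eq_mul _ _
        _ ≤ _ := by
          have : (G.card : ℝ) ≤ 2 ^ k := by
            have := Finset.card_le_univ G
            simp only [Fintype.card_fun, Fintype.card_fin, Fintype.card_bool] at this
            exact_mod_cast this
          have := PW_pos hp hp1 v t
          gcongr
    have h3 : (2:ℝ) ^ k * (α / 2 * ν.real ({ω | pre ω 0 v t} ∩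
        {ω | α ≤ (fillCountFam ω (fam ω n t) t k : ℝ) / 2 ^ k}))
        ≤ 2 ^ k * (PW p v t * Λ) := by
      calc _ = α / 2 * 2 ^ k * ν.real ({ω | pre ω 0 v t} ∩
        {ω | α ≤ (fillCountFam ω (fam ω n t) t k : ℝ) / 2 ^ k}) := by ring
        _ ≤ _ := hm.trans hsum
    have h4 := le_of_mul_le_mul_left h3 h2k
    rw [show PW p v t * (2 / α * Λ) = (PW p v t * Λ) / (α / 2) by field_simp,
      le_div_iff₀ (by positivity)]
    linarith
  · rintro ω ⟨hv, hω⟩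
    simp only [Set.mem_ofPred_eq] at hv hω
    rw [le_div_iff₀ h2k] at hω
    have hsplit : fillCountFam ω (fam ω n t) t k ≤
        ((Finset.univ.filter fun r : Fin k → Bool =>
          ¬ n * (PW p v t * PW p (ext r) k) ≤ Λ).card + (G.filter fun r => ω ∈ B r).card) := by
      unfold fillCountFam
      refine le_trans ?_ (Finset.card_union_le _ _)
      refine Finset.card_le_card ?_
      intro r hr
      have hr2 := (Finset.mem_filter.1 hr).2
      simp only [Finset.mem_union, Finset.mem_filter, Finset.mem_univ, true_and, hGdef]
      by_cases hrG : n * (PW p v t * PW p (ext r) k) ≤ Λ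
      · right
        refine ⟨hrG, ?_⟩
        obtain ⟨a, b, ha, hb, hab⟩ := Finset.one_lt_card_iff.1 (show 1 < _ from hr2)
        rw [mem_filled hv] at ha hb
        simp only [hB, Set.mem_iUnion, Finset.mem_Ico]
        rcases Nat.eq_zero_or_pos a with h | h
        · exact ⟨b, ⟨by omega, hb.1⟩, hv, hb.2⟩
        · exact ⟨a, ⟨by omega, ha.1⟩, hv, ha.2⟩
      · left; exact hrG
    have hsplit' : (fillCountFam ω (fam ω n t) t k : ℝ) ≤
        ((Finset.univ.filter fun r : Fin k → Bool =>
          ¬ n * (PW p v t * PW p (ext r) k) ≤ Λ).card + (G.filter fun r => ω ∈ B r).card) := by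
      exact_mod_cast hsplit
    linarith

/-- union bound over prefixes of string 0 -/
lemma union_bound (hp : 0 < p) (hp1 : p < 1) (hν : IIDBits p ν) (f Φ : ℝ → ℝ) (h0 : ∀ y, 0 ≤ Φ y)
    (h : ∀ y b, f y + Φ (y - zt p b) ≤ Φ y) (T : ℕ) (y : ℝ) (B : ℕ → Set (ℕ → ℕ → Bool))
    (hB : ∀ t (v : ℕ → Bool), ν.real ({ω | pre ω 0 v t} ∩ B t) ≤ PW p v t * f (y - Zs p v t)) :
    ν.real (⋃ t ∈ Finset.range T, B t) ≤ Φ y := by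
  have := hν.1
  refine (measureReal_biUnion_finset_le _ _).trans ((Finset.sum_le_sum fun t _ => ?_).trans
    (potential hp hp1 f Φ h0 h T y))
  calc ν.real (B t) ≤ ν.real (⋃ v ∈ (Finset.univ : Finset (Fin t → Bool)),
        ({ω | pre ω 0 (ext v) t} ∩ B t)) := by
        refine measureReal_mono ?_ (measure_ne_top _ _)
        intro ω hω
        simp only [Set.mem_iUnion]
        refine ⟨fun j => ω 0 j, Finset.mem_univ _, ?_, hω⟩
        intro j hj
        simp [ext, hj]
    _ ≤ _ := (measureReal_biUnion_finset_le _ _).trans (Finset.sum_le_sum fun v _ => hB t _)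

end LC

namespace LC

variable {p : ℝ} {ν : Measure (ℕ → ℕ → Bool)}

lemma chern_count (y : Bool → ℝ) (hm : y true + y false < 0) :
    ∃ θ > (0:ℝ), ∀ k : ℕ, ((Finset.univ.filter fun r : Fin k → Bool =>
      0 ≤ ∑ i, y (r i)).card : ℝ) ≤ (2:ℝ) ^ (-(θ * k)) * 2 ^ k := by
  obtain ⟨θ, hθ, H⟩ := chernoff (fun _ => 1 / 2) y (fun _ => by norm_num) (by norm_num)
    (by linarith)
  refine ⟨θ, hθ, fun k => ?_⟩
  have := H k
  simp only [Finset.prod_const, Finset.card_univ, Fintype.card_fin] at this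
  rw [← Finset.sum_filter, Finset.sum_const, nsmul_eq_mul, one_div, inv_pow,
    ← div_eq_mul_inv, div_le_iff₀ (by positivity)] at this
  exact this

lemma walk_bound (hp : 0 < p) (hp1 : p < 1) (hν : IIDBits p ν) (y : Bool → ℝ)
    (hm : p * y true + (1 - p) * y false < 0) :
    ∃ θ > (0:ℝ), ∀ (v : ℕ → Bool) (t k : ℕ), ν.real ({ω | pre ω 0 v t} ∩
      {ω | 0 ≤ ∑ j ∈ Finset.range k, y (ω 0 (t + j))}) ≤ PW p v t * (2:ℝ) ^ (-(θ * k)) := by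
  have := hν.1
  obtain ⟨θ, hθ, H⟩ := chernoff (wt p) y (fun b => (wt_pos hp hp1 b).le) (by simp [wt])
    (by simpa [wt] using hm)
  refine ⟨θ, hθ, fun v t k => ?_⟩
  calc _ ≤ ν.real (⋃ r ∈ (Finset.univ.filter fun r : Fin k → Bool => 0 ≤ ∑ i, y (r i)),
        {ω | pre ω 0 (cat t v (ext r)) (t + k)}) := by
        refine measureReal_mono ?_ (measure_ne_top _ _)
        rintro ω ⟨hv, hω⟩
        simp only [Set.mem_ofPred_eq] at hv hω
        simp only [Set.mem_iUnion]
        refine ⟨fun j => ω 0 (t + j), ?_, ?_⟩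
        · simp only [Finset.mem_filter, Finset.mem_univ, true_and]
          rwa [Finset.sum_range] at hω
        · intro j hj
          unfold cat
          split_ifs with hjt
          · exact hv j hjt
          · have : j - t < k := by omega
            simp [ext, this, show t + (j - t) = j by omega]
    _ ≤ _ := measureReal_biUnion_finset_le _ _
    _ = PW p v t * ∑ r : Fin k → Bool, (if 0 ≤ ∑ i, y (r i) then ∏ i, wt p (r i) else 0) := by
        rw [Finset.sum_filter, Finset.mul_sum]
        refine Finset.sum_congr rfl fun r _ => ?_
        rw [cyl1 hp hp1 hν, PW_cat, PW_ext]
        split_ifs <;> simp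
    _ ≤ _ := mul_le_mul_of_nonneg_left (H k) (PW_pos hp hp1 v t).le

lemma frac_anti (ω : ℕ → ℕ → Bool) (S : Finset ℕ) (t k : ℕ) :
    (fillCountFam ω S t (k + 1) : ℝ) / 2 ^ (k + 1) ≤ (fillCountFam ω S t k : ℝ) / 2 ^ k := by
  have h : fillCountFam ω S t (k + 1) ≤ 2 * fillCountFam ω S t k := by
    unfold fillCountFam
    rw [mul_comm, ← Fintype.card_bool, ← Finset.card_univ, ← Finset.card_product]
    refine Finset.card_le_card_of_injOn (fun r => (fun i : Fin k => r i.castSucc, r (Fin.last k))) ?_ ?_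
    · intro r hr
      simp only [Finset.coe_filter, Finset.mem_univ, true_and, Set.mem_ofPred_eq] at hr
      simp only [Finset.coe_product, Finset.coe_univ, Set.mem_prod, Finset.coe_filter,
        Finset.mem_univ, true_and, Set.mem_ofPred_eq, Set.mem_univ, and_true]
      refine hr.trans (Finset.card_le_card ?_)
      intro i hi
      rw [Finset.mem_filter] at hi ⊢
      exact ⟨hi.1, fun j => hi.2 j.castSucc⟩
    · intro r _ s _ h
      simp only [Prod.mk.injEq] at h
      exact funext fun i => Fin.lastCases h.2 (fun j => congrFun h.1 j) i
  rw [div_le_div_iff₀ (by positivity) (by positivity), pow_succ]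
  have h' : (fillCountFam ω S t (k + 1) : ℝ) ≤ 2 * fillCountFam ω S t k := by exact_mod_cast h
  have : (0:ℝ) < 2 ^ k := by positivity
  nlinarith

lemma step_det {α : ℝ} (hα : 0 < α) (ω : ℕ → ℕ → Bool) (S : Finset ℕ) (t k₁ k₂ : ℕ)
    (h1 : α ≤ (fillCountFam ω S t k₁ : ℝ) / 2 ^ k₁)
    (h2 : ¬ α ≤ (fillCountFam ω S t k₂ : ℝ) / 2 ^ k₂) :
    2 ≤ S.card ∧ k₁ ≤ fillupLevelFam α ω S t ∧ fillupLevelFam α ω S t + 1 ≤ k₂ := by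
  have hanti : Antitone fun k => (fillCountFam ω S t k : ℝ) / 2 ^ k :=
    antitone_nat_of_succ_le fun k => frac_anti ω S t k
  have hub : ∀ k ∈ {k | α ≤ (fillCountFam ω S t k : ℝ) / 2 ^ k}, k < k₂ := by
    intro k hk
    by_contra hcon
    push Not at hcon
    exact h2 (le_trans hk (hanti hcon))
  have hbdd : BddAbove {k | α ≤ (fillCountFam ω S t k : ℝ) / 2 ^ k} :=
    ⟨k₂, fun k hk => (hub k hk).le⟩
  refine ⟨?_, le_csSup hbdd h1, hub _ (Nat.sSup_mem ⟨k₁, h1⟩ hbdd)⟩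
  have hpos : 0 < fillCountFam ω S t k₁ := by
    rw [Nat.pos_iff_ne_zero]
    intro h0
    rw [h0] at h1
    simp at h1
    linarith
  obtain ⟨r, hr⟩ := Finset.card_pos.1 hpos
  exact (Finset.mem_filter.1 hr).2.trans (Finset.card_filter_le _ _)

/-- a good step at offset `t` -/
def Step (p α κ₁ κ₂ : ℝ) (n t : ℕ) (ω : ℕ → ℕ → Bool) : Prop :=
  2 ≤ (fam ω n t).card ∧
  κ₁ * (Real.logb 2 n - Zs p (ω 0) t) ≤
    Real.logb 2 n - Zs p (ω 0) (t + fillupLevelFam α ω (fam ω n t) t + 1) ∧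
  Real.logb 2 n - Zs p (ω 0) (t + fillupLevelFam α ω (fam ω n t) t + 1) ≤
    κ₂ * (Real.logb 2 n - Zs p (ω 0) t)

lemma exists_eta {L h κ₁ κ₂ : ℝ} (hL : 0 < L) (hh : 0 < h) (h1 : κ₁ < 1 - h / L)
    (h2 : 1 - h / L < κ₂) : ∃ η > (0:ℝ), η < L ∧ η < h ∧ η < 1 ∧
      1 - (h - η) * ((1 - η) / (L + η)) < κ₂ ∧ κ₁ < 1 - (h + η) * ((1 + η) / (L - η)) := by
  have c1 : ContinuousAt (fun η : ℝ => 1 - (h - η) * ((1 - η) / (L + η))) 0 := by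
    have : L + 0 ≠ 0 := by simpa using hL.ne'
    fun_prop (disch := assumption)
  have c2 : ContinuousAt (fun η : ℝ => 1 - (h + η) * ((1 + η) / (L - η))) 0 := by
    have : L - 0 ≠ 0 := by simpa using hL.ne'
    fun_prop (disch := assumption)
  have e1 : ∀ᶠ η in nhds (0:ℝ), 1 - (h - η) * ((1 - η) / (L + η)) < κ₂ := by
    refine c1.eventually_lt_const ?_
    simp only [sub_zero, add_zero]
    rwa [mul_one_div]
  have e2 : ∀ᶠ η in nhds (0:ℝ), κ₁ < 1 - (h + η) * ((1 + η) / (L - η)) := by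
    refine c2.eventually_const_lt ?_
    simp only [sub_zero, add_zero]
    rwa [mul_one_div]
  have e3 : ∀ᶠ η in nhds (0:ℝ), η < L := eventually_lt_nhds hL
  have e4 : ∀ᶠ η in nhds (0:ℝ), η < h := eventually_lt_nhds hh
  have e5 : ∀ᶠ η in nhds (0:ℝ), η < 1 := eventually_lt_nhds one_pos
  have e6 : ∀ᶠ η in nhdsWithin (0:ℝ) (Set.Ioi 0), 0 < η := self_mem_nhdsWithin
  obtain ⟨η, h1, h2, h3, h4, h5, h6⟩ := ((((((e1.and e2).and e3).and e4).and e5).filter_mono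
    nhdsWithin_le_nhds).and e6).exists.imp fun η h => by
      obtain ⟨⟨⟨⟨⟨a, b⟩, c⟩, d⟩, e⟩, f⟩ := h
      exact (⟨a, b, c, d, e, f⟩ : _ ∧ _ ∧ _ ∧ _ ∧ _ ∧ _)
  exact ⟨η, h6, h3, h4, h5, h1, h2⟩

set_option maxHeartbeats 2000000 in
lemma step_prob (hp : 0 < p) (hp1 : p < 1) (hν : IIDBits p ν) {α κ₁ κ₂ L h : ℝ}
    (hα : 0 < α) (hα1 : α < 1) (hL : L = (zt p true + zt p false) / 2)
    (hh : h = p * zt p true + (1 - p) * zt p false)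
    (h1 : κ₁ < 1 - h / L) (h2 : 1 - h / L < κ₂) :
    ∃ W₀ > (0:ℝ), ∃ C > (0:ℝ), ∃ γ > (0:ℝ), ∀ (n : ℕ) (_ : 1 ≤ n) (t : ℕ) (v : ℕ → Bool),
      W₀ ≤ Real.logb 2 n - Zs p v t →
      ν.real ({ω | pre ω 0 v t} ∩ {ω | ¬ Step p α κ₁ κ₂ n t ω}) ≤
        PW p v t * (C * (2:ℝ) ^ (-(γ * (Real.logb 2 n - Zs p v t)))) := by
  have := hν.1
  have hz1 := zt_pos hp hp1 true
  have hz2 := zt_pos hp hp1 false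
  have hL0 : 0 < L := by rw [hL]; linarith
  have hh0 : 0 < h := by
    rw [hh]
    have : 0 < 1 - p := by linarith
    positivity
  obtain ⟨η, hη, hηL, hηh, hη1, hk2, hk1⟩ := exists_eta hL0 hh0 h1 h2
  set c₁ : ℝ := (1 - η) / (L + η) with hc₁
  set c₂ : ℝ := (1 + η) / (L - η) with hc₂
  have hc₁0 : 0 < c₁ := div_pos (by linarith) (by linarith)
  have hc₂0 : 0 < c₂ := div_pos (by linarith) (by linarith)
  have hc₁e : (L + η) * c₁ = 1 - η := by rw [hc₁]; field_simp
  have hc₂e : (L - η) * c₂ = 1 + η := by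
    have : L - η ≠ 0 := by linarith
    rw [hc₂]; field_simp
  set β : ℝ := (1 - α) / 2 with hβ
  have hβ0 : 0 < β := by rw [hβ]; linarith
  obtain ⟨θ₁, hθ₁, H1⟩ := chern_count (fun b => zt p b - (L + η)) (by rw [hL]; linarith)
  obtain ⟨θ₂, hθ₂, H2⟩ := chern_count (fun b => (L - η) - zt p b) (by rw [hL]; linarith)
  obtain ⟨θ₃, hθ₃, H3⟩ := walk_bound hp hp1 hν (fun b => (h - η) - zt p b) (by rw [hh]; linarith)
  obtain ⟨θ₄, hθ₄, H4⟩ := walk_bound hp hp1 hν (fun b => zt p b - (h + η)) (by rw [hh]; linarith)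
  have hdec : ∀ a > (0:ℝ), ∀ b : ℝ, ∀ e > (0:ℝ),
      ∀ᶠ x : ℝ in atTop, (2:ℝ) ^ (-(a * x - b)) ≤ e := by
    intro a ha b e he
    have ht : Tendsto (fun x : ℝ => -(a * x - b)) atTop atBot :=
      tendsto_neg_atTop_atBot.comp (tendsto_atTop_add_const_right _ (-b) (tendsto_id.const_mul_atTop ha))
    have := (tendsto_rpow_atBot_of_base_gt_one 2 (by norm_num)).comp ht
    exact (this.eventually_lt_const he).mono fun x hx => hx.le
  have hlin : ∀ a > (0:ℝ), ∀ b : ℝ, ∀ᶠ x : ℝ in atTop, b ≤ a * x := fun a ha b =>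
    (tendsto_id.const_mul_atTop ha).eventually_ge_atTop b
  obtain ⟨W₀, hW⟩ := Filter.eventually_atTop.1 ((((((hdec (θ₁ * c₁) (by positivity) θ₁ β hβ0).and
    (hdec (θ₂ * c₂) (by positivity) 0 (α / 2) (by positivity))).and (hlin η hη 2)).and
    (hlin (κ₂ - (1 - (h - η) * c₁)) (by linarith) (h - η))).and
    (hlin ((1 - (h + η) * c₂) - κ₁) (by linarith) (h + η))).and (eventually_gt_atTop 0))
  refine ⟨W₀, (hW W₀ le_rfl).2, 8 / β + 2 / α + (2:ℝ) ^ θ₃ + 1, by positivity,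
    min η (min (θ₃ * c₁) (θ₄ * c₂)), by positivity, ?_⟩
  intro n hn t v hx
  set x : ℝ := Real.logb 2 n - Zs p v t with hxdef
  obtain ⟨⟨⟨⟨⟨w1, w2⟩, w3⟩, w4⟩, w5⟩, w6⟩ := hW x hx
  set k₁ : ℕ := ⌊c₁ * x⌋₊ with hk₁
  set k₂ : ℕ := ⌈c₂ * x⌉₊ with hk₂
  have k1a : (k₁:ℝ) ≤ c₁ * x := Nat.floor_le (by positivity)
  have k1b : c₁ * x - 1 ≤ k₁ := (Nat.sub_one_lt_floor _).le
  have k2a : c₂ * x ≤ k₂ := Nat.le_ceil _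
  have k2b : (k₂:ℝ) ≤ c₂ * x + 1 := (Nat.ceil_lt_add_one (by positivity)).le
  have h22 : (1:ℝ) < 2 := by norm_num
  have e1 : (k₁:ℝ) * (L + η) ≤ (1 - η) * x := by
    rw [← hc₁e, mul_assoc, mul_comm]
    exact mul_le_mul_of_nonneg_left k1a (by linarith)
  have e2 : (1 + η) * x ≤ (k₂:ℝ) * (L - η) := by
    rw [← hc₂e, mul_assoc, mul_comm (k₂:ℝ)]
    exact mul_le_mul_of_nonneg_left k2a (by linarith)
  have f1 := mul_le_mul_of_nonneg_left k1b hθ₁.le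
  have f2 := mul_le_mul_of_nonneg_left k2a hθ₂.le
  have f3 := mul_le_mul_of_nonneg_left k1b hθ₃.le
  have f4 := mul_le_mul_of_nonneg_left k2a hθ₄.le
  have hval : ∀ (k : ℕ) (r : Fin k → Bool), (n:ℝ) * (PW p v t * PW p (ext r) k) =
      (2:ℝ) ^ (x - Zs p (ext r) k) := by
    intro k r
    have hn0 : (0:ℝ) < n := by exact_mod_cast hn
    rw [PW_eq hp hp1, PW_eq hp hp1, ← Real.rpow_add (by norm_num)]
    nth_rewrite 1 [← Real.rpow_logb (b := 2) (by norm_num) (by norm_num) hn0]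
    rw [← Real.rpow_add (by norm_num)]
    congr 1
    rw [hxdef]; ring
  -- four bad events
  have b1 := fill_low hp hp1 hν v n t k₁ α β ((2:ℝ) ^ (η * x)) hβ0 (by rw [hβ]; ring) (by
      calc (4:ℝ) = (2:ℝ) ^ (2:ℝ) := by norm_num
        _ ≤ _ := Real.rpow_le_rpow_of_exponent_le h22.le w3) (by
      have hle : ((Finset.univ.filter fun r : Fin k₁ → Bool => ¬ (2:ℝ) ^ (η * x) ≤
          n * (PW p v t * PW p (ext r) k₁)).card : ℝ) ≤ ((Finset.univ.filter fun r : Fin k₁ → Bool =>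
          0 ≤ ∑ i, (zt p (r i) - (L + η))).card : ℝ) := by
        refine Nat.cast_le.2 (Finset.card_le_card ?_)
        intro r hr
        simp only [Finset.mem_filter, Finset.mem_univ, true_and] at hr ⊢
        by_contra hcon
        apply hr
        rw [hval]
        refine Real.rpow_le_rpow_of_exponent_le h22.le ?_
        rw [Finset.sum_sub_distrib, ← Zs_ext] at hcon
        simp only [Finset.sum_const, Finset.card_univ, Fintype.card_fin, nsmul_eq_mul] at hcon
        linarith
      refine hle.trans ((H1 k₁).trans ?_)
      gcongr
      refine le_trans (Real.rpow_le_rpow_of_exponent_le h22.le ?_) w1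
      linarith)
  have b2 := fill_up hp hp1 hν v n t k₂ α ((2:ℝ) ^ (-(η * x))) hα (by positivity) (by
      have hle : ((Finset.univ.filter fun r : Fin k₂ → Bool => ¬ n * (PW p v t * PW p (ext r) k₂)
          ≤ (2:ℝ) ^ (-(η * x))).card : ℝ) ≤ ((Finset.univ.filter fun r : Fin k₂ → Bool =>
          0 ≤ ∑ i, ((L - η) - zt p (r i))).card : ℝ) := by
        refine Nat.cast_le.2 (Finset.card_le_card ?_)
        intro r hr
        simp only [Finset.mem_filter, Finset.mem_univ, true_and] at hr ⊢
        by_contra hcon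
        apply hr
        rw [hval]
        refine Real.rpow_le_rpow_of_exponent_le h22.le ?_
        rw [Finset.sum_sub_distrib, ← Zs_ext] at hcon
        simp only [Finset.sum_const, Finset.card_univ, Fintype.card_fin, nsmul_eq_mul] at hcon
        linarith
      refine hle.trans ((H2 k₂).trans ?_)
      gcongr
      refine le_trans (Real.rpow_le_rpow_of_exponent_le h22.le ?_) w2
      linarith)
  have b3 := H3 v t k₁
  have b4 := H4 v t k₂
  have hsub : {ω | pre ω 0 v t} ∩ {ω | ¬ Step p α κ₁ κ₂ n t ω} ⊆
      ((({ω | pre ω 0 v t} ∩ {ω | ¬ α ≤ (fillCountFam ω (fam ω n t) t k₁ : ℝ) / 2 ^ k₁}) ∪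
      ({ω | pre ω 0 v t} ∩ {ω | α ≤ (fillCountFam ω (fam ω n t) t k₂ : ℝ) / 2 ^ k₂})) ∪
      ({ω | pre ω 0 v t} ∩ {ω | 0 ≤ ∑ j ∈ Finset.range k₁, ((h - η) - zt p (ω 0 (t + j)))})) ∪
      ({ω | pre ω 0 v t} ∩ {ω | 0 ≤ ∑ j ∈ Finset.range k₂, (zt p (ω 0 (t + j)) - (h + η))}) := by
    rintro ω ⟨hv, hω⟩
    by_contra hcon
    simp only [Set.mem_union, Set.mem_inter_iff, Set.mem_ofPred_eq, not_or, not_and] at hcon hv hω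
    obtain ⟨⟨⟨q1, q2⟩, q3⟩, q4⟩ := hcon
    have q1 := not_not.1 (q1 hv)
    have q2 := q2 hv
    have q3 := q3 hv
    have q4 := q4 hv
    obtain ⟨s1, s2, s3⟩ := step_det hα ω _ t k₁ k₂ q1 q2
    apply hω
    have hZ : Zs p (ω 0) t = Zs p v t := Zs_congr hv
    rw [Finset.sum_sub_distrib] at q3 q4
    simp only [Finset.sum_const, Finset.card_range, nsmul_eq_mul] at q3 q4
    have m1 := Zs_mono hp hp1 (ω 0) (show t + k₁ ≤ t + fillupLevelFam α ω (fam ω n t) t + 1 by omega)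
    have m2 := Zs_mono hp hp1 (ω 0) (show t + fillupLevelFam α ω (fam ω n t) t + 1 ≤ t + k₂ by omega)
    rw [Zs_add p (ω 0) t k₁] at m1
    rw [Zs_add p (ω 0) t k₂] at m2
    have q3' : (k₁:ℝ) * (h - η) < Zs p (fun j => ω 0 (t + j)) k₁ := by
      simp only [Zs]; linarith
    have q4' : Zs p (fun j => ω 0 (t + j)) k₂ < (k₂:ℝ) * (h + η) := by
      simp only [Zs]; linarith
    refine ⟨s1, ?_, ?_⟩
    · rw [hZ] at m2 ⊢
      rw [← hxdef]
      have : (k₂:ℝ) * (h + η) ≤ (c₂ * x + 1) * (h + η) := by gcongr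
      linarith
    · rw [hZ] at m1 ⊢
      rw [← hxdef]
      have : (c₁ * x - 1) * (h - η) ≤ k₁ * (h - η) :=
        mul_le_mul_of_nonneg_right k1b (by linarith)
      linarith
  have hP := PW_pos hp hp1 v t
  set γ : ℝ := min η (min (θ₃ * c₁) (θ₄ * c₂)) with hγ
  have g1 : γ ≤ η := min_le_left _ _
  have g2 : γ ≤ θ₃ * c₁ := (min_le_right _ _).trans (min_le_left _ _)
  have g3 : γ ≤ θ₄ * c₂ := (min_le_right _ _).trans (min_le_right _ _)
  have g1x := mul_le_mul_of_nonneg_right g1 w6.le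
  have g2x := mul_le_mul_of_nonneg_right g2 w6.le
  have g3x := mul_le_mul_of_nonneg_right g3 w6.le
  have r1 : (2:ℝ) ^ (-(η * x)) ≤ (2:ℝ) ^ (-(γ * x)) := by
    refine Real.rpow_le_rpow_of_exponent_le h22.le ?_
    linarith
  have r3 : (2:ℝ) ^ (-(θ₃ * k₁)) ≤ (2:ℝ) ^ θ₃ * (2:ℝ) ^ (-(γ * x)) := by
    rw [← Real.rpow_add (by norm_num)]
    refine Real.rpow_le_rpow_of_exponent_le h22.le ?_
    linarith
  have r4 : (2:ℝ) ^ (-(θ₄ * k₂)) ≤ (2:ℝ) ^ (-(γ * x)) := by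
    refine Real.rpow_le_rpow_of_exponent_le h22.le ?_
    linarith
  have hb1 : 8 / β / (2:ℝ) ^ (η * x) ≤ 8 / β * (2:ℝ) ^ (-(γ * x)) := by
    rw [div_eq_mul_inv, ← Real.rpow_neg (by norm_num)]
    gcongr
  have hb2 : 2 / α * (2:ℝ) ^ (-(η * x)) ≤ 2 / α * (2:ℝ) ^ (-(γ * x)) := by gcongr
  calc _ ≤ _ := measureReal_mono hsub (measure_ne_top _ _)
    _ ≤ PW p v t * (8 / β / (2:ℝ) ^ (η * x)) + PW p v t * (2 / α * (2:ℝ) ^ (-(η * x)))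
        + PW p v t * (2:ℝ) ^ (-(θ₃ * k₁)) + PW p v t * (2:ℝ) ^ (-(θ₄ * k₂)) := by
        refine (measureReal_union_le _ _).trans (add_le_add ?_ b4)
        refine (measureReal_union_le _ _).trans (add_le_add ?_ b3)
        exact (measureReal_union_le _ _).trans (add_le_add b1 b2)
    _ = PW p v t * (8 / β / (2:ℝ) ^ (η * x) + 2 / α * (2:ℝ) ^ (-(η * x))
        + (2:ℝ) ^ (-(θ₃ * k₁)) + (2:ℝ) ^ (-(θ₄ * k₂))) := by ring
    _ ≤ PW p v t * (8 / β * (2:ℝ) ^ (-(γ * x)) + 2 / α * (2:ℝ) ^ (-(γ * x))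
        + (2:ℝ) ^ θ₃ * (2:ℝ) ^ (-(γ * x)) + (2:ℝ) ^ (-(γ * x))) := by gcongr
    _ = _ := by ring

end LC

namespace LC

variable {p : ℝ} {ν : Measure (ℕ → ℕ → Bool)}

/-- smallest information of a bit -/
noncomputable def c0 (p : ℝ) : ℝ := min (zt p true) (zt p false)

lemma c0_pos (hp : 0 < p) (hp1 : p < 1) : 0 < c0 p := lt_min (zt_pos hp hp1 _) (zt_pos hp hp1 _)

lemma c0_le (p : ℝ) (b : Bool) : c0 p ≤ zt p b := by
  cases b
  · exact min_le_right _ _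
  · exact min_le_left _ _

lemma Zs_ge (p : ℝ) (u : ℕ → Bool) (t : ℕ) : t * c0 p ≤ Zs p u t := by
  unfold Zs
  have := Finset.card_nsmul_le_sum (Finset.range t) (fun j => zt p (u j)) (c0 p)
    fun j _ => c0_le p _
  simpa using this

lemma pot1 (hp : 0 < p) (hp1 : p < 1) {C γ W : ℝ} (hC : 0 < C) (hγ : 0 < γ)
    {f Φ : ℝ → ℝ} (hf : f = fun y => if W ≤ y then C * (2:ℝ) ^ (-(γ * y)) else 0)
    (hΦ : Φ = fun y => if W ≤ y then C * (1 / (1 - (2:ℝ) ^ (-(γ * c0 p)))) *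
      ((2:ℝ) ^ (-(γ * W)) - (2:ℝ) ^ (-(γ * (y + c0 p)))) else 0) :
    (∀ y, 0 ≤ Φ y) ∧ ∀ y b, f y + Φ (y - zt p b) ≤ Φ y := by
  have hc := c0_pos hp hp1
  have h22 : (1:ℝ) < 2 := by norm_num
  have hd : (2:ℝ) ^ (-(γ * c0 p)) < 1 :=
    Real.rpow_lt_one_of_one_lt_of_neg h22 (by have := mul_pos hγ hc; linarith)
  set d : ℝ := (2:ℝ) ^ (-(γ * c0 p)) with hdd
  have hK : 0 < 1 / (1 - d) := by apply one_div_pos.2; linarith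
  set K := 1 / (1 - d) with hKd
  have hKe : 1 + K * d = K := by
    rw [hKd]
    have : 1 - d ≠ 0 := by linarith
    field_simp; ring
  have mono : ∀ a b : ℝ, a ≤ b → (2:ℝ) ^ (-(γ * b)) ≤ (2:ℝ) ^ (-(γ * a)) := by
    intro a b hab
    refine Real.rpow_le_rpow_of_exponent_le h22.le ?_
    nlinarith
  have hadd : ∀ y, (2:ℝ) ^ (-(γ * (y + c0 p))) = (2:ℝ) ^ (-(γ * y)) * d := by
    intro y
    rw [hdd, ← Real.rpow_add (by norm_num)]
    congr 1; ring
  subst hf hΦ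
  refine ⟨fun y => ?_, fun y b => ?_⟩
  · dsimp only
    split_ifs with h
    · have := mono W (y + c0 p) (by linarith)
      have : 0 ≤ (2:ℝ) ^ (-(γ * W)) - (2:ℝ) ^ (-(γ * (y + c0 p))) := by linarith
      positivity
    · exact le_rfl
  · dsimp only
    have hb := c0_le p b
    by_cases h : W ≤ y
    · rw [if_pos h, if_pos h]
      have hle : (if W ≤ y - zt p b then C * K *
          ((2:ℝ) ^ (-(γ * W)) - (2:ℝ) ^ (-(γ * (y - zt p b + c0 p)))) else 0) ≤
          C * K * ((2:ℝ) ^ (-(γ * W)) - (2:ℝ) ^ (-(γ * y))) := by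
        split_ifs with h2
        · have := mono (y - zt p b + c0 p) y (by linarith)
          gcongr
        · have := mono W y h
          have : 0 ≤ (2:ℝ) ^ (-(γ * W)) - (2:ℝ) ^ (-(γ * y)) := by linarith
          positivity
      refine (add_le_add_right hle _).trans (le_of_eq ?_)
      rw [hadd]
      linear_combination (C * (2:ℝ) ^ (-(γ * y))) * hKe
    · have hb0 := zt_pos hp hp1 b
      rw [if_neg h, if_neg h, if_neg (by linarith)]
      simp

lemma pot2 (hp : 0 < p) (hp1 : p < 1) {W : ℝ}
    {f Φ : ℝ → ℝ} (hf : f = fun y => if y ≤ -W then (2:ℝ) ^ y else 0)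
    (hΦ : Φ = fun y => (1 / (1 - (2:ℝ) ^ (-c0 p))) * min ((2:ℝ) ^ y) ((2:ℝ) ^ (-W))) :
    (∀ y, 0 ≤ Φ y) ∧ ∀ y b, f y + Φ (y - zt p b) ≤ Φ y := by
  have hc := c0_pos hp hp1
  have h22 : (1:ℝ) < 2 := by norm_num
  have hd : (2:ℝ) ^ (-c0 p) < 1 :=
    Real.rpow_lt_one_of_one_lt_of_neg h22 (by linarith)
  set d : ℝ := (2:ℝ) ^ (-c0 p) with hdd
  have hK : 0 < 1 / (1 - d) := by apply one_div_pos.2; linarith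
  set K := 1 / (1 - d) with hKd
  have hKe : 1 + K * d = K := by
    rw [hKd]
    have : 1 - d ≠ 0 := by linarith
    field_simp; ring
  subst hf hΦ
  refine ⟨fun y => by positivity, fun y b => ?_⟩
  dsimp only
  have hb := c0_le p b
  by_cases h : y ≤ -W
  · rw [if_pos h, min_eq_left (a := (2:ℝ) ^ y) (Real.rpow_le_rpow_of_exponent_le h22.le h)]
    have : min ((2:ℝ) ^ (y - zt p b)) ((2:ℝ) ^ (-W)) ≤ (2:ℝ) ^ y * d := by
      refine (min_le_left _ _).trans ?_
      rw [hdd, ← Real.rpow_add (by norm_num)]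
      exact Real.rpow_le_rpow_of_exponent_le h22.le (by linarith)
    calc _ ≤ (2:ℝ) ^ y + K * ((2:ℝ) ^ y * d) := by gcongr
      _ = _ := by linear_combination (2:ℝ) ^ y * hKe
  · rw [if_neg h, min_eq_right (a := (2:ℝ) ^ y)
      (Real.rpow_le_rpow_of_exponent_le h22.le (by linarith)), zero_add]
    gcongr
    exact min_le_right _ _

lemma bad1 (hp : 0 < p) (hp1 : p < 1) (hν : IIDBits p ν) {α κ₁ κ₂ W₀ C γ : ℝ}
    (hC : 0 < C) (hγ : 0 < γ)
    (H : ∀ (n : ℕ) (_ : 1 ≤ n) (t : ℕ) (v : ℕ → Bool),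
      W₀ ≤ Real.logb 2 n - Zs p v t →
      ν.real ({ω | pre ω 0 v t} ∩ {ω | ¬ Step p α κ₁ κ₂ n t ω}) ≤
        PW p v t * (C * (2:ℝ) ^ (-(γ * (Real.logb 2 n - Zs p v t)))))
    (W : ℝ) (hW : W₀ ≤ W) (n : ℕ) (hn : 1 ≤ n) (T : ℕ) :
    ν.real (⋃ t ∈ Finset.range T, {ω | W ≤ Real.logb 2 n - Zs p (ω 0) t ∧
      ¬ Step p α κ₁ κ₂ n t ω}) ≤ C * (1 / (1 - (2:ℝ) ^ (-(γ * c0 p)))) * (2:ℝ) ^ (-(γ * W)) := by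
  have := hν.1
  obtain ⟨q1, q2⟩ := pot1 (W := W) hp hp1 hC hγ rfl rfl
  have := union_bound hp hp1 hν _ _ q1 q2 T (Real.logb 2 n) (fun t =>
    {ω | W ≤ Real.logb 2 n - Zs p (ω 0) t ∧ ¬ Step p α κ₁ κ₂ n t ω}) ?_
  · refine this.trans ?_
    try dsimp only
    have hd : (2:ℝ) ^ (-(γ * c0 p)) < 1 :=
      Real.rpow_lt_one_of_one_lt_of_neg (by norm_num)
        (by have := mul_pos hγ (c0_pos hp hp1); linarith)
    have hK : 0 < 1 / (1 - (2:ℝ) ^ (-(γ * c0 p))) := by apply one_div_pos.2; linarith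
    split_ifs with h
    · gcongr
      have : (0:ℝ) < (2:ℝ) ^ (-(γ * (Real.logb 2 n + c0 p))) := by positivity
      linarith
    · positivity
  · intro t v
    try dsimp only
    split_ifs with h
    · refine le_trans (measureReal_mono ?_ (measure_ne_top _ _)) (H n hn t v (hW.trans h))
      rintro ω ⟨h1, h2⟩
      exact ⟨h1, h2.2⟩
    · have : {ω | pre ω 0 v t} ∩ {ω | W ≤ Real.logb 2 n - Zs p (ω 0) t ∧
        ¬ Step p α κ₁ κ₂ n t ω} = ∅ := by
        rw [Set.eq_empty_iff_forall_notMem]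
        rintro ω ⟨h1, h2⟩
        apply h
        have h3 := h2.1
        rwa [Zs_congr h1] at h3
      rw [this]; simp

lemma bad2 (hp : 0 < p) (hp1 : p < 1) (hν : IIDBits p ν)
    (W : ℝ) (n : ℕ) (hn : 1 ≤ n) (T : ℕ) :
    ν.real (⋃ t ∈ Finset.range T, {ω | Real.logb 2 n - Zs p (ω 0) t ≤ -W ∧
      2 ≤ (fam ω n t).card}) ≤ (1 / (1 - (2:ℝ) ^ (-c0 p))) * (2:ℝ) ^ (-W) := by
  have := hν.1
  obtain ⟨q1, q2⟩ := pot2 (W := W) hp hp1 rfl rfl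
  have := union_bound hp hp1 hν _ _ q1 q2 T (Real.logb 2 n) (fun t =>
    {ω | Real.logb 2 n - Zs p (ω 0) t ≤ -W ∧ 2 ≤ (fam ω n t).card}) ?_
  · refine this.trans ?_
    have hd : (2:ℝ) ^ (-c0 p) < 1 :=
      Real.rpow_lt_one_of_one_lt_of_neg (by norm_num) (by have := c0_pos hp hp1; linarith)
    have hK : 0 < 1 / (1 - (2:ℝ) ^ (-c0 p)) := by apply one_div_pos.2; linarith
    try dsimp only
    gcongr
    exact min_le_right _ _
  · intro t v
    try dsimp only
    split_ifs with h
    · calc _ ≤ ν.real (⋃ i ∈ Finset.Ico 1 n, {ω | pre ω 0 v t} ∩ {ω | pre ω i v t}) := by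
            refine measureReal_mono ?_ (measure_ne_top _ _)
            rintro ω ⟨h1, h2⟩
            obtain ⟨a, b, ha, hb, hab⟩ := Finset.one_lt_card_iff.1 (show 1 < _ from h2.2)
            simp only [Set.mem_iUnion, Finset.mem_Ico]
            simp only [fam, Finset.mem_filter, Finset.mem_range] at ha hb
            rcases Nat.eq_zero_or_pos a with h | h
            · exact ⟨b, ⟨by omega, hb.1⟩, h1, fun j hj => (hb.2 j hj).trans (h1 j hj)⟩
            · exact ⟨a, ⟨by omega, ha.1⟩, h1, fun j hj => (ha.2 j hj).trans (h1 j hj)⟩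
        _ ≤ _ := measureReal_biUnion_finset_le _ _
        _ = (Finset.Ico 1 n).card • (PW p v t * PW p v t) := by
            refine Finset.sum_eq_card_nsmul fun i hi => ?_
            have : i ≠ 0 := by have := Finset.mem_Ico.1 hi; omega
            exact cyl2 hp hp1 hν v t i this _ _
        _ ≤ (n:ℝ) * (PW p v t * PW p v t) := by
            rw [nsmul_eq_mul, Nat.card_Ico]
            have h1 : ((n - 1 : ℕ) : ℝ) ≤ n := by exact_mod_cast Nat.sub_le _ _
            have hq1 := PW_pos hp hp1 v t
            gcongr
        _ = PW p v t * ((2:ℝ) ^ (Real.logb 2 n - Zs p v t)) := by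
            have hn0 : (0:ℝ) < n := by exact_mod_cast hn
            rw [sub_eq_add_neg, Real.rpow_add (by norm_num),
              Real.rpow_logb (by norm_num) (by norm_num) hn0, ← PW_eq hp hp1]
            ring
    · have : {ω | pre ω 0 v t} ∩ {ω | Real.logb 2 n - Zs p (ω 0) t ≤ -W ∧
        2 ≤ (fam ω n t).card} = ∅ := by
        rw [Set.eq_empty_iff_forall_notMem]
        rintro ω ⟨h1, h2⟩
        apply h
        have h3 := h2.1
        rwa [Zs_congr h1] at h3
      rw [this]; simp

/-- offset after `m` steps -/
noncomputable def tau (α : ℝ) (ω : ℕ → ℕ → Bool) (n m : ℕ) : ℕ := (lcIter α ω n m).2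

lemma lcIter_fst (α : ℝ) (ω : ℕ → ℕ → Bool) (n m : ℕ) :
    (lcIter α ω n m).1 = fam ω n (tau α ω n m) := by
  induction m with
  | zero => simp [lcIter, fam, tau]
  | succ m ih =>
    have e : tau α ω n (m + 1) = tau α ω n m +
        fillupLevelFam α ω (lcIter α ω n m).1 (lcIter α ω n m).2 + 1 := rfl
    have e2 : (lcIter α ω n (m + 1)).1 = (lcIter α ω n m).1.filter fun i => ∀ j <
        fillupLevelFam α ω (lcIter α ω n m).1 (lcIter α ω n m).2 + 1,
        ω i (tau α ω n m + j) = ω 0 (tau α ω n m + j) := rfl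
    rw [e2, e]
    generalize fillupLevelFam α ω (lcIter α ω n m).1 (lcIter α ω n m).2 = F
    rw [ih]
    ext i
    simp only [fam, Finset.mem_filter, Finset.mem_range, and_assoc]
    refine and_congr_right fun _ => ?_
    constructor
    · rintro ⟨h1, h2⟩ j hj
      by_cases h : j < tau α ω n m
      · exact h1 j h
      · have := h2 (j - tau α ω n m) (by omega)
        rwa [show tau α ω n m + (j - tau α ω n m) = j by omega] at this
    · intro h
      exact ⟨fun j hj => h j (by omega), fun j hj => h _ (by omega)⟩

lemma tau_succ (α : ℝ) (ω : ℕ → ℕ → Bool) (n m : ℕ) :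
    tau α ω n (m + 1) = tau α ω n m +
      fillupLevelFam α ω (fam ω n (tau α ω n m)) (tau α ω n m) + 1 := by
  rw [← lcIter_fst]; rfl

lemma fam_anti (ω : ℕ → ℕ → Bool) (n : ℕ) {s t : ℕ} (h : s ≤ t) : fam ω n t ⊆ fam ω n s := by
  intro i hi
  simp only [fam, Finset.mem_filter] at hi ⊢
  exact ⟨hi.1, fun j hj => hi.2 j (by omega)⟩

/-- good outcomes -/
def Good (p α κ₁ κ₂ W : ℝ) (n T : ℕ) (ω : ℕ → ℕ → Bool) : Prop :=
  (∀ t < T, W ≤ Real.logb 2 n - Zs p (ω 0) t → Step p α κ₁ κ₂ n t ω) ∧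
  (∀ t < T, Real.logb 2 n - Zs p (ω 0) t ≤ -W → (fam ω n t).card ≤ 1)

/-- time horizon -/
noncomputable def hor (p W : ℝ) (n : ℕ) : ℕ := ⌈(Real.logb 2 n + W) / c0 p⌉₊ + 1

lemma lt_hor (hp : 0 < p) (hp1 : p < 1) {W : ℝ} (hW : 0 < W) {n t : ℕ} {u : ℕ → Bool}
    (h : W ≤ Real.logb 2 n - Zs p u t) : t < hor p W n := by
  unfold hor
  have h1 := Zs_ge p u t
  have hc := c0_pos hp hp1
  have : (t:ℝ) ≤ (Real.logb 2 n + W) / c0 p := by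
    rw [le_div_iff₀ hc]; linarith
  have h2 : (t:ℝ) ≤ (⌈(Real.logb 2 n + W) / c0 p⌉₊ : ℝ) := this.trans (Nat.le_ceil _)
  have : t ≤ ⌈(Real.logb 2 n + W) / c0 p⌉₊ := by exact_mod_cast h2
  omega

lemma det_upper (hp : 0 < p) (hp1 : p < 1) {α κ₁ κ₂ W : ℝ} {n : ℕ} {ω : ℕ → ℕ → Bool}
    (hW : 0 < W) (hκ : 0 < κ₂) (hg : Good p α κ₁ κ₂ W n (hor p W n) ω) (M : ℕ)
    (hM : κ₂ ^ M * Real.logb 2 n < W) :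
    ∃ m ≤ M + ⌈2 * W / c0 p⌉₊, (lcIter α ω n m).1.card ≤ 1 := by
  have hc := c0_pos hp hp1
  obtain ⟨m, hmM, hm⟩ : ∃ m ≤ M, Real.logb 2 n - Zs p (ω 0) (tau α ω n m) < W := by
    by_contra hcon
    push Not at hcon
    have key : ∀ m ≤ M, Real.logb 2 n - Zs p (ω 0) (tau α ω n m) ≤ κ₂ ^ m * Real.logb 2 n := by
      intro m
      induction m with
      | zero => intro _; simp [tau, lcIter, Zs]
      | succ m ih =>
        intro hm
        have h1 := ih (by omega)
        have h2 := hcon m (by omega)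
        have h3 := (hg.1 _ (lt_hor hp hp1 hW h2) h2).2.2
        rw [← tau_succ] at h3
        calc _ ≤ _ := h3
          _ ≤ κ₂ * (κ₂ ^ m * Real.logb 2 n) := by gcongr
          _ = _ := by ring
    have h1 := key M le_rfl
    have h2 := hcon M le_rfl
    linarith
  set Cn := ⌈2 * W / c0 p⌉₊ with hCn
  refine ⟨m + Cn, by omega, ?_⟩
  rw [lcIter_fst]
  have htau : ∀ j, tau α ω n m + j ≤ tau α ω n (m + j) := by
    intro j
    induction j with
    | zero => simp
    | succ j ih => rw [← add_assoc m j 1, tau_succ]; omega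
  have hx1 : Real.logb 2 n - Zs p (ω 0) (tau α ω n m + Cn) ≤ -W := by
    rw [Zs_add]
    have h1 := Zs_ge p (fun j => ω 0 (tau α ω n m + j)) Cn
    have h2 : 2 * W / c0 p ≤ Cn := Nat.le_ceil _
    rw [div_le_iff₀ hc] at h2
    linarith
  set T1 := ⌈(Real.logb 2 n + W) / c0 p⌉₊ with hT1
  have hx2 : Real.logb 2 n - Zs p (ω 0) T1 ≤ -W := by
    have h1 := Zs_ge p (ω 0) T1
    have h2 : (Real.logb 2 n + W) / c0 p ≤ T1 := Nat.le_ceil _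
    rw [div_le_iff₀ hc] at h2
    linarith
  rcases le_total T1 (tau α ω n m + Cn) with h | h
  · exact (Finset.card_le_card (fam_anti ω n (h.trans (htau Cn)))).trans
      (hg.2 T1 (by unfold hor; omega) hx2)
  · exact (Finset.card_le_card (fam_anti ω n (htau Cn))).trans
      (hg.2 _ (by unfold hor; omega) hx1)

lemma det_lower (hp : 0 < p) (hp1 : p < 1) {α κ₁ κ₂ W : ℝ} {n : ℕ} {ω : ℕ → ℕ → Bool}
    (hW : 0 < W) (hκ : 0 < κ₁) (hκ1 : κ₁ ≤ 1) (hn : 0 ≤ Real.logb 2 n)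
    (hg : Good p α κ₁ κ₂ W n (hor p W n) ω) (M : ℕ)
    (hM : W ≤ κ₁ ^ M * Real.logb 2 n) :
    ∀ m ≤ M, 2 ≤ (lcIter α ω n m).1.card := by
  have hle : ∀ m ≤ M, W ≤ κ₁ ^ m * Real.logb 2 n := fun m hm =>
    hM.trans (mul_le_mul_of_nonneg_right (pow_le_pow_of_le_one hκ.le hκ1 hm) hn)
  have key : ∀ m ≤ M, κ₁ ^ m * Real.logb 2 n ≤ Real.logb 2 n - Zs p (ω 0) (tau α ω n m) := by
    intro m
    induction m with
    | zero => intro _; simp [tau, lcIter, Zs]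
    | succ m ih =>
      intro hm
      have h1 := ih (by omega)
      have h2 := (hle m (by omega)).trans h1
      have h3 := (hg.1 _ (lt_hor hp hp1 hW h2) h2).2.1
      rw [← tau_succ] at h3
      calc _ = κ₁ * (κ₁ ^ m * Real.logb 2 n) := by ring
        _ ≤ _ := by gcongr
        _ ≤ _ := h3
  intro m hm
  rw [lcIter_fst]
  have h2 := (hle m hm).trans (key m hm)
  exact (hg.1 _ (lt_hor hp hp1 hW h2) h2).1

end LC

namespace LC

variable {p : ℝ} {ν : Measure (ℕ → ℕ → Bool)}

lemma const_facts (hp : 0 < p) (hp1 : p < 1) (hp2 : p ≠ 1 / 2) {q h L : ℝ} (hq : q = 1 - p)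
    (hh : h = -(p * Real.logb 2 p) - q * Real.logb 2 q)
    (hL : L = Real.logb 2 (1 / Real.sqrt (p * q))) :
    L = (zt p true + zt p false) / 2 ∧ h = p * zt p true + (1 - p) * zt p false ∧
      0 < 1 - h / L ∧ 1 - h / L < 1 := by
  have hq0 : 0 < 1 - p := by linarith
  have z1 : zt p true = -Real.logb 2 p := by simp [zt, wt]
  have z2 : zt p false = -Real.logb 2 (1 - p) := by simp [zt, wt]
  have hz1 := zt_pos hp hp1 true
  have hz2 := zt_pos hp hp1 false
  have e1 : L = (zt p true + zt p false) / 2 := by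
    rw [hL, z1, z2, hq, one_div, Real.logb_inv, Real.sqrt_eq_rpow,
      Real.logb_rpow_eq_mul_logb_of_pos (by positivity), Real.logb_mul hp.ne' hq0.ne']
    ring
  have e2 : h = p * zt p true + (1 - p) * zt p false := by
    rw [hh, z1, z2, hq]; ring
  have hL0 : 0 < L := by rw [e1]; linarith
  have hh0 : 0 < h := by rw [e2]; positivity
  have hlt : h < L := by
    rw [e1, e2, z1, z2]
    rcases lt_or_gt_of_ne hp2 with hlt | hlt
    · have := Real.logb_lt_logb (b := 2) (by norm_num) hp (show p < 1 - p by linarith)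
      nlinarith
    · have := Real.logb_lt_logb (b := 2) (by norm_num) hq0 (show 1 - p < p by linarith)
      nlinarith
  refine ⟨e1, e2, ?_, ?_⟩
  · have := (div_lt_one hL0).2 hlt
    linarith
  · have := div_pos hh0 hL0
    linarith

lemma bracket {D b ll δ K w : ℝ} (hb : 0 < b) (hll : 0 < ll) (hδ : 0 < δ)
    (h1 : D ≤ ll / (b / (1 + δ)) + K) (h2 : (ll - w) / (b * (1 + δ)) ≤ D)
    (hK : b * K ≤ δ * ll) (hw : w ≤ δ * ll) : |D * b / ll - 1| ≤ 2 * δ := by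
  have h1' : D * b ≤ (1 + 2 * δ) * ll := by
    have : ll / (b / (1 + δ)) * b = (1 + δ) * ll := by field_simp
    have := mul_le_mul_of_nonneg_right h1 hb.le
    linarith
  have h2' : (1 - 2 * δ) * ll ≤ D * b := by
    rw [div_le_iff₀ (by positivity)] at h2
    have h3 : (1 - δ) * ll ≤ (D * b) * (1 + δ) := by linarith
    have h4 : ((1 - 2 * δ) * ll) * (1 + δ) ≤ (1 - δ) * ll := by
      have : 0 ≤ δ ^ 2 * ll := by positivity
      linarith
    exact le_of_mul_le_mul_right (h4.trans h3) (by linarith)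
  rw [abs_le]
  constructor
  · have : 1 - 2 * δ ≤ D * b / ll := (le_div_iff₀ hll).2 h2'
    linarith
  · have : D * b / ll ≤ 1 + 2 * δ := (div_le_iff₀ hll).2 h1'
    linarith

/-- `(2^(-b))^M * y` in terms of exponents -/
lemma pow_form {b y : ℝ} (hy : 0 < y) (M : ℕ) :
    ((2:ℝ) ^ (-b)) ^ M * y = (2:ℝ) ^ (Real.logb 2 y - b * M) := by
  rw [← Real.rpow_natCast, ← Real.rpow_mul (by norm_num), sub_eq_add_neg,
    Real.rpow_add (by norm_num), Real.rpow_logb (by norm_num) (by norm_num) hy, mul_comm]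
  congr 2
  ring

lemma good_depth (hp : 0 < p) (hp1 : p < 1) {α b δ W : ℝ} {n : ℕ} {ω : ℕ → ℕ → Bool}
    (hb : 0 < b) (hδ : 0 < δ) (hW : 1 ≤ W) (hy : 0 < Real.logb 2 n)
    (hll : 0 < Real.logb 2 (Real.logb 2 n))
    (hg : Good p α ((2:ℝ) ^ (-(b * (1 + δ)))) ((2:ℝ) ^ (-(b / (1 + δ)))) W n (hor p W n) ω)
    (hK : b * (1 + ⌈2 * W / c0 p⌉₊) ≤ δ * Real.logb 2 (Real.logb 2 n))
    (hw : Real.logb 2 W ≤ δ * Real.logb 2 (Real.logb 2 n))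
    (hw' : Real.logb 2 W ≤ Real.logb 2 (Real.logb 2 n)) :
    |(lcDepth α ω n : ℝ) * b / Real.logb 2 (Real.logb 2 n) - 1| ≤ 2 * δ := by
  set y := Real.logb 2 n with hydef
  set ll := Real.logb 2 y with hlldef
  set w := Real.logb 2 W with hwdef
  have hW0 : 0 < W := by linarith
  have hw0 : 0 ≤ w := Real.logb_nonneg (by norm_num) hW
  have hWe : W = (2:ℝ) ^ w := (Real.rpow_logb (by norm_num) (by norm_num) hW0).symm
  have hb1 : 0 < b * (1 + δ) := by positivity
  have hb2 : 0 < b / (1 + δ) := by positivity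
  have h22 : (1:ℝ) < 2 := by norm_num
  obtain ⟨m, hm, hmc⟩ := det_upper hp hp1 hW0 (Real.rpow_pos_of_pos (by norm_num) _) hg
    (⌊(ll - w) / (b / (1 + δ))⌋₊ + 1) (by
      rw [pow_form hy, hWe]
      refine Real.rpow_lt_rpow_of_exponent_lt h22 ?_
      have := Nat.lt_floor_add_one ((ll - w) / (b / (1 + δ)))
      rw [div_lt_iff₀ hb2] at this
      push_cast
      linarith)
  have hlow := det_lower hp hp1 hW0 (Real.rpow_pos_of_pos (by norm_num) _)
    (Real.rpow_le_one_of_one_le_of_nonpos h22.le (by linarith)) hy.le hg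
    (⌊(ll - w) / (b * (1 + δ))⌋₊) (by
      rw [pow_form hy]
      nth_rewrite 1 [hWe]
      refine Real.rpow_le_rpow_of_exponent_le h22.le ?_
      have := Nat.floor_le (show 0 ≤ (ll - w) / (b * (1 + δ)) from div_nonneg (by linarith) hb1.le)
      rw [le_div_iff₀ hb1] at this
      linarith)
  have hD1 : lcDepth α ω n ≤ m := Nat.sInf_le hmc
  have hD2 : (lcIter α ω n (lcDepth α ω n)).1.card ≤ 1 :=
    Nat.sInf_mem (s := {m | (lcIter α ω n m).1.card ≤ 1}) ⟨m, hmc⟩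
  have hD3 : ⌊(ll - w) / (b * (1 + δ))⌋₊ < lcDepth α ω n := by
    by_contra hcon
    have := hlow _ (not_lt.1 hcon)
    omega
  refine bracket (K := 1 + ⌈2 * W / c0 p⌉₊) (w := w) hb hll hδ ?_ ?_ hK hw
  · have h1 : (lcDepth α ω n : ℝ) ≤ (⌊(ll - w) / (b / (1 + δ))⌋₊ + 1 + ⌈2 * W / c0 p⌉₊ : ℕ) := by
      exact_mod_cast hD1.trans hm
    push_cast at h1
    have h2 := Nat.floor_le (show 0 ≤ (ll - w) / (b / (1 + δ)) from div_nonneg (by linarith) hb2.le)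
    have h3 : (ll - w) / (b / (1 + δ)) ≤ ll / (b / (1 + δ)) :=
      div_le_div_of_nonneg_right (by linarith) hb2.le
    linarith
  · have h1 : ((⌊(ll - w) / (b * (1 + δ))⌋₊ + 1 : ℕ) : ℝ) ≤ lcDepth α ω n := by
      exact_mod_cast hD3
    push_cast at h1
    exact (Nat.lt_floor_add_one _).le.trans h1

lemma not_good_prob (hp : 0 < p) (hp1 : p < 1) (hν : IIDBits p ν) {α κ₁ κ₂ W₀ C γ : ℝ}
    (hC : 0 < C) (hγ : 0 < γ)
    (H : ∀ (n : ℕ) (_ : 1 ≤ n) (t : ℕ) (v : ℕ → Bool),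
      W₀ ≤ Real.logb 2 n - Zs p v t →
      ν.real ({ω | pre ω 0 v t} ∩ {ω | ¬ Step p α κ₁ κ₂ n t ω}) ≤
        PW p v t * (C * (2:ℝ) ^ (-(γ * (Real.logb 2 n - Zs p v t)))))
    (W : ℝ) (hW : W₀ ≤ W) (n : ℕ) (hn : 1 ≤ n) (T : ℕ) :
    ν.real {ω | ¬ Good p α κ₁ κ₂ W n T ω} ≤
      C * (1 / (1 - (2:ℝ) ^ (-(γ * c0 p)))) * (2:ℝ) ^ (-(γ * W)) +
      (1 / (1 - (2:ℝ) ^ (-c0 p))) * (2:ℝ) ^ (-W) := by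
  have := hν.1
  refine le_trans (measureReal_mono ?_ (measure_ne_top _ _)) ((measureReal_union_le _ _).trans
    (add_le_add (bad1 hp hp1 hν hC hγ H W hW n hn T) (bad2 hp hp1 hν W n hn T)))
  intro ω hω
  by_contra hcon
  simp only [Set.mem_union, Set.mem_iUnion, Set.mem_ofPred_eq, Finset.mem_range, not_or,
    not_exists, not_and, not_not, not_le] at hcon hω
  exact hω ⟨fun t ht => hcon.1 t ht, fun t ht hh => by have := hcon.2 t ht hh; omega⟩

end LC

/-- Theorem 3 of Janson–Szpankowski: for `p ≠ 1/2`,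
`D_n(α) / log log n → 1 / (-log(1 - h / log(1/√(pq))))` in probability. -/
theorem lcDepth_in_probability
    (p q α : ℝ) (hp : 0 < p) (hp1 : p < 1) (hp2 : p ≠ 1 / 2) (hq : q = 1 - p)
    (hα : 0 < α) (hα1 : α < 1)
    (h : ℝ) (hh : h = -(p * Real.logb 2 p) - q * Real.logb 2 q)
    (ν : Measure (ℕ → ℕ → Bool)) (hν : IIDBits p ν) :
    ∀ ε > (0 : ℝ),
      Tendsto
        (fun n : ℕ =>
          ν {ω | ε <
            |(lcDepth α ω n : ℝ) *
                (-Real.logb 2 (1 - h / Real.logb 2 (1 / Real.sqrt (p * q)))) /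
                Real.logb 2 (Real.logb 2 n) - 1|})
        atTop (nhds 0) := by
  intro ε hε
  have := hν.1
  set L := Real.logb 2 (1 / Real.sqrt (p * q)) with hLdef
  obtain ⟨hL, hh', hκ0, hκ1⟩ := LC.const_facts hp hp1 hp2 hq hh hLdef
  set κ := 1 - h / L with hκ
  set b := -Real.logb 2 κ with hb
  have hb0 : 0 < b := by
    have := Real.logb_neg (b := 2) (by norm_num) hκ0 hκ1
    linarith
  have hκb : κ = (2:ℝ) ^ (-b) := by
    rw [hb, neg_neg, Real.rpow_logb (by norm_num) (by norm_num) hκ0]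
  set δ := ε / 2 with hδdef
  have hδ : 0 < δ := by positivity
  have h22 : (1:ℝ) < 2 := by norm_num
  obtain ⟨W₀, hW₀, C, hC, γ, hγ, H⟩ := LC.step_prob (κ₁ := (2:ℝ) ^ (-(b * (1 + δ))))
    (κ₂ := (2:ℝ) ^ (-(b / (1 + δ)))) hp hp1 hν hα hα1 hL hh'
    (by
      rw [← hκ, hκb]
      refine Real.rpow_lt_rpow_of_exponent_lt h22 ?_
      have := mul_pos hb0 hδ
      linarith)
    (by
      rw [← hκ, hκb]
      refine Real.rpow_lt_rpow_of_exponent_lt h22 ?_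
      have : b / (1 + δ) < b := div_lt_self hb0 (by linarith)
      linarith)
  have hlim : ∀ a > (0:ℝ), Tendsto (fun W : ℝ => (2:ℝ) ^ (-(a * W))) atTop (nhds 0) := fun a ha =>
    (tendsto_rpow_atBot_of_base_gt_one 2 (by norm_num)).comp
      (tendsto_neg_atTop_atBot.comp (tendsto_id.const_mul_atTop ha))
  have hlim2 : Tendsto (fun W : ℝ => C * (1 / (1 - (2:ℝ) ^ (-(γ * LC.c0 p)))) * (2:ℝ) ^ (-(γ * W)) +
      (1 / (1 - (2:ℝ) ^ (-LC.c0 p))) * (2:ℝ) ^ (-W)) atTop (nhds 0) := by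
    have h1 := (hlim γ hγ).const_mul (C * (1 / (1 - (2:ℝ) ^ (-(γ * LC.c0 p)))))
    have h2 := (hlim 1 one_pos).const_mul (1 / (1 - (2:ℝ) ^ (-LC.c0 p)))
    simpa using h1.add h2
  have hy : Tendsto (fun n : ℕ => Real.logb 2 (n:ℝ)) atTop atTop :=
    (Real.tendsto_logb_atTop h22).comp tendsto_natCast_atTop_atTop
  have hll : Tendsto (fun n : ℕ => Real.logb 2 (Real.logb 2 (n:ℝ))) atTop atTop :=
    (Real.tendsto_logb_atTop h22).comp hy
  have hreal : Tendsto (fun n : ℕ => ν.real {ω | ε < |(lcDepth α ω n : ℝ) * b /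
      Real.logb 2 (Real.logb 2 n) - 1|}) atTop (nhds 0) := by
    rw [Metric.tendsto_atTop']
    intro e he
    obtain ⟨W, ⟨hWe, hW1⟩, hWW⟩ := (((hlim2.eventually_lt_const he).and
      (eventually_ge_atTop 1)).and (eventually_ge_atTop W₀)).exists
    have hev : ∀ᶠ n : ℕ in atTop, ν.real {ω | ε < |(lcDepth α ω n : ℝ) * b /
      Real.logb 2 (Real.logb 2 n) - 1|} < e := by
      filter_upwards [hy.eventually_gt_atTop 0, hll.eventually_gt_atTop 0,
        (hll.const_mul_atTop hδ).eventually_ge_atTop (b * (1 + ⌈2 * W / LC.c0 p⌉₊)),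
        (hll.const_mul_atTop hδ).eventually_ge_atTop (Real.logb 2 W),
        hll.eventually_ge_atTop (Real.logb 2 W), eventually_ge_atTop 1] with n n1 n2 n3 n4 n5 n6
      refine lt_of_le_of_lt (le_trans (measureReal_mono ?_ (measure_ne_top _ _))
        (LC.not_good_prob hp hp1 hν hC hγ H W hWW n n6 (LC.hor p W n))) hWe
      intro ω hω hg
      have h1 := LC.good_depth hp hp1 hb0 hδ hW1 n1 n2 hg n3 n4 n5
      have h2 : ε < |(lcDepth α ω n : ℝ) * b / Real.logb 2 (Real.logb 2 n) - 1| := hω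
      have h3 : 2 * δ = ε := by rw [hδdef]; ring
      linarith
    obtain ⟨N, hN⟩ := eventually_atTop.1 hev
    refine ⟨N, fun n hn => ?_⟩
    rw [Real.dist_eq, sub_zero, abs_of_nonneg measureReal_nonneg]
    exact hN n hn.le
  have := (ENNReal.tendsto_toReal_iff (fun n => measure_ne_top ν _) ENNReal.zero_ne_top).1
    (by simpa [Measure.real] using hreal)
  exact this
end

section
/- Let 0 < α < 1 and 0 < p < 1 be fixed. In the Poissonized model, there exist a constant C > 0 and, for each λ > 0 large, an integer k_λ with |k_λ − (log_{1/√(pq)} λ − (|ln(p/q)| / (2 ln^{3/2}(1/√(pq)))) · Φ^{-1}(α) · √(ln λ))| ≤ C, such that the probability that F̃_λ(α) ∈ {k_λ, k_λ + 1} tends to 1 as λ → ∞. -/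
/-!
Poissonized model for partial fillup in tries (Janson–Szpankowski).

An outcome `ω : ℕ × (ℕ → ℕ → Bool)` consists of the number `ω.1 = N` of inserted
strings and a source `ω.2` of infinitely many strings, where `ω.2 i j` is the `j`-th
bit of the `i`-th string; the inserted strings are the strings `0, …, N-1`.  Under the
Poissonized measure, `N ~ Po(λ)` is independent of the strings, and all bits are
i.i.d. with `P(bit = 1) = p`.
-/

open MeasureTheory ProbabilityTheory Real Filter

/-- The Poissonized model: the number of inserted strings is `Po(λ)`, independent of the
i.i.d. source `ν` of strings. -/
noncomputable def poModel (lam : NNReal) (ν : Measure (ℕ → ℕ → Bool)) :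
    Measure (ℕ × (ℕ → ℕ → Bool)) :=
  (ProbabilityTheory.poissonMeasure lam).prod ν

/-- `X_k(λ)` as a random variable on the Poissonized model: the number of words
`r ∈ {0,1}^k` that are prefixes of at least two of the `N` inserted strings. -/
def fillCountPo (k : ℕ) (ω : ℕ × (ℕ → ℕ → Bool)) : ℕ :=
  fillCount ω.2 ω.1 k

/-- `X̄_k(λ) = X_k(λ) / 2^k`. -/
noncomputable def fracFilledPo (k : ℕ) (ω : ℕ × (ℕ → ℕ → Bool)) : ℝ :=
  (fillCountPo k ω : ℝ) / 2 ^ k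

/-- The α-fillup level `F̃_λ(α) = max {k : X̄_k(λ) ≥ α}` in the Poissonized model. -/
noncomputable def fillupLevelPo (α : ℝ) (ω : ℕ × (ℕ → ℕ → Bool)) : ℕ :=
  sSup {k | α ≤ fracFilledPo k ω}

section

lemma gaussTail_le_three (w : ℝ) (hw : 0 ≤ w) :
    exp (w ^ 2 / 2) * ∫ t in Set.Ioi w, exp (-(1/2) * t ^ 2) ≤ 3 := by
  have hIntg : Integrable (fun t : ℝ => exp (-(1/2) * t ^ 2)) := integrable_exp_neg_mul_sq (by norm_num)
  rw [← integral_const_mul]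
  have hIntg2 : Integrable (fun t : ℝ => exp (-(1/2) * (t - w) ^ 2)) := hIntg.comp_sub_right w
  calc ∫ t in Set.Ioi w, exp (w ^ 2 / 2) * exp (-(1/2) * t ^ 2)
      ≤ ∫ t in Set.Ioi w, exp (-(1/2) * (t - w) ^ 2) := by
        apply setIntegral_mono_on (hIntg.const_mul _).integrableOn hIntg2.integrableOn measurableSet_Ioi
        intro t ht
        rw [← exp_add]
        apply exp_le_exp.mpr
        have : w < t := ht
        nlinarith [mul_nonneg hw (sub_nonneg.mpr this.le)]
    _ ≤ ∫ t, exp (-(1/2) * (t - w) ^ 2) := setIntegral_le_integral hIntg2 (ae_of_all _ fun _ => (exp_pos _).le)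
    _ = ∫ t, exp (-(1/2) * t ^ 2) := integral_sub_right_eq_self (fun t : ℝ => exp (-(1/2) * t ^ 2)) w
    _ = sqrt (π / (1/2)) := integral_gaussian _
    _ ≤ 3 := by
        rw [sqrt_le_left (by norm_num)]
        have := pi_lt_four
        linarith

lemma gaussTail_mul_le_one (w : ℝ) (hw : 0 ≤ w) :
    w * (exp (w ^ 2 / 2) * ∫ t in Set.Ioi w, exp (-(1/2) * t ^ 2)) ≤ 1 := by
  rcases hw.eq_or_lt with rfl | hw'
  · simp
  have hIntg : Integrable (fun t : ℝ => exp (-(1/2) * t ^ 2)) := integrable_exp_neg_mul_sq (by norm_num)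
  have hIntg2 : IntegrableOn (fun t : ℝ => exp (w^2) * exp (-w * t)) (Set.Ioi w) :=
    (integrableOn_exp_mul_Ioi (by linarith) w).const_mul _
  rw [← integral_const_mul]
  have : ∫ t in Set.Ioi w, exp (w ^ 2 / 2) * exp (-(1/2) * t ^ 2) ≤ 1 / w := by
    calc
      _ ≤ ∫ t in Set.Ioi w, exp (w^2) * exp (-w * t) := by
        apply setIntegral_mono_on (hIntg.const_mul _).integrableOn hIntg2 measurableSet_Ioi
        intro t ht
        rw [← exp_add, ← exp_add]
        apply exp_le_exp.mpr
        nlinarith [sq_nonneg (t - w)]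
      _ = 1 / w := by
        rw [integral_const_mul, integral_exp_mul_Ioi (by linarith)]
        rw [neg_div_neg_eq, mul_div_assoc', ← exp_add]
        congr 1
        rw [exp_eq_one_iff]; ring
  calc _ ≤ w * (1 / w) := by gcongr
    _ = 1 := by field_simp

lemma stein_solution (H : ℝ → ℝ) (hc : Continuous H) (h0 : ∀ x, 0 ≤ H x) (h1 : ∀ x, H x ≤ 1) :
    ∃ f : ℝ → ℝ, (∀ w, HasDerivAt f (w * f w + (H w - ∫ x, H x ∂(gaussianReal 0 1))) w) ∧
      (∀ w, |f w| ≤ 3) ∧ (∀ w, |w * f w| ≤ 1) := by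
  set μ := ∫ x, H x ∂(gaussianReal 0 1) with hμ
  have hHint : Integrable H (gaussianReal 0 1) :=
    (integrable_const (1:ℝ)).mono' hc.aestronglyMeasurable
      (ae_of_all _ fun x => by rw [norm_eq_abs, abs_of_nonneg (h0 x)]; exact h1 x)
  have hμ0 : 0 ≤ μ := integral_nonneg h0
  have hμ1 : μ ≤ 1 := by
    calc μ ≤ ∫ x, (1:ℝ) ∂(gaussianReal 0 1) := integral_mono hHint (integrable_const _) h1
      _ = 1 := by simp
  have hE : Integrable (fun t : ℝ => exp (-(1/2) * t ^ 2)) := integrable_exp_neg_mul_sq (by norm_num)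
  set G : ℝ → ℝ := fun t => (H t - μ) * exp (-(1/2) * t ^ 2) with hG
  have hGc : Continuous G := by fun_prop
  have hGb : ∀ t, ‖G t‖ ≤ exp (-(1/2) * t ^ 2) := by
    intro t
    rw [hG, norm_eq_abs, abs_mul, abs_of_pos (exp_pos _)]
    have : |H t - μ| ≤ 1 := by
      rw [abs_le]; constructor <;> linarith [h0 t, h1 t]
    nlinarith [exp_pos (-(1/2) * t ^ 2)]
  have hGi : Integrable G := hE.mono' hGc.aestronglyMeasurable (ae_of_all _ hGb)
  have hGz : ∫ t, G t = 0 := by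
    have e : ∫ t, (H t - μ) ∂(gaussianReal 0 1) = 0 := by
      rw [integral_sub hHint (integrable_const _)]
      simp [hμ]
    rw [integral_gaussianReal_eq_integral_smul (by norm_num)] at e
    have : ∀ t, gaussianPDFReal 0 1 t • (H t - μ) = (√(2 * π))⁻¹ * G t := by
      intro t
      simp only [gaussianPDFReal, hG, smul_eq_mul]
      have : -(t - 0) ^ 2 / (2 * ((1 : NNReal) : ℝ)) = -(1/2) * t ^ 2 := by push_cast; ring
      rw [this]; simp only [NNReal.coe_one, mul_one]; ring
    simp_rw [this] at e
    rw [integral_const_mul] at e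
    have hp : (√(2 * π))⁻¹ ≠ 0 := by positivity
    exact (mul_eq_zero.mp e).resolve_left hp
  have hbound : ∀ w, |∫ t in Set.Iic w, G t| ≤ ∫ t in Set.Ioi |w|, exp (-(1/2) * t ^ 2) := by
    intro w
    rcases le_total 0 w with hw | hw
    · have : ∫ t in Set.Iic w, G t = - ∫ t in Set.Ioi w, G t := by
        have := setIntegral_compl (s := Set.Iic w) measurableSet_Iic hGi
        rw [Set.compl_Iic, hGz] at this
        linarith
      rw [this, abs_neg, abs_of_nonneg hw]
      exact norm_integral_le_of_norm_le hE.integrableOn (ae_of_all _ hGb)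
    · rw [abs_of_nonpos hw]
      calc _ ≤ ∫ t in Set.Iic w, exp (-(1/2) * t ^ 2) :=
            norm_integral_le_of_norm_le hE.integrableOn (ae_of_all _ hGb)
        _ = _ := by
            rw [← integral_comp_neg_Iic]
            simp
  refine ⟨fun w => exp (w ^ 2 / 2) * ∫ t in Set.Iic w, G t, ?_, ?_, ?_⟩
  · intro w
    have hd : HasDerivAt (fun w => ∫ t in Set.Iic w, G t) (G w) w := by
      have h2 : (fun w => ∫ t in Set.Iic w, G t) =
          fun w => (∫ t in Set.Iic 0, G t) + ∫ t in (0:ℝ)..w, G t := by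
        funext w
        rw [← intervalIntegral.integral_Iic_sub_Iic hGi.integrableOn hGi.integrableOn]
        ring
      rw [h2]
      exact (intervalIntegral.integral_hasDerivAt_right (hGc.intervalIntegrable _ _)
        (hGc.stronglyMeasurableAtFilter _ _) hGc.continuousAt).const_add _
    have he : HasDerivAt (fun w : ℝ => exp (w ^ 2 / 2)) (exp (w^2/2) * w) w := by
      have : HasDerivAt (fun w : ℝ => w ^ 2 / 2) w w := by
        have := (hasDerivAt_pow 2 w).div_const 2
        simpa using this
      exact this.exp
    refine (he.mul hd).congr_deriv ?_
    have : exp (w ^ 2 / 2) * G w = H w - μ := by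
      simp only [hG]
      rw [mul_comm, mul_assoc, ← exp_add]
      have : -(1/2) * w ^ 2 + w ^ 2 / 2 = 0 := by ring
      rw [this]; simp
    rw [this]; ring
  · intro w
    rw [abs_mul, abs_of_pos (exp_pos _)]
    calc _ ≤ exp (w ^ 2 / 2) * ∫ t in Set.Ioi |w|, exp (-(1/2) * t ^ 2) := by
          gcongr; exact hbound w
      _ ≤ 3 := by
          have := gaussTail_le_three |w| (abs_nonneg w)
          rwa [sq_abs] at this
  · intro w
    rw [abs_mul, abs_mul, abs_of_pos (exp_pos _)]
    calc _ ≤ |w| * (exp (w ^ 2 / 2) * ∫ t in Set.Ioi |w|, exp (-(1/2) * t ^ 2)) := by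
          gcongr; exact hbound w
      _ ≤ 1 := by
          have := gaussTail_mul_le_one |w| (abs_nonneg w)
          rwa [sq_abs] at this

end

section

/-- One step of symmetric random-walk averaging. -/
noncomputable def radM (φ : ℝ → ℝ) (x : ℝ) : ℝ := (φ (x + 1) + φ (x - 1)) / 2

/-- Expectation of `φ (S_n)` where `S_n` is a sum of `n` independent signs. -/
noncomputable def radE : ℕ → (ℝ → ℝ) → ℝ
  | 0, φ => φ 0
  | n + 1, φ => radE n (radM φ)

lemma radE_mono (n : ℕ) {φ ψ : ℝ → ℝ} (h : ∀ x, φ x ≤ ψ x) : radE n φ ≤ radE n ψ := by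
  induction n generalizing φ ψ with
  | zero => exact h 0
  | succ n ih =>
    apply ih
    intro x
    simp only [radM]
    linarith [h (x+1), h (x-1)]

lemma radE_add (n : ℕ) (φ ψ : ℝ → ℝ) : radE n (fun x => φ x + ψ x) = radE n φ + radE n ψ := by
  induction n generalizing φ ψ with
  | zero => rfl
  | succ n ih =>
    simp only [radE]
    rw [← ih]
    congr 1; funext x; simp only [radM]; ring

lemma radE_const_mul (n : ℕ) (c : ℝ) (φ : ℝ → ℝ) : radE n (fun x => c * φ x) = c * radE n φ := by
  induction n generalizing φ with
  | zero => rfl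
  | succ n ih =>
    simp only [radE]
    rw [← ih]
    congr 1; funext x; simp only [radM]; ring

lemma radE_sub (n : ℕ) (φ ψ : ℝ → ℝ) : radE n (fun x => φ x - ψ x) = radE n φ - radE n ψ := by
  have := radE_add n φ (fun x => (-1) * ψ x)
  rw [radE_const_mul] at this
  rw [sub_eq_add_neg, ← neg_one_mul, ← this]
  congr 1; funext x; ring

lemma radE_const (n : ℕ) (c : ℝ) : radE n (fun _ => c) = c := by
  induction n with
  | zero => rfl
  | succ n ih =>
    simp only [radE]
    rw [← ih]
    congr 1; funext x; simp only [radM, ih]; ring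

lemma radE_mul_id (n : ℕ) (f : ℝ → ℝ) :
    radE (n + 1) (fun x => x * f x) = (n + 1) * radE n (fun x => (f (x + 1) - f (x - 1)) / 2) := by
  induction n generalizing f with
  | zero => simp [radE, radM]; ring_nf
  | succ n ih =>
    have e : radM (fun x => x * f x) =
        fun x => x * radM f x + (f (x + 1) - f (x - 1)) / 2 := by
      funext x; simp only [radM]; ring
    rw [radE, e, radE_add, ih]
    have e2 : (fun x => (radM f (x + 1) - radM f (x - 1)) / 2) =
        radM (fun x => (f (x + 1) - f (x - 1)) / 2) := by
      funext x; simp only [radM]; ring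
    rw [e2]
    simp only [radE]
    push_cast; ring

lemma radE_sq (n : ℕ) : radE n (fun x => x * x) = n := by
  cases n with
  | zero => simp [radE]
  | succ n =>
    rw [radE_mul_id]
    have : (fun x : ℝ => (x + 1 - (x - 1)) / 2) = fun _ => 1 := by funext x; ring
    rw [this, radE_const]; push_cast; ring

lemma radE_abs_le (n : ℕ) : radE n (fun x => |x|) ≤ √((n : ℝ) + 1) := by
  set R := √((n : ℝ) + 1) with hR
  have hRp : 0 < R := by positivity
  have hR2 : R * R = n + 1 := mul_self_sqrt (by positivity)
  calc radE n (fun x => |x|) ≤ radE n (fun x => 1 / (2 * R) * (x * x) + R / 2) := by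
        apply radE_mono
        intro x
        have : 1 / (2 * R) * (x * x) + R / 2 - |x| = (|x| - R) ^ 2 / (2 * R) := by
          rw [← abs_mul_abs_self x]; field_simp; ring
        have h2 : 0 ≤ (|x| - R) ^ 2 / (2 * R) := by positivity
        linarith
    _ = 1 / (2 * R) * n + R / 2 := by
        rw [radE_add, radE_const_mul, radE_sq, radE_const]
    _ ≤ R := by
        have : (n : ℝ) = R * R - 1 := by linarith
        rw [this]
        have : 1 / (2 * R) * (R * R - 1) = R / 2 - 1 / (2 * R) := by field_simp
        rw [this]
        have : 0 < 1 / (2 * R) := by positivity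
        linarith

lemma stein_BE (n : ℕ) (H : ℝ → ℝ) (hc : Continuous H) (hm : Monotone H)
    (h0 : ∀ x, 0 ≤ H x) (h1 : ∀ x, H x ≤ 1) :
    radE n (fun s => H ((s - 1) / √((n : ℝ) + 1))) ≤
      (∫ x, H x ∂(gaussianReal 0 1)) + 14 / √((n : ℝ) + 1) ∧
    (∫ x, H x ∂(gaussianReal 0 1)) - 14 / √((n : ℝ) + 1) ≤
      radE n (fun s => H ((s + 1) / √((n : ℝ) + 1))) := by
  obtain ⟨f, hf, hf3, hwf⟩ := stein_solution H hc h0 h1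
  set μ := ∫ x, H x ∂(gaussianReal 0 1) with hμ
  have hHint : Integrable H (gaussianReal 0 1) :=
    (integrable_const (1:ℝ)).mono' hc.aestronglyMeasurable
      (ae_of_all _ fun x => by rw [norm_eq_abs, abs_of_nonneg (h0 x)]; exact h1 x)
  have hμ0 : 0 ≤ μ := integral_nonneg h0
  have hμ1 : μ ≤ 1 := by
    calc μ ≤ ∫ x, (1:ℝ) ∂(gaussianReal 0 1) := integral_mono hHint (integrable_const _) h1
      _ = 1 := by simp
  set R := √((n : ℝ) + 1) with hR
  have hRp : 0 < R := by positivity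
  have hR2 : R * R = n + 1 := mul_self_sqrt (by positivity)
  have hR1 : 1 ≤ R := by nlinarith [Nat.cast_nonneg (α := ℝ) n]
  -- the derivative bound
  have hf' : ∀ w, |w * f w + (H w - μ)| ≤ 2 := by
    intro w
    have := abs_le.mp (hwf w)
    rw [abs_le]; constructor <;> linarith [h0 w, h1 w]
  set ψ : ℝ → ℝ := fun w => w * f w with hψ
  have hψd : ∀ w, HasDerivAt ψ (f w + w * (w * f w + (H w - μ))) w := by
    intro w
    refine ((hasDerivAt_id w).mul (hf w)).congr_deriv ?_
    simp
  have hψL : ∀ s x y : ℝ, s - 1 ≤ x → x ≤ s + 1 → s - 1 ≤ y → y ≤ s + 1 →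
      ψ (x / R) - ψ (y / R) ≤ (3 + 2 * ((|s| + 1) / R)) * (2 / R) := by
    intro s x y hx1 hx2 hy1 hy2
    have key := Convex.norm_image_sub_le_of_norm_hasDerivWithin_le (f := ψ)
      (f' := fun w => f w + w * (w * f w + (H w - μ))) (s := Set.Icc ((s-1)/R) ((s+1)/R))
      (C := 3 + 2 * ((|s| + 1) / R)) (x := y / R) (y := x / R)
      (fun w _ => (hψd w).hasDerivWithinAt) (by
        intro w hw
        rw [norm_eq_abs]
        have hwabs : |w| ≤ (|s| + 1) / R := by
          have a1 : (s + 1) / R ≤ (|s| + 1) / R := by gcongr; exact le_abs_self s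
          have a2 : -((|s| + 1) / R) ≤ (s - 1) / R := by
            rw [← neg_div]; gcongr; linarith [neg_abs_le s]
          rw [abs_le]; exact ⟨a2.trans hw.1, hw.2.trans a1⟩
        calc _ ≤ |f w| + |w| * |w * f w + (H w - μ)| := by
              rw [← abs_mul]; exact abs_add_le _ _
          _ ≤ 3 + ((|s| + 1) / R) * 2 := by
              gcongr
              · exact hf3 w
              · exact hf' w
          _ = _ := by ring)
      (convex_Icc _ _)
      ⟨by gcongr, by gcongr⟩ ⟨by gcongr, by gcongr⟩
    have hxy : ‖x / R - y / R‖ ≤ 2 / R := by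
      rw [← sub_div, norm_eq_abs, abs_div, abs_of_pos hRp]
      gcongr
      rw [abs_le]; constructor <;> linarith
    calc _ ≤ ‖ψ (x / R) - ψ (y / R)‖ := le_abs_self _
      _ ≤ _ := key
      _ ≤ _ := by gcongr
  have hmvt : ∀ s : ℝ, ∃ θ, (s - 1 ≤ θ ∧ θ ≤ s + 1) ∧
      f ((s + 1) / R) - f ((s - 1) / R) = 2 * ((ψ (θ / R) + (H (θ / R) - μ)) / R) := by
    intro s
    have hFd : ∀ x, HasDerivAt (fun x => f (x / R)) ((ψ (x / R) + (H (x / R) - μ)) / R) x := by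
      intro x
      have := (hf (x / R)).comp x ((hasDerivAt_id x).div_const R)
      refine this.congr_deriv ?_
      simp only [hψ]; ring
    obtain ⟨c, hc1, hc2⟩ := exists_hasDerivAt_eq_slope (fun x => f (x / R)) _
      (show s - 1 < s + 1 by linarith)
      (fun x _ => (hFd x).continuousAt.continuousWithinAt) (fun x _ => hFd x)
    refine ⟨c, ⟨hc1.1.le, hc1.2.le⟩, ?_⟩
    rw [hc2]
    have : s + 1 - (s - 1) = 2 := by ring
    rw [this]; ring
  choose θ hθ hθ2 using hmvt
  have hid := radE_mul_id n (fun x => f (x / R))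
  simp only [hθ2] at hid
  have hid2 : radE n (fun s => (ψ ((s + 1) / R) + ψ ((s - 1) / R)) / 2) =
      radE n (fun s => ψ (θ s / R) + (H (θ s / R) - μ)) := by
    have e1 : radE (n + 1) (fun x => x * f (x / R)) =
        R * radE n (fun s => (ψ ((s + 1) / R) + ψ ((s - 1) / R)) / 2) := by
      rw [← radE_const_mul, radE]
      congr 1; funext s; simp only [radM, hψ]; field_simp
    have e2 : radE n (fun s => 2 * ((ψ (θ s / R) + (H (θ s / R) - μ)) / R) / 2) =
        (1 / R) * radE n (fun s => ψ (θ s / R) + (H (θ s / R) - μ)) := by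
      rw [← radE_const_mul]
      congr 1; funext s; ring
    rw [e1, e2, ← hR2] at hid
    have : R * R * (1 / R * radE n (fun s => ψ (θ s / R) + (H (θ s / R) - μ))) =
      R * radE n (fun s => ψ (θ s / R) + (H (θ s / R) - μ)) := by field_simp
    rw [this] at hid
    exact mul_left_cancel₀ hRp.ne' hid
  have hbd : radE n (fun s => (3 + 2 * ((|s| + 1) / R)) * (2 / R)) ≤ 14 / R := by
    have e : (fun s : ℝ => (3 + 2 * ((|s| + 1) / R)) * (2 / R)) =
        fun s => (4 / (R * R)) * |s| + (6 / R + 4 / (R * R)) := by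
      funext s; field_simp; ring
    rw [e, radE_add, radE_const_mul, radE_const]
    have h := radE_abs_le n
    have h4 : 0 < 4 / (R * R) := by positivity
    have h5 : 4 / (R * R) ≤ 4 / R := by
      apply div_le_div_of_nonneg_left <;> nlinarith
    calc _ ≤ 4 / (R * R) * R + (6 / R + 4 / R) := by gcongr
      _ = 14 / R := by field_simp; ring
  constructor
  · have : radE n (fun s => H ((s - 1) / R)) ≤ radE n (fun s => μ +
        (((ψ (θ s / R) + (H (θ s / R) - μ)) - (ψ ((s + 1) / R) + ψ ((s - 1) / R)) / 2) +
        (3 + 2 * ((|s| + 1) / R)) * (2 / R))) := by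
      apply radE_mono
      intro s
      have a1 := hψL s (s+1) (θ s) (by linarith) (by linarith) (hθ s).1 (hθ s).2
      have a2 := hψL s (s-1) (θ s) (by linarith) (by linarith) (hθ s).1 (hθ s).2
      have a3 : H ((s - 1) / R) ≤ H (θ s / R) := hm (by gcongr; exact (hθ s).1)
      linarith
    rw [radE_add, radE_add, radE_sub, radE_const, hid2] at this
    linarith
  · have : radE n (fun s => μ +
        (((ψ (θ s / R) + (H (θ s / R) - μ)) - (ψ ((s + 1) / R) + ψ ((s - 1) / R)) / 2) -
        (3 + 2 * ((|s| + 1) / R)) * (2 / R))) ≤ radE n (fun s => H ((s + 1) / R)) := by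
      apply radE_mono
      intro s
      have a1 := hψL s (θ s) (s+1) (hθ s).1 (hθ s).2 (by linarith) (by linarith)
      have a2 := hψL s (θ s) (s-1) (hθ s).1 (hθ s).2 (by linarith) (by linarith)
      have a3 : H (θ s / R) ≤ H ((s + 1) / R) := hm (by gcongr; exact (hθ s).2)
      linarith
    rw [radE_add, radE_sub, radE_sub, radE_const, hid2] at this
    linarith

end

section

/-- Standard normal distribution function. -/
noncomputable def stdPhi (x : ℝ) : ℝ := cdf (gaussianReal 0 1) x

lemma stdPhi_mono : Monotone stdPhi := fun _ _ h => monotone_cdf _ h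

lemma stdPDF_eq (t : ℝ) : gaussianPDFReal 0 1 t = (√(2 * π))⁻¹ * exp (-(1/2) * t ^ 2) := by
  simp only [gaussianPDFReal]
  have : -(t - 0) ^ 2 / (2 * ((1 : NNReal) : ℝ)) = -(1/2) * t ^ 2 := by push_cast; ring
  rw [this]; simp only [NNReal.coe_one, mul_one]

lemma stdPDF_le_one (t : ℝ) : gaussianPDFReal 0 1 t ≤ 1 := by
  rw [stdPDF_eq]
  have h1 : (√(2 * π))⁻¹ ≤ 1 := by
    apply inv_le_one_of_one_le₀
    rw [one_le_sqrt]
    have := pi_gt_three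
    linarith
  have h2 : exp (-(1/2) * t ^ 2) ≤ 1 := by
    rw [exp_le_one_iff]; nlinarith [sq_nonneg t]
  have h3 := exp_pos (-(1/2) * t ^ 2)
  have h4 : 0 ≤ (√(2 * π))⁻¹ := by positivity
  nlinarith

lemma stdPDF_ge {t R : ℝ} (h : |t| ≤ R) : gaussianPDFReal 0 1 R ≤ gaussianPDFReal 0 1 t := by
  rw [stdPDF_eq, stdPDF_eq]
  have : t ^ 2 ≤ R ^ 2 := by
    rw [← sq_abs]; gcongr
  gcongr _ * exp ?_
  linarith

lemma stdPhi_sub {x y : ℝ} (h : x ≤ y) :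
    stdPhi y - stdPhi x = ∫ t in Set.Ioc x y, gaussianPDFReal 0 1 t := by
  have h1 : ∀ z, stdPhi z = ∫ t in Set.Iic z, gaussianPDFReal 0 1 t := by
    intro z
    rw [stdPhi, cdf_eq_real, measureReal_def, gaussianReal_apply_eq_integral _ (by norm_num)]
    rw [ENNReal.toReal_ofReal]
    exact integral_nonneg fun _ => gaussianPDFReal_nonneg _ _ _
  have hi := integrable_gaussianPDFReal 0 1
  rw [h1, h1, intervalIntegral.integral_Iic_sub_Iic hi.integrableOn hi.integrableOn,
    intervalIntegral.integral_of_le h]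

lemma stdPhi_sub_le {x y : ℝ} (h : x ≤ y) : stdPhi y - stdPhi x ≤ y - x := by
  rw [stdPhi_sub h]
  calc _ ≤ ∫ t in Set.Ioc x y, (1:ℝ) := by
        apply setIntegral_mono_on (integrable_gaussianPDFReal 0 1).integrableOn
        · simp
        · exact measurableSet_Ioc
        · intro t _; exact stdPDF_le_one t
    _ = y - x := by simp [h]

lemma stdPhi_sub_ge {x y R : ℝ} (h : x ≤ y) (hx : -R ≤ x) (hy : y ≤ R) :
    gaussianPDFReal 0 1 R * (y - x) ≤ stdPhi y - stdPhi x := by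
  rw [stdPhi_sub h]
  calc _ = ∫ t in Set.Ioc x y, gaussianPDFReal 0 1 R := by simp [h]; ring
    _ ≤ _ := by
        apply setIntegral_mono_on _ (integrable_gaussianPDFReal 0 1).integrableOn
        · exact measurableSet_Ioc
        · intro t ht; apply stdPDF_ge; rw [abs_le]; exact ⟨by linarith [ht.1], by linarith [ht.2]⟩
        · simp

lemma gaussian_halfline {u c : ℝ} (hc : 0 < c) :
    (gaussianReal 0 1).real {z | 0 < u + c * z} = stdPhi (u / c) := by
  have hmap := gaussianReal_map_neg (μ := 0) (v := 1)
  rw [neg_zero] at hmap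
  have h1 : (gaussianReal 0 1).real {z | 0 < u + c * z} = (gaussianReal 0 1).real (Set.Iio (u / c)) := by
    conv_lhs => rw [← hmap]
    rw [map_measureReal_apply measurable_neg (by measurability)]
    congr 1
    ext z
    simp only [Set.mem_preimage, Set.mem_ofPred_eq, Set.mem_Iio]
    rw [lt_div_iff₀ hc]
    constructor <;> intro h <;> linarith
  have : NullSingletonClass (gaussianReal 0 1) := nullSingletonClass_gaussianReal (by norm_num)
  rw [h1, stdPhi, cdf_eq_real]
  exact measureReal_congr Iio_ae_eq_Iic

/-- Continuous sigmoid functions with exponential tails. -/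
structure Sigmoid (K : ℝ) (h : ℝ → ℝ) : Prop where
  cont : Continuous h
  mono : Monotone h
  nonneg : ∀ x, 0 ≤ h x
  le_one : ∀ x, h x ≤ 1
  left : ∀ y, y ≤ 0 → h y ≤ K * exp y
  right : ∀ y, 0 ≤ y → 1 - h y ≤ K * exp (-y)

lemma integral_exp_neg_abs' : ∫ x : ℝ, exp (-|x|) = 2 := by
  rw [integral_comp_abs (f := fun x => exp (-x)), integral_exp_neg_Ioi_zero]; norm_num

lemma integrable_exp_neg_abs' : Integrable (fun x : ℝ => exp (-|x|)) := by
  by_contra h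
  have := integral_undef h
  rw [integral_exp_neg_abs'] at this
  norm_num at this

lemma Sigmoid.gauss {K : ℝ} {h : ℝ → ℝ} (hh : Sigmoid K h) (hK : 0 ≤ K) (u : ℝ) {c : ℝ} (hc : 0 < c) :
    |(∫ z, h (u + c * z) ∂(gaussianReal 0 1)) - stdPhi (u / c)| ≤ 2 * K / c := by
  have hcont := hh.cont
  have hi1 : Integrable (fun z => h (u + c * z)) (gaussianReal 0 1) :=
    (integrable_const (1:ℝ)).mono' (by fun_prop)
      (ae_of_all _ fun x => by rw [norm_eq_abs, abs_of_nonneg (hh.nonneg _)]; exact hh.le_one _)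
  have hms : MeasurableSet {z : ℝ | 0 < u + c * z} := measurableSet_lt (by fun_prop) (by fun_prop)
  have hi2 : Integrable ({z : ℝ | 0 < u + c * z}.indicator (fun _ => (1:ℝ))) (gaussianReal 0 1) :=
    (integrable_const 1).indicator hms
  rw [← gaussian_halfline hc, ← integral_indicator_one hms]
  have e : ({z : ℝ | 0 < u + c * z}.indicator (1 : ℝ → ℝ)) = {z : ℝ | 0 < u + c * z}.indicator (fun _ => (1:ℝ)) := rfl
  rw [e, ← integral_sub hi1 hi2]
  have hexpi : Integrable (fun z : ℝ => K * exp (-|u + c * z|)) := by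
    have := (integrable_exp_neg_abs'.comp_add_left u).comp_mul_left' hc.ne'
    exact this.const_mul K
  have hpt : ∀ z, |h (u + c * z) - {z : ℝ | 0 < u + c * z}.indicator (fun _ => (1:ℝ)) z| ≤
      K * exp (-|u + c * z|) := by
    intro z
    by_cases hz : 0 < u + c * z
    · rw [Set.indicator_of_mem (by exact hz), abs_of_pos hz, abs_sub_comm,
        abs_of_nonneg (by linarith [hh.le_one (u + c * z)])]
      exact hh.right _ hz.le
    · rw [Set.indicator_of_notMem (by exact hz), sub_zero, abs_of_nonneg (hh.nonneg _)]
      push Not at hz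
      rw [abs_of_nonpos hz, neg_neg]
      exact hh.left _ hz
  rw [integral_gaussianReal_eq_integral_smul (by norm_num)]
  calc _ ≤ ∫ z, K * exp (-|u + c * z|) := by
        rw [← norm_eq_abs]
        apply norm_integral_le_of_norm_le hexpi
        refine ae_of_all _ fun z => ?_
        rw [norm_smul, norm_eq_abs, norm_eq_abs, abs_of_nonneg (gaussianPDFReal_nonneg _ _ _)]
        have := hpt z
        have h1 := stdPDF_le_one z
        have h2 := gaussianPDFReal_nonneg 0 1 z
        have h3 := abs_nonneg (h (u + c * z) - {z : ℝ | 0 < u + c * z}.indicator (fun _ => (1:ℝ)) z)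
        nlinarith
    _ = 2 * K / c := by
        rw [integral_const_mul]
        have := Measure.integral_comp_mul_left (fun x => exp (-|u + x|)) c
        rw [this, integral_add_left_eq_self (fun x => exp (-|x|)) u, integral_exp_neg_abs',
          abs_of_pos (inv_pos.mpr hc), smul_eq_mul]
        field_simp

lemma Sigmoid.BE {K : ℝ} {h : ℝ → ℝ} (hh : Sigmoid K h) (hK : 0 ≤ K) {a : ℝ} (ha : 0 < a) (u : ℝ)
    (n : ℕ) :
    |radE n (fun s => h (u + a * s)) - stdPhi (u / (a * √((n : ℝ) + 1)))| ≤
      (15 + 2 * K / a) / √((n : ℝ) + 1) := by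
  set R := √((n : ℝ) + 1) with hR
  have hRp : 0 < R := by positivity
  have hcont := hh.cont
  have key : ∀ b : ℝ, Continuous (fun x => h (b + a * R * x)) ∧ Monotone (fun x => h (b + a * R * x)) := by
    intro b
    refine ⟨by fun_prop, fun x y hxy => hh.mono ?_⟩
    gcongr
  have k1 := (stein_BE n (fun x => h ((u + a) + a * R * x)) (key _).1 (key _).2 (fun _ => hh.nonneg _)
    (fun _ => hh.le_one _)).1
  have k2 := (stein_BE n (fun x => h ((u - a) + a * R * x)) (key _).1 (key _).2 (fun _ => hh.nonneg _)
    (fun _ => hh.le_one _)).2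
  rw [← hR] at k1 k2
  have e1 : ∀ s : ℝ, u + a + a * R * ((s - 1) / R) = u + a * s := by intro s; field_simp; ring
  have e2 : ∀ s : ℝ, u - a + a * R * ((s + 1) / R) = u + a * s := by intro s; field_simp; ring
  simp only [e1] at k1
  simp only [e2] at k2
  have haR : 0 < a * R := by positivity
  have g1 := abs_le.mp (hh.gauss hK (u + a) haR)
  have g2 := abs_le.mp (hh.gauss hK (u - a) haR)
  have p1 := stdPhi_sub_le (x := u / (a * R)) (y := (u + a) / (a * R)) (by gcongr; linarith)
  have p2 := stdPhi_sub_le (x := (u - a) / (a * R)) (y := u / (a * R)) (by gcongr; linarith)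
  have q1 : (u + a) / (a * R) - u / (a * R) = 1 / R := by field_simp; ring
  have q2 : u / (a * R) - (u - a) / (a * R) = 1 / R := by field_simp; ring
  have q3 : (15 + 2 * K / a) / R = 14 / R + 1 / R + 2 * K / (a * R) := by field_simp; ring
  rw [q1] at p1
  rw [q2] at p2
  rw [q3, abs_le]
  constructor <;> linarith [g1.1, g1.2, g2.1, g2.2]

end

section

/-- Probability that a Poisson variable of mean `x` is at least two. -/
noncomputable def gP (x : ℝ) : ℝ := 1 - (1 + x) * exp (-x)

lemma gP_continuous : Continuous gP := by unfold gP; fun_prop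

lemma gP_strictMono : StrictMonoOn gP (Set.Ici 0) := by
  apply strictMonoOn_of_deriv_pos (convex_Ici 0) gP_continuous.continuousOn
  intro x hx
  rw [interior_Ici] at hx
  have hd : HasDerivAt gP (x * exp (-x)) x := by
    have h1 : HasDerivAt (fun x : ℝ => exp (-x)) (-exp (-x)) x := by
      simpa using (hasDerivAt_neg x).exp
    have h2 : HasDerivAt (fun x : ℝ => 1 + x) 1 x := (hasDerivAt_id x).const_add 1
    refine ((h2.mul h1).const_sub 1).congr_deriv ?_
    ring
  rw [hd.deriv]
  exact mul_pos hx (exp_pos _)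

lemma gP_mono {x y : ℝ} (hx : 0 ≤ x) (hxy : x ≤ y) : gP x ≤ gP y :=
  gP_strictMono.monotoneOn hx (hx.trans hxy) hxy

lemma gP_nonneg {x : ℝ} (hx : 0 ≤ x) : 0 ≤ gP x := by
  have := gP_mono le_rfl hx
  simpa [gP] using this

lemma gP_le_one {x : ℝ} (hx : 0 ≤ x) : gP x ≤ 1 := by
  have : 0 ≤ (1 + x) * exp (-x) := by positivity
  unfold gP; linarith

lemma gP_le_self {x : ℝ} (hx : 0 ≤ x) : gP x ≤ x := by
  rcases le_total x 1 with h | h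
  · have := add_one_le_exp (-x)
    unfold gP
    nlinarith
  · exact (gP_le_one hx).trans h

lemma one_sub_gP_le {x : ℝ} (hx : 0 < x) : 1 - gP x ≤ 2 / x := by
  have h := quadratic_le_exp_of_nonneg hx.le
  have : 1 - gP x = (1 + x) / exp x := by unfold gP; rw [exp_neg]; field_simp; ring
  rw [this, div_le_div_iff₀ (exp_pos _) hx]
  nlinarith

lemma gP_tendsto : Tendsto gP atTop (nhds 1) := by
  have h1 : Tendsto (fun x : ℝ => 1 - 2 / x) atTop (nhds 1) := by
    have := (tendsto_const_nhds (x := (1:ℝ)) (f := atTop)).sub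
      ((tendsto_const_nhds (x := (2:ℝ))).div_atTop (tendsto_id (α := ℝ) (x := atTop)))
    simpa using this
  refine tendsto_of_tendsto_of_tendsto_of_le_of_le' h1 tendsto_const_nhds ?_ ?_
  · filter_upwards [eventually_gt_atTop 0] with x hx
    linarith [one_sub_gP_le hx]
  · filter_upwards [eventually_gt_atTop 0] with x hx using gP_le_one hx.le

lemma gP_sigmoid : Sigmoid 2 (fun y => gP (exp y)) where
  cont := gP_continuous.comp continuous_exp
  mono := fun x y h => gP_mono (exp_pos _).le (exp_le_exp.mpr h)
  nonneg := fun x => gP_nonneg (exp_pos _).le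
  le_one := fun x => gP_le_one (exp_pos _).le
  left := fun y _ => (gP_le_self (exp_pos _).le).trans (by linarith [exp_pos y])
  right := fun y _ => (one_sub_gP_le (exp_pos _)).trans (by rw [exp_neg]; exact le_of_eq (div_eq_mul_inv _ _))

lemma clamp_sigmoid : Sigmoid 3 (fun y => max 0 (min 1 y)) where
  cont := by fun_prop
  mono := fun x y h => by
    dsimp only
    gcongr
  nonneg := fun x => le_max_left _ _
  le_one := fun x => max_le zero_le_one (min_le_left _ _)
  left := fun y hy => by
    rw [max_eq_left ((min_le_right _ _).trans hy)]; positivity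
  right := fun y hy => by
    rcases le_total y 1 with h | h
    · rw [min_eq_right h, max_eq_right hy]
      have h1 : exp y ≤ 3 := (exp_le_exp.mpr h).trans (by linarith [exp_one_lt_d9])
      have h2 : 1 ≤ 3 * exp (-y) := by
        rw [exp_neg, ← div_eq_mul_inv, one_le_div (exp_pos _)]; exact h1
      linarith
    · rw [min_eq_left h, max_eq_right zero_le_one]
      have := exp_pos (-y)
      linarith

/-- The mean of the filled fraction at level `k`, as a function of the intensity. -/
noncomputable def mfill (p : ℝ) : ℕ → ℝ → ℝ
  | 0, x => gP x
  | k + 1, x => (mfill p k (p * x) + mfill p k ((1 - p) * x)) / 2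

section
variable {p : ℝ}

lemma mfill_succ_le (hp : 0 < p) (hp1 : p < 1) (k : ℕ) {x : ℝ} (hx : 0 ≤ x) :
    mfill p (k + 1) x ≤ mfill p k x := by
  induction k generalizing x with
  | zero =>
    simp only [mfill]
    have h1 := gP_mono (x := p * x) (y := x) (by positivity) (by nlinarith)
    have h2 := gP_mono (x := (1 - p) * x) (y := x) (mul_nonneg (by linarith) hx) (by nlinarith)
    linarith
  | succ k ih =>
    have h1 := ih (x := p * x) (by positivity)
    have h2 := ih (x := (1 - p) * x) (mul_nonneg (by linarith) hx)
    change (mfill p (k + 1) (p * x) + mfill p (k + 1) ((1 - p) * x)) / 2 ≤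
      (mfill p k (p * x) + mfill p k ((1 - p) * x)) / 2
    linarith

lemma mfill_antitone (hp : 0 < p) (hp1 : p < 1) {x : ℝ} (hx : 0 ≤ x) :
    Antitone (fun k => mfill p k x) :=
  antitone_nat_of_succ_le fun k => mfill_succ_le hp hp1 k hx

lemma mfill_le (hp : 0 < p) (hp1 : p < 1) (k : ℕ) {x : ℝ} (hx : 0 ≤ x) :
    mfill p k x ≤ x / 2 ^ k := by
  induction k generalizing x with
  | zero => simpa [mfill] using gP_le_self hx
  | succ k ih =>
    have h1 := ih (x := p * x) (by positivity)
    have h2 := ih (x := (1 - p) * x) (mul_nonneg (by linarith) hx)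
    rw [mfill]
    calc _ ≤ (p * x / 2 ^ k + (1 - p) * x / 2 ^ k) / 2 := by linarith
      _ = _ := by rw [pow_succ]; field_simp; ring

lemma mfill_tendsto (hp : 0 < p) (hp1 : p < 1) (k : ℕ) : Tendsto (mfill p k) atTop (nhds 1) := by
  induction k with
  | zero => exact gP_tendsto
  | succ k ih =>
    have h1 := ih.comp (tendsto_id.const_mul_atTop hp)
    have h2 := ih.comp (tendsto_id.const_mul_atTop (show 0 < 1 - p by linarith))
    have := (h1.add h2).div_const 2
    norm_num at this
    exact this

lemma mfill_radE {a β : ℝ}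
    (hab : (p = exp (a - β) ∧ 1 - p = exp (-a - β)) ∨ (p = exp (-a - β) ∧ 1 - p = exp (a - β)))
    (k : ℕ) (u : ℝ) :
    mfill p k (exp u) = radE k (fun s => gP (exp (u - k * β + a * s))) := by
  have step : ∀ k u, mfill p (k + 1) (exp u) =
      (mfill p k (exp (u + a - β)) + mfill p k (exp (u - a - β))) / 2 := by
    intro k u
    rw [mfill]
    rcases hab with ⟨h1, h2⟩ | ⟨h1, h2⟩
    · have e1 : p * exp u = exp (u + a - β) := by rw [h1, ← exp_add]; congr 1; ring
      have e2 : (1 - p) * exp u = exp (u - a - β) := by rw [h2, ← exp_add]; congr 1; ring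
      rw [e1, e2]
    · have e1 : p * exp u = exp (u - a - β) := by rw [h1, ← exp_add]; congr 1; ring
      have e2 : (1 - p) * exp u = exp (u + a - β) := by rw [h2, ← exp_add]; congr 1; ring
      rw [e1, e2, add_comm]
  induction k generalizing u with
  | zero => simp [mfill, radE]
  | succ k ih =>
    rw [step, ih, ih, ← radE_add, div_eq_inv_mul, ← radE_const_mul, radE]
    congr 1; funext s
    simp only [radM]
    rw [div_eq_inv_mul]
    push_cast
    have e1 : u + a - β - k * β + a * s = u - (k + 1) * β + a * (s + 1) := by ring
    have e2 : u - a - β - k * β + a * s = u - (k + 1) * β + a * (s - 1) := by ring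
    rw [e1, e2]

end

end

section

section
variable {p : ℝ}

lemma mfill_BE {a β : ℝ} (ha : 0 < a)
    (hab : (p = exp (a - β) ∧ 1 - p = exp (-a - β)) ∨ (p = exp (-a - β) ∧ 1 - p = exp (a - β)))
    (k : ℕ) (u : ℝ) :
    |mfill p k (exp u) - stdPhi ((u - k * β) / (a * √((k : ℝ) + 1)))| ≤
      (15 + 4 / a) / √((k : ℝ) + 1) := by
  rw [mfill_radE hab]
  have := gP_sigmoid.BE (by norm_num) ha (u - k * β) k
  norm_num at this ⊢
  exact this

lemma exists_sqrt_ge (M : ℝ) : ∃ k0 : ℕ, ∀ k : ℕ, k0 ≤ k → M ≤ √((k : ℝ) + 1) := by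
  obtain ⟨k0, hk0⟩ := exists_nat_ge (M ^ 2)
  refine ⟨k0, fun k hk => ?_⟩
  apply le_sqrt_of_sq_le
  have : (k0 : ℝ) ≤ k := by exact_mod_cast hk
  linarith

lemma mfill_gap {a β : ℝ} (hp : 0 < p) (hp1 : p < 1) (ha : 0 < a)
    (hab : (p = exp (a - β) ∧ 1 - p = exp (-a - β)) ∨ (p = exp (-a - β) ∧ 1 - p = exp (a - β)))
    (R : ℝ) (hR : 0 ≤ R) :
    ∃ c > 0, ∃ k0 : ℕ, ∀ k : ℕ, k0 ≤ k → ∀ u : ℝ, |u - k * β| ≤ R * √((k : ℝ) + 1) →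
      c / √((k : ℝ) + 1) ≤ mfill p k (exp u) - mfill p (k + 1) (exp u) := by
  have hq1 : a - β < 0 := by
    rcases hab with ⟨h1, h2⟩ | ⟨h1, h2⟩
    · rw [← exp_lt_one_iff]; linarith
    · rw [← exp_lt_one_iff]; linarith
  have hq2 : -a - β < 0 := by linarith
  set d : ℝ → ℝ := fun y => gP (exp y) - (gP (exp (y + (a - β))) + gP (exp (y + (-a - β)))) / 2 with hd
  have hdc : Continuous d := by
    have := gP_continuous
    fun_prop
  have hdpos : ∀ y, 0 < d y := by
    intro y
    have h1 := gP_strictMono (a := exp (y + (a - β))) (b := exp y) (exp_pos _).le (exp_pos _).le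
      (exp_lt_exp.mpr (by linarith))
    have h2 := gP_strictMono (a := exp (y + (-a - β))) (b := exp y) (exp_pos _).le (exp_pos _).le
      (exp_lt_exp.mpr (by linarith))
    simp only [hd]; linarith
  set B := 15 + 2 * 3 / a with hB
  have hBp : 0 < B := by positivity
  set P := gaussianPDFReal 0 1 (R / a + 1) with hP
  have hPp : 0 < P := gaussianPDFReal_pos _ _ _ (by norm_num)
  set L := (2 * B + 1) * a / P with hL
  have hLp : 0 < L := by positivity
  obtain ⟨y0, hy0, hmin⟩ := (isCompact_Icc (a := -L) (b := 1)).exists_isMinOn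
    ⟨0, by constructor <;> linarith⟩ hdc.continuousOn
  set c0 := d y0 with hc0
  have hc0p : 0 < c0 := hdpos y0
  obtain ⟨k0, hk0⟩ := exists_sqrt_ge (L / a)
  refine ⟨c0, hc0p, k0, fun k hk u hu => ?_⟩
  set N := √((k : ℝ) + 1) with hN
  have hNp : 0 < N := by positivity
  have hLN := hk0 k hk
  rw [← hN, div_le_iff₀ ha] at hLN
  set cl : ℝ → ℝ := fun y => max 0 (min 1 y) with hcl
  set v := u - k * β with hv
  have hpt : ∀ y, c0 * (cl (y + L) - cl y) ≤ d y := by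
    intro y
    rcases lt_or_ge y (-L) with h | h
    · have e1 : cl (y + L) = 0 := by
        simp only [hcl]; exact max_eq_left ((min_le_right _ _).trans (by linarith))
      have e2 : cl y = 0 := by
        simp only [hcl]; exact max_eq_left ((min_le_right _ _).trans (by linarith))
      rw [e1, e2]; simpa using (hdpos y).le
    rcases le_or_gt y 1 with h' | h'
    · have h1 : c0 ≤ d y := hmin ⟨h, h'⟩
      have h2 : cl (y + L) ≤ 1 := clamp_sigmoid.le_one _
      have h3 : 0 ≤ cl y := clamp_sigmoid.nonneg _
      nlinarith
    · have e1 : cl (y + L) = 1 := by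
        simp only [hcl]; rw [min_eq_left (by linarith), max_eq_right zero_le_one]
      have e2 : cl y = 1 := by
        simp only [hcl]; rw [min_eq_left (by linarith), max_eq_right zero_le_one]
      rw [e1, e2]; simpa using (hdpos y).le
  have hgap : mfill p k (exp u) - mfill p (k + 1) (exp u) = radE k (fun s => d (v + a * s)) := by
    rw [mfill_radE hab, mfill_radE hab, radE, ← radE_sub]
    congr 1; funext s
    simp only [radM, hd]
    push_cast
    have e1 : u - (k + 1) * β + a * (s + 1) = v + a * s + (a - β) := by rw [hv]; ring
    have e2 : u - (k + 1) * β + a * (s - 1) = v + a * s + (-a - β) := by rw [hv]; ring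
    rw [e1, e2]
  have h1 : c0 * (radE k (fun s => cl (v + L + a * s)) - radE k (fun s => cl (v + a * s))) ≤
      radE k (fun s => d (v + a * s)) := by
    rw [← radE_sub, ← radE_const_mul]
    apply radE_mono
    intro s
    have := hpt (v + a * s)
    have e : v + a * s + L = v + L + a * s := by ring
    rwa [e] at this
  have b1 := abs_le.mp (clamp_sigmoid.BE (by norm_num) ha (v + L) k)
  have b2 := abs_le.mp (clamp_sigmoid.BE (by norm_num) ha v k)
  rw [← hN, ← hB] at b1 b2
  have haN : 0 < a * N := by positivity
  have hu' := abs_le.mp hu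
  have p1 := stdPhi_sub_ge (x := v / (a * N)) (y := (v + L) / (a * N)) (R := R / a + 1)
    (by gcongr; linarith)
    (by
      rw [le_div_iff₀ haN]
      have : -(R / a + 1) * (a * N) = -(R * N) - a * N := by field_simp; ring
      rw [this]; linarith [hu'.1])
    (by
      rw [div_le_iff₀ haN]
      have : (R / a + 1) * (a * N) = (R * N) + a * N := by field_simp
      rw [this]; linarith [hu'.2])
  rw [← hP] at p1
  have e : P * ((v + L) / (a * N) - v / (a * N)) = (2 * B + 1) / N := by
    rw [hL]; field_simp; ring
  rw [e] at p1
  have e' : (2 * B + 1) / N = 2 * (B / N) + 1 / N := by ring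
  rw [e'] at p1
  rw [hgap]
  refine le_trans ?_ h1
  rw [div_eq_mul_one_div]
  apply mul_le_mul_of_nonneg_left _ hc0p.le
  linarith [b1.1, b2.2]

lemma mfill_loc {a β α xα : ℝ} (ha : 0 < a)
    (hab : (p = exp (a - β) ∧ 1 - p = exp (-a - β)) ∨ (p = exp (-a - β) ∧ 1 - p = exp (a - β)))
    (hx : stdPhi xα = α) :
    ∃ C > 0, ∃ k0 : ℕ, ∀ k : ℕ, k0 ≤ k → ∀ u : ℝ,
      (α ≤ mfill p k (exp u) → a * xα * √((k : ℝ) + 1) - C ≤ u - k * β) ∧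
      (mfill p k (exp u) < α → u - k * β ≤ a * xα * √((k : ℝ) + 1) + C) := by
  set P := gaussianPDFReal 0 1 (|xα| + 1) with hP
  have hPp : 0 < P := gaussianPDFReal_pos _ _ _ (by norm_num)
  set B := 15 + 4 / a with hB
  have hBp : 0 < B := by positivity
  set D := (B + 1) / P with hD
  have hDp : 0 < D := by positivity
  obtain ⟨k0, hk0⟩ := exists_sqrt_ge D
  refine ⟨a * D, by positivity, k0, fun k hk u => ?_⟩
  have hbe := abs_le.mp (mfill_BE ha hab k u)
  have hDN := hk0 k hk
  set N := √((k : ℝ) + 1) with hN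
  have hNp : 0 < N := by positivity
  have haN : 0 < a * N := by positivity
  have hδ : D / N ≤ 1 := by rw [div_le_one hNp]; exact hDN
  have hδ0 : 0 < D / N := by positivity
  have ePD : P * (D / N) = (B + 1) / N := by rw [hD]; field_simp
  have hBN : (B + 1) / N = B / N + 1 / N := by ring
  have h1N : 0 < 1 / N := by positivity
  have e1 : ∀ z, z * (a * N) = a * z * N := by intro z; ring
  constructor
  · intro hα
    by_contra hcon
    push Not at hcon
    have hlt : (u - k * β) / (a * N) ≤ xα - D / N := by
      rw [div_le_iff₀ haN]
      have : (xα - D / N) * (a * N) = a * xα * N - a * D := by field_simp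
      rw [this]; exact hcon.le
    have m1 := stdPhi_mono hlt
    have m2 := stdPhi_sub_ge (x := xα - D / N) (y := xα) (R := |xα| + 1) (by linarith)
      (by linarith [neg_abs_le xα]) (by linarith [le_abs_self xα])
    rw [← hP, sub_sub_cancel, ePD, hx] at m2
    linarith [hbe.2]
  · intro hα
    by_contra hcon
    push Not at hcon
    have hlt : xα + D / N ≤ (u - k * β) / (a * N) := by
      rw [le_div_iff₀ haN]
      have : (xα + D / N) * (a * N) = a * xα * N + a * D := by field_simp
      rw [this]; exact hcon.le
    have m1 := stdPhi_mono hlt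
    have m2 := stdPhi_sub_ge (x := xα) (y := xα + D / N) (R := |xα| + 1) (by linarith)
      (by linarith [neg_abs_le xα]) (by linarith [le_abs_self xα])
    rw [← hP, add_sub_cancel_left, ePD, hx] at m2
    linarith [hbe.1]

end

end

section

section
variable {p : ℝ}

lemma beta_eq {q : ℝ} (hp : 0 < p) (hq : 0 < q) :
    Real.log (1 / √(p * q)) = -(Real.log p + Real.log q) / 2 := by
  rw [one_div, Real.log_inv, Real.log_sqrt (by positivity), Real.log_mul hp.ne' hq.ne']; ring

lemma hab_of (hp : 0 < p) (hp1 : p < 1) {a β : ℝ}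
    (haa : a = |Real.log (p / (1 - p))| / 2) (hβ : β = Real.log (1 / √(p * (1 - p)))) :
    (p = exp (a - β) ∧ 1 - p = exp (-a - β)) ∨ (p = exp (-a - β) ∧ 1 - p = exp (a - β)) := by
  have hq : 0 < 1 - p := by linarith
  rw [beta_eq hp hq] at hβ
  rw [Real.log_div hp.ne' hq.ne'] at haa
  rcases abs_cases (Real.log p - Real.log (1 - p)) with ⟨h, _⟩ | ⟨h, _⟩
  · left
    constructor
    · have : a - β = Real.log p := by rw [haa, hβ, h]; ring
      rw [this, exp_log hp]
    · have : -a - β = Real.log (1 - p) := by rw [haa, hβ, h]; ring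
      rw [this, exp_log hq]
  · right
    constructor
    · have : -a - β = Real.log p := by rw [haa, hβ, h]; ring
      rw [this, exp_log hp]
    · have : a - β = Real.log (1 - p) := by rw [haa, hβ, h]; ring
      rw [this, exp_log hq]

lemma core_ne {a β α xα : ℝ} (hp : 0 < p) (hp1 : p < 1) (ha : 0 < a) (hβ : 0 < β)
    (hab : (p = exp (a - β) ∧ 1 - p = exp (-a - β)) ∨ (p = exp (-a - β) ∧ 1 - p = exp (a - β)))
    (hx : stdPhi xα = α) :
    ∃ c > 0, ∃ C > 0, ∃ K0 : ℕ, 1 ≤ K0 ∧ ∀ K : ℕ, K0 ≤ K → ∀ u : ℝ,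
      α ≤ mfill p K (exp u) → mfill p (K + 1) (exp u) < α →
      |u - K * β - a * xα * √((K : ℝ) + 1)| ≤ C ∧
      ∀ k : ℕ, K ≤ k + 1 → k ≤ K + 1 →
        c / √((K : ℝ) + 2) ≤ mfill p k (exp u) - mfill p (k + 1) (exp u) := by
  obtain ⟨C, hC, k0, hloc⟩ := mfill_loc (p := p) ha hab hx
  set C1 := C + β + a * |xα| with hC1
  have hC1p : 0 < C1 := by positivity
  set R := C1 + β + 2 * (a * |xα|) with hR
  obtain ⟨c, hc, k1, hgap⟩ := mfill_gap hp hp1 ha hab R (by positivity)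
  refine ⟨c, hc, C1, hC1p, max k0 k1 + 1, by omega, fun K hK u h1 h2 => ?_⟩
  have l1 := (hloc K (by omega) u).1 h1
  have l2 := (hloc (K + 1) (by omega) u).2 h2
  push_cast at l2
  have s1 : √((K : ℝ) + 1 + 1) ≤ √((K : ℝ) + 1) + 1 := by
    rw [sqrt_le_left (by positivity)]
    nlinarith [sq_sqrt (show (0:ℝ) ≤ K + 1 by positivity), sqrt_nonneg ((K : ℝ) + 1)]
  have s2 : √((K : ℝ) + 1) ≤ √((K : ℝ) + 1 + 1) := sqrt_le_sqrt (by linarith)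
  have hax : |a * xα| = a * |xα| := by rw [abs_mul, abs_of_pos ha]
  have s3 : a * xα * √((K : ℝ) + 1 + 1) - a * xα * √((K : ℝ) + 1) ≤ a * |xα| := by
    rw [← mul_sub, ← hax]
    have := le_abs_self (a * xα)
    have := abs_nonneg (a * xα)
    nlinarith
  have hloc' : |u - K * β - a * xα * √((K : ℝ) + 1)| ≤ C1 := by
    have : 0 ≤ a * |xα| := by positivity
    rw [abs_le]; constructor
    · linarith
    · linarith
  refine ⟨hloc', fun k hk1 hk2 => ?_⟩
  have hk1' : (K : ℝ) ≤ k + 1 := by exact_mod_cast hk1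
  have hk2' : (k : ℝ) ≤ K + 1 := by exact_mod_cast hk2
  have hs1 : 1 ≤ √((k : ℝ) + 1) := by rw [one_le_sqrt]; linarith [Nat.cast_nonneg (α := ℝ) k]
  have hs2 : √((K : ℝ) + 1) ≤ 2 * √((k : ℝ) + 1) := by
    rw [sqrt_le_left (by positivity), mul_pow, sq_sqrt (by positivity)]
    linarith [Nat.cast_nonneg (α := ℝ) k]
  have := hgap k (by omega) u (by
    have e : u - k * β = (u - K * β - a * xα * √((K : ℝ) + 1)) + a * xα * √((K : ℝ) + 1)
      + (K - k) * β := by ring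
    rw [e]
    have t1 : |(K - k : ℝ) * β| ≤ β := by
      rw [abs_mul, abs_of_pos hβ]
      have : |(K - k : ℝ)| ≤ 1 := by rw [abs_le]; constructor <;> linarith
      nlinarith
    have t2 : |a * xα * √((K : ℝ) + 1)| ≤ a * |xα| * (2 * √((k : ℝ) + 1)) := by
      rw [abs_mul, hax, abs_of_nonneg (sqrt_nonneg _)]
      gcongr
    calc _ ≤ |u - K * β - a * xα * √((K : ℝ) + 1)| + |a * xα * √((K : ℝ) + 1)| + |(K - k : ℝ) * β| :=
          abs_add_three _ _ _
      _ ≤ C1 + a * |xα| * (2 * √((k : ℝ) + 1)) + β := by gcongr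
      _ ≤ R * √((k : ℝ) + 1) := by rw [hR]; nlinarith)
  refine le_trans ?_ this
  gcongr 1
  exact sqrt_le_sqrt (by linarith)

lemma mfill_half (k : ℕ) (x : ℝ) : mfill (1/2) k x = gP (x / 2 ^ k) := by
  induction k generalizing x with
  | zero => simp [mfill]
  | succ k ih =>
    rw [mfill, ih, ih]
    have e1 : 1 / 2 * x / 2 ^ k = x / 2 ^ (k + 1) := by rw [pow_succ]; field_simp
    have e2 : (1 - 1 / 2) * x / 2 ^ k = x / 2 ^ (k + 1) := by rw [pow_succ]; field_simp; ring
    rw [e1, e2]; ring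

lemma core_half {α : ℝ} (hα : 0 < α) (hα1 : α < 1) :
    ∃ c > 0, ∃ C > 0, ∃ K0 : ℕ, 1 ≤ K0 ∧ ∀ K : ℕ, K0 ≤ K → ∀ u : ℝ,
      α ≤ mfill (1/2) K (exp u) → mfill (1/2) (K + 1) (exp u) < α →
      |u - K * Real.log 2| ≤ C ∧
      ∀ k : ℕ, K ≤ k + 1 → k ≤ K + 1 →
        c / √((K : ℝ) + 2) ≤ mfill (1/2) k (exp u) - mfill (1/2) (k + 1) (exp u) := by
  obtain ⟨M, hM⟩ := eventually_atTop.mp (gP_tendsto.eventually (lt_mem_nhds hα1))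
  set M' := max M 1 with hM'
  have hM1 : 1 ≤ M' := le_max_right _ _
  have hMM : ∀ y, gP y < α → y ≤ M' := by
    intro y hy
    by_contra hcon
    push Not at hcon
    exact absurd (hM y ((le_max_left _ _).trans hcon.le)) (not_lt.mpr hy.le)
  set d : ℝ → ℝ := fun y => gP y - gP (y / 2) with hd
  have hdc : Continuous d := by
    have := gP_continuous
    fun_prop
  have hdpos : ∀ y, 0 < y → 0 < d y := by
    intro y hy
    have h1 := gP_strictMono (a := y / 2) (b := y) (by simp; positivity) hy.le (by linarith)
    simp only [hd]; linarith
  obtain ⟨y0, hy0, hmin⟩ := (isCompact_Icc (a := α / 2) (b := 4 * M')).exists_isMinOn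
    ⟨α, by constructor <;> linarith⟩ hdc.continuousOn
  have hc0p : 0 < d y0 := hdpos y0 (by linarith [hy0.1])
  refine ⟨d y0, hc0p, |Real.log α| + Real.log (2 * M') + 1, ?_, 1, le_rfl, fun K hK u h1 h2 => ?_⟩
  · have : 0 ≤ Real.log (2 * M') := Real.log_nonneg (by linarith)
    positivity
  rw [mfill_half] at h1 h2
  set z := exp u / 2 ^ K with hz
  have hzp : 0 < z := by positivity
  have hzα : α ≤ z := h1.trans (gP_le_self hzp.le)
  have hzM : z ≤ 2 * M' := by
    have := hMM _ h2
    have e : exp u / 2 ^ (K + 1) = z / 2 := by rw [hz, pow_succ]; field_simp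
    rw [e] at this; linarith
  constructor
  · have e : u - K * Real.log 2 = Real.log z := by
      rw [hz, Real.log_div (exp_pos _).ne' (by positivity), Real.log_exp, Real.log_pow]
    rw [e]
    have l1 := Real.log_le_log hα hzα
    have l2 := Real.log_le_log hzp hzM
    have l3 : 0 ≤ Real.log (2 * M') := Real.log_nonneg (by linarith)
    rw [abs_le]; constructor
    · linarith [neg_abs_le (Real.log α)]
    · linarith [abs_nonneg (Real.log α)]
  · intro k hk1 hk2
    rw [mfill_half, mfill_half]
    have e : exp u / 2 ^ (k + 1) = exp u / 2 ^ k / 2 := by rw [pow_succ]; field_simp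
    rw [e]
    have hy : exp u / 2 ^ k ∈ Set.Icc (α / 2) (4 * M') := by
      have a1 : z / 2 ≤ exp u / 2 ^ k := by
        rw [hz, div_div, ← pow_succ]
        gcongr
        norm_num
      have a2 : exp u / 2 ^ k ≤ 2 * z := by
        rw [hz]
        have : 2 * (exp u / 2 ^ K) = exp u * 2 / 2 ^ K := by ring
        rw [this, div_le_div_iff₀ (by positivity) (by positivity)]
        have : (2:ℝ) ^ K ≤ 2 ^ (k + 1) := by gcongr; norm_num
        rw [pow_succ] at this
        nlinarith [exp_pos u]
      constructor <;> linarith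
    refine le_trans ?_ (hmin hy)
    apply div_le_self hc0p.le
    rw [one_le_sqrt]; linarith [Nat.cast_nonneg (α := ℝ) K]

lemma beta_pos (hp : 0 < p) (hp1 : p < 1) : 0 < Real.log (1 / √(p * (1 - p))) := by
  rw [beta_eq hp (by linarith)]
  have h1 := Real.log_neg hp hp1
  have h2 := Real.log_neg (show 0 < 1 - p by linarith) (by linarith)
  linarith

lemma core {α xα : ℝ} (hp : 0 < p) (hp1 : p < 1) (hα : 0 < α) (hα1 : α < 1)
    (hx : stdPhi xα = α) {a β : ℝ}
    (haa : a = |Real.log (p / (1 - p))| / 2) (hβ : β = Real.log (1 / √(p * (1 - p)))) :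
    ∃ c > 0, ∃ C > 0, ∃ K0 : ℕ, 1 ≤ K0 ∧ ∀ K : ℕ, K0 ≤ K → ∀ u : ℝ,
      α ≤ mfill p K (exp u) → mfill p (K + 1) (exp u) < α →
      |u - K * β - a * xα * √((K : ℝ) + 1)| ≤ C ∧
      ∀ k : ℕ, K ≤ k + 1 → k ≤ K + 1 →
        c / √((K : ℝ) + 2) ≤ mfill p k (exp u) - mfill p (k + 1) (exp u) := by
  by_cases hph : p = 1 / 2
  · subst hph
    obtain ⟨c, hc, C, hC, K0, hK0, h⟩ := core_half hα hα1
    refine ⟨c, hc, C, hC, K0, hK0, fun K hK u h1 h2 => ?_⟩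
    have ha0 : a = 0 := by rw [haa]; norm_num
    have hb : β = Real.log 2 := by
      rw [hβ, beta_eq hp (by norm_num)]
      norm_num
      rw [Real.log_div (by norm_num) (by norm_num), Real.log_one]; ring
    have := h K hK u h1 h2
    rw [ha0, hb]
    simpa using this
  · have hap : 0 < a := by
      rw [haa]
      have : Real.log (p / (1 - p)) ≠ 0 := by
        have hq : 0 < 1 - p := by linarith
        apply Real.log_ne_zero_of_pos_of_ne_one (by positivity)
        rw [Ne, div_eq_one_iff_eq hq.ne']
        intro h; apply hph; linarith
      positivity
    exact core_ne hp hp1 hap (hβ ▸ beta_pos hp hp1) (hab_of hp hp1 haa hβ) hx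

/-- Inverting the location equation. -/
lemma center_bound {a β xα C : ℝ} (ha : 0 ≤ a) (hβ : 0 < β) (hC : 0 < C) :
    ∃ C' > 0, ∀ K : ℕ, ∀ u : ℝ, 0 ≤ u → |u - K * β - a * xα * √((K : ℝ) + 1)| ≤ C →
      |(K : ℝ) - (u / β - a / β ^ ((3 : ℝ) / 2) * xα * √u)| ≤ C' := by
  set b := a * |xα| / β with hb
  have hb0 : 0 ≤ b := by positivity
  set D := b + C / β + 1 with hD
  have hDp : 0 < D := by positivity
  refine ⟨C / β + b * D, by positivity, fun K u hu h => ?_⟩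
  set A := √((K : ℝ) + 1) with hA
  have hA1 : 1 ≤ A := by rw [hA, one_le_sqrt]; linarith [Nat.cast_nonneg (α := ℝ) K]
  have hAA : A * A = K + 1 := mul_self_sqrt (by positivity)
  set U := √(u / β) with hU
  have hU0 : 0 ≤ U := sqrt_nonneg _
  have hUU : U * U = u / β := mul_self_sqrt (by positivity)
  have hβ32 : a / β ^ ((3 : ℝ) / 2) * xα * √u = a * xα / β * U := by
    have : β ^ ((3 : ℝ) / 2) = β * √β := by
      rw [show (3 : ℝ) / 2 = 1 + 1 / 2 by norm_num, rpow_add hβ, rpow_one, sqrt_eq_rpow]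
    rw [this, hU, sqrt_div hu]
    have : 0 < √β := sqrt_pos.mpr hβ
    field_simp
  have hdiv : |u / β - K - a * xα / β * A| ≤ C / β := by
    have : u / β - K - a * xα / β * A = (u - K * β - a * xα * A) / β := by field_simp
    rw [this, abs_div, abs_of_pos hβ]; gcongr
  have hxb : |a * xα / β| = b := by
    rw [abs_div, abs_mul, abs_of_nonneg ha, abs_of_pos hβ]
  have hAU : |A - U| ≤ D := by
    have h1 : |(A - U) * (A + U)| ≤ b * A + C / β + 1 := by
      have e : (A - U) * (A + U) = -(u / β - K - a * xα / β * A) + -(a * xα / β * A) + 1 := by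
        have : (A - U) * (A + U) = A * A - U * U := by ring
        rw [this, hAA, hUU]; ring
      rw [e]
      calc _ ≤ |-(u / β - K - a * xα / β * A)| + |-(a * xα / β * A)| + |(1:ℝ)| := abs_add_three _ _ _
        _ ≤ C / β + b * A + 1 := by
            rw [abs_neg, abs_neg, abs_mul, hxb, abs_of_nonneg (by linarith : 0 ≤ A), abs_one]
            gcongr
        _ = _ := by ring
    rw [abs_mul, abs_of_nonneg (by linarith : 0 ≤ A + U)] at h1
    have h2 : |A - U| * A ≤ D * A := by
      have : |A - U| * A ≤ |A - U| * (A + U) := by gcongr; linarith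
      have h3 : 0 < C / β := by positivity
      rw [hD]; nlinarith
    exact le_of_mul_le_mul_right h2 (by linarith)
  rw [hβ32]
  have e : (K : ℝ) - (u / β - a * xα / β * U) =
      -(u / β - K - a * xα / β * A) + -(a * xα / β * (A - U)) := by ring
  rw [e]
  calc _ ≤ |-(u / β - K - a * xα / β * A)| + |-(a * xα / β * (A - U))| := abs_add_le _ _
    _ ≤ C / β + b * D := by
        rw [abs_neg, abs_neg, abs_mul, hxb]
        gcongr

end

end

section

section Multinomial
variable {T : Type*} [Fintype T]

/-- Sum functional over `n` independent letters with marks `u`, `v`. -/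
noncomputable def mulL (W : T → ℝ) (u v : T → ℕ) (n : ℕ) (f : ℕ → ℕ → ℝ) : ℝ :=
  ∑ w : Fin n → T, (∏ i, W (w i)) * f (∑ i, u (w i)) (∑ i, v (w i))

lemma mulL_zero (W : T → ℝ) (u v : T → ℕ) (f : ℕ → ℕ → ℝ) : mulL W u v 0 f = f 0 0 := by
  simp [mulL]

lemma mulL_succ (W : T → ℝ) (u v : T → ℕ) (n : ℕ) (f : ℕ → ℕ → ℝ) :
    mulL W u v (n + 1) f =
      ∑ t, W t * mulL W u v n (fun i j => f (u t + i) (v t + j)) := by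
  unfold mulL
  rw [← (Fin.consEquiv (fun _ : Fin (n+1) => T)).sum_comp, Fintype.sum_prod_type]
  refine Finset.sum_congr rfl fun t _ => ?_
  rw [Finset.mul_sum]
  refine Finset.sum_congr rfl fun w _ => ?_
  simp [Fin.consEquiv, Fin.prod_univ_succ, Fin.sum_univ_succ, mul_assoc]

variable {W : T → ℝ} {u v : T → ℕ} {t a b : ℝ}

lemma mulL_rec (H : ∀ h : ℕ → ℕ → ℝ, ∑ s, W s * h (u s) (v s) = t * h 0 0 + a * h 1 0 + b * h 0 1)
    (n : ℕ) (f : ℕ → ℕ → ℝ) :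
    mulL W u v (n + 1) f = t * mulL W u v n f + a * mulL W u v n (fun i j => f (i + 1) j)
      + b * mulL W u v n (fun i j => f i (j + 1)) := by
  rw [mulL_succ, H (fun x y => mulL W u v n (fun i j => f (x + i) (y + j)))]
  simp [add_comm]

lemma mulL_null (n : ℕ) : mulL W u v n (fun _ _ => 0) = 0 := by simp [mulL]

/-- derivative-type coefficient -/
def dco (m : ℕ) (t : ℝ) (n : ℕ) : ℝ := (n.descFactorial m : ℝ) * t ^ (n - m)

lemma dco_one_succ (t : ℝ) (n : ℕ) : dco 1 t (n + 1) = t * dco 1 t n + t ^ n := by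
  unfold dco
  rcases n with _ | n
  · simp
  · simp [pow_succ]; ring

lemma dco_two_succ (t : ℝ) (n : ℕ) : dco 2 t (n + 1) = t * dco 2 t n + 2 * dco 1 t n := by
  unfold dco
  rcases n with _ | _ | n
  · simp
  · simp [Nat.descFactorial]
  · simp [Nat.descFactorial, pow_succ]; ring

lemma mulL_zz (H : ∀ h : ℕ → ℕ → ℝ, ∑ s, W s * h (u s) (v s) = t * h 0 0 + a * h 1 0 + b * h 0 1)
    (n : ℕ) : mulL W u v n (fun i j => if i = 0 ∧ j = 0 then 1 else 0) = t ^ n := by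
  induction n with
  | zero => simp [mulL_zero]
  | succ n ih => rw [mulL_rec H, ih]; simp [mulL_null, pow_succ]; ring

lemma mulL_ze (H : ∀ h : ℕ → ℕ → ℝ, ∑ s, W s * h (u s) (v s) = t * h 0 0 + a * h 1 0 + b * h 0 1)
    (n : ℕ) : mulL W u v n (fun i j => if i = 0 ∧ j ≤ 1 then 1 else 0) = t ^ n + b * dco 1 t n := by
  induction n with
  | zero => simp [mulL_zero, dco]
  | succ n ih =>
    rw [mulL_rec H, ih]
    have := mulL_zz H n
    simp [mulL_null, this, dco_one_succ, pow_succ]; ring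

lemma mulL_ez (H : ∀ h : ℕ → ℕ → ℝ, ∑ s, W s * h (u s) (v s) = t * h 0 0 + a * h 1 0 + b * h 0 1)
    (n : ℕ) : mulL W u v n (fun i j => if i ≤ 1 ∧ j = 0 then 1 else 0) = t ^ n + a * dco 1 t n := by
  induction n with
  | zero => simp [mulL_zero, dco]
  | succ n ih =>
    rw [mulL_rec H, ih]
    have := mulL_zz H n
    simp [mulL_null, this, dco_one_succ, pow_succ]; ring

lemma mulL_ee (H : ∀ h : ℕ → ℕ → ℝ, ∑ s, W s * h (u s) (v s) = t * h 0 0 + a * h 1 0 + b * h 0 1)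
    (n : ℕ) : mulL W u v n (fun i j => if i ≤ 1 ∧ j ≤ 1 then 1 else 0)
      = t ^ n + (a + b) * dco 1 t n + a * b * dco 2 t n := by
  induction n with
  | zero => simp [mulL_zero, dco]
  | succ n ih =>
    rw [mulL_rec H, ih]
    have h1 := mulL_ze H n
    have h2 := mulL_ez H n
    simp [h1, h2, dco_one_succ, dco_two_succ, pow_succ]; ring

end Multinomial

lemma dco_hasSum (m : ℕ) (t x : ℝ) :
    HasSum (fun n : ℕ => x ^ n / (n.factorial : ℝ) * dco m t n) (x ^ m * exp (x * t)) := by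
  rw [← hasSum_nat_add_iff' m]
  have h0 : ∑ i ∈ Finset.range m, x ^ i / (i.factorial : ℝ) * dco m t i = 0 := by
    refine Finset.sum_eq_zero fun i hi => ?_
    simp [dco, Nat.descFactorial_of_lt (Finset.mem_range.mp hi)]
  rw [h0, sub_zero]
  have h := (NormedSpace.expSeries_div_hasSum_exp (x * t)).mul_left (x ^ m)
  rw [← Real.exp_eq_exp_ℝ] at h
  refine h.congr_fun ?_
  intro n
  have hf := Nat.factorial_mul_descFactorial (n := n + m) (k := m) (by omega)
  rw [Nat.add_sub_cancel] at hf
  have hf' : ((n + m).factorial : ℝ) = n.factorial * (n+m).descFactorial m := by exact_mod_cast hf.symm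
  unfold dco
  rw [hf', Nat.add_sub_cancel]
  have hd : ((n + m).descFactorial m : ℝ) ≠ 0 := by
    have : 0 < (n+m).descFactorial m := Nat.descFactorial_pos.mpr (by omega)
    positivity
  field_simp
  ring

lemma po_sum (x : NNReal) (a b t : ℝ) (ht : t = 1 - a - b) :
    ∑' n : ℕ, (exp (-(x:ℝ)) * (x:ℝ) ^ n / (n.factorial : ℝ)) *
        (t ^ n + (a + b) * dco 1 t n + a * b * dco 2 t n) =
      ((1 + x * a) * exp (-(x * a))) * ((1 + x * b) * exp (-(x * b))) := by
  have h := (((dco_hasSum 0 t x).add ((dco_hasSum 1 t x).mul_left (a + b))).add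
    ((dco_hasSum 2 t x).mul_left (a * b))).mul_left (exp (-(x:ℝ)))
  have h2 := h.tsum_eq
  have e : exp (-(x:ℝ)) * exp (x * t) = exp (-(x * a)) * exp (-(x * b)) := by
    rw [← exp_add, ← exp_add]; congr 1; rw [ht]; ring
  calc _ = _ := tsum_congr (fun n => by simp [dco]; ring)
    _ = _ := h2
    _ = (exp (-(x:ℝ)) * exp (x * t)) * ((1 + x * a) * (1 + x * b)) := by ring
    _ = _ := by rw [e]; ring

end

section

/-- weight of a word -/
noncomputable def wW (p : ℝ) {k : ℕ} (r : Fin k → Bool) : ℝ := ∏ j, (if r j then p else 1 - p)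

/-- restriction to first `n` strings and `k` bits -/
def resR (n k : ℕ) (ω : ℕ → ℕ → Bool) : Fin n → Fin k → Bool := fun i j => ω i j

lemma resR_meas (n k : ℕ) : Measurable (resR n k) := by
  unfold resR
  refine measurable_pi_lambda _ fun i => measurable_pi_lambda _ fun j => ?_
  exact (measurable_pi_apply _).comp (measurable_pi_apply _)

lemma wW_nonneg {p : ℝ} (hp : 0 < p) (hp1 : p < 1) {k : ℕ} (r : Fin k → Bool) : 0 ≤ wW p r := by
  unfold wW
  refine Finset.prod_nonneg fun j _ => ?_
  split_ifs <;> linarith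

lemma wW_cons (p : ℝ) {k : ℕ} (c : Bool) (r : Fin k → Bool) :
    wW p (Fin.cons c r : Fin (k+1) → Bool) = (if c then p else 1 - p) * wW p r := by
  simp [wW, Fin.prod_univ_succ]

lemma sum_words {k : ℕ} (F : (Fin (k+1) → Bool) → ℝ) :
    ∑ r, F r = ∑ r : Fin k → Bool, (F (Fin.cons true r) + F (Fin.cons false r)) := by
  rw [← (Fin.consEquiv (fun _ : Fin (k+1) => Bool)).sum_comp, Fintype.sum_prod_type,
    Fintype.sum_bool, ← Finset.sum_add_distrib]
  rfl

lemma wW_sum (p : ℝ) (k : ℕ) : ∑ r : Fin k → Bool, wW p r = 1 := by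
  induction k with
  | zero => simp [wW]
  | succ k ih =>
    rw [sum_words]
    simp only [wW_cons]
    refine Eq.trans (Finset.sum_congr rfl fun r _ => ?_) ih
    simp; ring

lemma mfill_words (p : ℝ) (k : ℕ) (x : ℝ) :
    (∑ r : Fin k → Bool, gP (x * wW p r)) / 2 ^ k = mfill p k x := by
  induction k generalizing x with
  | zero => simp [wW, mfill]
  | succ k ih =>
    rw [sum_words]
    simp only [wW_cons, mfill]
    rw [← ih, ← ih, Finset.sum_add_distrib, pow_succ]
    have : ∀ c : ℝ, ∀ r : Fin k → Bool, x * (c * wW p r) = c * x * wW p r := by intros; ring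
    simp [this]
    field_simp

lemma resR_law {p : ℝ} (hp : 0 < p) (hp1 : p < 1) {ν : Measure (ℕ → ℕ → Bool)} (hν : IIDBits p ν)
    (n k : ℕ) (w : Fin n → Fin k → Bool) :
    ν.real (resR n k ⁻¹' {w}) = ∏ i, wW p (w i) := by
  let b : ℕ × ℕ → Bool := fun s => if h : s.1 < n ∧ s.2 < k then w ⟨s.1, h.1⟩ ⟨s.2, h.2⟩ else false
  have hset : resR n k ⁻¹' {w} = {ω | ∀ s ∈ Finset.range n ×ˢ Finset.range k, ω s.1 s.2 = b s} := by
    ext ω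
    simp only [Set.mem_preimage, Set.mem_singleton_iff, Set.mem_ofPred_eq, Finset.mem_product,
      Finset.mem_range, Prod.forall]
    constructor
    · rintro rfl i j ⟨hi, hj⟩
      simp [b, hi, hj, resR]
    · intro h
      funext i j
      have := h i j ⟨i.2, j.2⟩
      simpa [b, resR] using this
  rw [hset, measureReal_def, hν.2, ENNReal.toReal_prod, Finset.prod_product, ← Fin.prod_univ_eq_prod_range
    (fun i => ∏ j ∈ Finset.range k, (ENNReal.ofReal (if b (i, j) = true then p else 1 - p)).toReal)]
  refine Finset.prod_congr rfl fun i _ => ?_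
  rw [← Fin.prod_univ_eq_prod_range
    (fun j => (ENNReal.ofReal (if b (i, j) = true then p else 1 - p)).toReal)]
  refine Finset.prod_congr rfl fun j _ => ?_
  rw [ENNReal.toReal_ofReal (by split_ifs <;> linarith)]
  simp [b]

lemma resR_integral {p : ℝ} (hp : 0 < p) (hp1 : p < 1) {ν : Measure (ℕ → ℕ → Bool)}
    (hν : IIDBits p ν) (n k : ℕ) (ψ : (Fin n → Fin k → Bool) → ℝ) :
    ∫ ω, ψ (resR n k ω) ∂ν = ∑ w, (∏ i, wW p (w i)) * ψ w := by
  have := hν.1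
  rw [← integral_map (φ := resR n k) (f := ψ) (resR_meas n k).aemeasurable
    (measurable_of_finite ψ).aestronglyMeasurable]
  have : IsProbabilityMeasure (ν.map (resR n k)) :=
    Measure.isProbabilityMeasure_map (resR_meas n k).aemeasurable
  rw [integral_fintype (Integrable.of_finite)]
  refine Finset.sum_congr rfl fun w _ => ?_
  rw [map_measureReal_apply (resR_meas n k) (MeasurableSet.singleton w), resR_law hp hp1 hν, smul_eq_mul]

lemma prefCount_res (ω : ℕ → ℕ → Bool) (n k : ℕ) (r : Fin k → Bool) :
    prefCount ω n k r = ∑ i : Fin n, (if resR n k ω i = r then 1 else 0) := by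
  unfold prefCount
  rw [Finset.card_filter, ← Fin.sum_univ_eq_sum_range
    (fun i => if ∀ j : Fin k, ω i j = r j then 1 else 0)]
  refine Finset.sum_congr rfl fun i _ => ?_
  have : (resR n k ω i = r) ↔ ∀ j : Fin k, ω i j = r j := by rw [funext_iff]; rfl
  simp [this]

lemma prefCount_meas (n k : ℕ) (r : Fin k → Bool) : Measurable (fun ω => prefCount ω n k r) := by
  have : (fun ω => prefCount ω n k r) =
      (fun w : Fin n → Fin k → Bool => ∑ i : Fin n, (if w i = r then 1 else 0)) ∘ resR n k := by
    funext ω; exact prefCount_res ω n k r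
  rw [this]
  exact (measurable_of_finite _).comp (resR_meas n k)

/-- indicator that word `r` is not filled -/
def yI {k : ℕ} (r : Fin k → Bool) (ω : ℕ × (ℕ → ℕ → Bool)) : ℝ :=
  if prefCount ω.2 ω.1 k r ≤ 1 then 1 else 0

lemma yI_meas {k : ℕ} (r : Fin k → Bool) : Measurable (yI r) := by
  refine measurable_from_prod_countable_right fun n => ?_
  have : Measurable (fun m : ℕ => if m ≤ 1 then (1:ℝ) else 0) := measurable_of_countable _
  exact this.comp (prefCount_meas n k r)

lemma yI_nonneg {k : ℕ} (r : Fin k → Bool) (ω) : 0 ≤ yI r ω := by unfold yI; split_ifs <;> norm_num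
lemma yI_le_one {k : ℕ} (r : Fin k → Bool) (ω) : yI r ω ≤ 1 := by unfold yI; split_ifs <;> norm_num
lemma yI_sq {k : ℕ} (r : Fin k → Bool) (ω) : yI r ω * yI r ω = yI r ω := by
  unfold yI; split_ifs <;> norm_num

instance poModel_prob (lam : NNReal) (ν : Measure (ℕ → ℕ → Bool)) [IsProbabilityMeasure ν] :
    IsProbabilityMeasure (poModel lam ν) := by unfold poModel; infer_instance

lemma bdd_integrable {Ω : Type*} [MeasurableSpace Ω] {P : Measure Ω} [IsProbabilityMeasure P]
    {f : Ω → ℝ} (hf : Measurable f) (C : ℝ) (h : ∀ ω, |f ω| ≤ C) : Integrable f P :=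
  Integrable.of_bound hf.aestronglyMeasurable C (Eventually.of_forall h)

/-- Poisson summation of a functional of two mark counts. -/
lemma po_integral {p : ℝ} (hp : 0 < p) (hp1 : p < 1) {ν : Measure (ℕ → ℕ → Bool)}
    (hν : IIDBits p ν) (lam : NNReal) {k : ℕ} (u v : (Fin k → Bool) → ℕ) {a b : ℝ}
    (H : ∀ h : ℕ → ℕ → ℝ, ∑ s : Fin k → Bool, wW p s * h (u s) (v s)
      = (1 - a - b) * h 0 0 + a * h 1 0 + b * h 0 1)
    (f : ℕ × (ℕ → ℕ → Bool) → ℝ) (hfm : Measurable f) 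
    (hf : ∀ n ω, f (n, ω) = if (∑ i : Fin n, u (resR n k ω i)) ≤ 1 ∧ (∑ i : Fin n, v (resR n k ω i)) ≤ 1
      then 1 else 0) :
    ∫ ω, f ω ∂(poModel lam ν) =
      ((1 + lam * a) * exp (-(lam * a))) * ((1 + lam * b) * exp (-(lam * b))) := by
  have := hν.1
  have hIntg : Integrable f (poModel lam ν) := bdd_integrable hfm 1 (by
    rintro ⟨n, ω⟩; rw [hf]; split_ifs <;> norm_num)
  unfold poModel at *
  rw [integral_prod _ hIntg, integral_poissonMeasure, ← po_sum lam a b _ rfl]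
  refine tsum_congr fun n => ?_
  rw [smul_eq_mul]
  congr 1
  rw [← mulL_ee H n]
  simp only [hf]
  rw [resR_integral hp hp1 hν n k (fun w => if (∑ i : Fin n, u (w i)) ≤ 1 ∧ (∑ i : Fin n, v (w i)) ≤ 1
      then 1 else 0)]
  rfl

/-- probability of a word being unfilled -/
noncomputable def hP (x : ℝ) : ℝ := (1 + x) * exp (-x)

lemma yI_mean {p : ℝ} (hp : 0 < p) (hp1 : p < 1) {ν : Measure (ℕ → ℕ → Bool)}
    (hν : IIDBits p ν) (lam : NNReal) {k : ℕ} (r : Fin k → Bool) :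
    ∫ ω, yI r ω ∂(poModel lam ν) = hP (lam * wW p r) := by
  rw [po_integral hp hp1 hν lam (fun s => if s = r then 1 else 0) (fun _ => 0) (a := wW p r) (b := 0)
    ?_ (yI r) (yI_meas r) ?_]
  · simp [hP]
  · intro h
    have : ∀ s : Fin k → Bool, wW p s * h (if s = r then 1 else 0) 0 =
        wW p s * h 0 0 + if s = r then wW p s * (h 1 0 - h 0 0) else 0 := by
      intro s; split_ifs <;> ring
    simp only [this]
    rw [Finset.sum_add_distrib, ← Finset.sum_mul, wW_sum]
    simp; ring
  · intro n ω
    simp [yI, prefCount_res]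

lemma yI_corr {p : ℝ} (hp : 0 < p) (hp1 : p < 1) {ν : Measure (ℕ → ℕ → Bool)}
    (hν : IIDBits p ν) (lam : NNReal) {k : ℕ} (r r' : Fin k → Bool) (hrr : r ≠ r') :
    ∫ ω, yI r ω * yI r' ω ∂(poModel lam ν) = hP (lam * wW p r) * hP (lam * wW p r') := by
  rw [po_integral hp hp1 hν lam (fun s => if s = r then 1 else 0) (fun s => if s = r' then 1 else 0)
    (a := wW p r) (b := wW p r') ?_ (fun ω => yI r ω * yI r' ω) ((yI_meas r).mul (yI_meas r')) ?_]
  · simp [hP]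
  · intro h
    have : ∀ s : Fin k → Bool, wW p s * h (if s = r then 1 else 0) (if s = r' then 1 else 0) =
        wW p s * h 0 0 + ((if s = r then wW p s * (h 1 0 - h 0 0) else 0)
          + if s = r' then wW p s * (h 0 1 - h 0 0) else 0) := by
      intro s
      by_cases h1 : s = r
      · have : s ≠ r' := fun h2 => hrr (h1.symm.trans h2)
        simp [h1, hrr]; ring
      · by_cases h2 : s = r'
        · simp [h2, hrr.symm]; ring
        · simp [h1, h2]
    simp only [this]
    rw [Finset.sum_add_distrib, ← Finset.sum_mul, wW_sum, Finset.sum_add_distrib]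
    simp; ring
  · intro n ω
    simp only [yI, prefCount_res, ite_and]
    split_ifs <;> simp

lemma hP_nonneg {x : ℝ} (hx : 0 ≤ x) : 0 ≤ hP x := by unfold hP; positivity
lemma hP_gP (x : ℝ) : hP x = 1 - gP x := by unfold hP gP; ring

lemma frac_eq (k : ℕ) (ω : ℕ × (ℕ → ℕ → Bool)) :
    fracFilledPo k ω = (∑ r : Fin k → Bool, (1 - yI r ω)) / 2 ^ k := by
  unfold fracFilledPo fillCountPo fillCount
  rw [Finset.card_filter]
  push_cast
  congr 1
  refine Finset.sum_congr rfl fun r _ => ?_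
  unfold yI
  by_cases h : 2 ≤ prefCount ω.2 ω.1 k r
  · have h' : ¬ prefCount ω.2 ω.1 k r ≤ 1 := by omega
    simp [h, h']
  · have h' : prefCount ω.2 ω.1 k r ≤ 1 := by omega
    simp [h, h']

lemma frac_meas (k : ℕ) : Measurable (fracFilledPo k) := by
  have : fracFilledPo k = fun ω => (∑ r : Fin k → Bool, (1 - yI r ω)) / 2 ^ k := funext (frac_eq k)
  rw [this]
  exact (Finset.measurable_sum _ fun r _ => (yI_meas r).const_sub 1).div_const _

lemma frac_sub (p : ℝ) (lam : NNReal) (k : ℕ) (ω : ℕ × (ℕ → ℕ → Bool)) :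
    fracFilledPo k ω - mfill p k lam =
      -(∑ r : Fin k → Bool, (yI r ω - hP (lam * wW p r))) / 2 ^ k := by
  rw [frac_eq, ← mfill_words, ← sub_div, ← Finset.sum_sub_distrib, ← Finset.sum_neg_distrib]
  congr 1
  refine Finset.sum_congr rfl fun r _ => ?_
  rw [hP_gP]; ring

lemma frac_second {p : ℝ} (hp : 0 < p) (hp1 : p < 1) {ν : Measure (ℕ → ℕ → Bool)}
    (hν : IIDBits p ν) (lam : NNReal) (k : ℕ) :
    ∫ ω, (fracFilledPo k ω - mfill p k lam) ^ 2 ∂(poModel lam ν) ≤ 1 / 2 ^ k := by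
  have := hν.1
  set P := poModel lam ν
  have hI1 : ∀ r : Fin k → Bool, Integrable (yI r) P := fun r =>
    bdd_integrable (yI_meas r) 1 fun ω => by
      rw [abs_of_nonneg (yI_nonneg r ω)]; exact yI_le_one r ω
  have hI2 : ∀ r s : Fin k → Bool, Integrable (fun ω => yI r ω * yI s ω) P := fun r s =>
    bdd_integrable ((yI_meas r).mul (yI_meas s)) 1 fun ω => by
      rw [abs_of_nonneg (mul_nonneg (yI_nonneg r ω) (yI_nonneg s ω))]
      exact mul_le_one₀ (yI_le_one r ω) (yI_nonneg s ω) (yI_le_one s ω)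
  set m : (Fin k → Bool) → ℝ := fun r => hP (lam * wW p r) with hm
  have hexp : ∀ ω, (fracFilledPo k ω - mfill p k lam) ^ 2 =
      (∑ r : Fin k → Bool, ∑ s : Fin k → Bool,
        (yI r ω * yI s ω - m s * yI r ω - m r * yI s ω + m r * m s)) / (2 ^ k * 2 ^ k) := by
    intro ω
    rw [frac_sub, div_pow, neg_sq, sq, sq, Finset.sum_mul_sum]
    congr 1
    refine Finset.sum_congr rfl fun r _ => Finset.sum_congr rfl fun s _ => ?_
    simp only [hm]; ring
  have hIntg : ∀ r s : Fin k → Bool, Integrable (fun ω =>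
      yI r ω * yI s ω - m s * yI r ω - m r * yI s ω + m r * m s) P := fun r s =>
    (((hI2 r s).sub ((hI1 r).const_mul _)).sub ((hI1 s).const_mul _)).add (integrable_const _)
  have hval : ∀ r s : Fin k → Bool, ∫ ω,
      (yI r ω * yI s ω - m s * yI r ω - m r * yI s ω + m r * m s) ∂P ≤ if r = s then 1 else 0 := by
    intro r s
    have e1 : Integrable (fun ω => yI r ω * yI s ω - m s * yI r ω) P :=
      (hI2 r s).sub ((hI1 r).const_mul _)
    have e2 : Integrable (fun ω => yI r ω * yI s ω - m s * yI r ω - m r * yI s ω) P :=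
      e1.sub ((hI1 s).const_mul _)
    rw [integral_add e2 (integrable_const _), integral_sub e1 ((hI1 s).const_mul _),
      integral_sub (hI2 r s) ((hI1 r).const_mul _), integral_const_mul, integral_const_mul,
      yI_mean hp hp1 hν, yI_mean hp hp1 hν]
    simp only [integral_const, probReal_univ, one_smul]
    split_ifs with h
    · subst h
      simp only [yI_sq]
      rw [yI_mean hp hp1 hν]
      have h0 : 0 ≤ (lam : ℝ) * wW p r := mul_nonneg lam.2 (wW_nonneg hp hp1 r)
      have := gP_nonneg h0
      have h2 := hP_gP (lam * wW p r)
      simp only [hm]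
      nlinarith
    · rw [yI_corr hp hp1 hν lam r s h]
      simp only [hm]
      apply le_of_eq; ring
  simp only [hexp]
  rw [integral_div, integral_finsetSum _ (fun r _ => integrable_finsetSum _ fun s _ => hIntg r s)]
  have : ∑ r : Fin k → Bool, ∫ ω, ∑ s : Fin k → Bool,
      (yI r ω * yI s ω - m s * yI r ω - m r * yI s ω + m r * m s) ∂P ≤ 2 ^ k := by
    calc _ ≤ ∑ r : Fin k → Bool, (1:ℝ) := by
          refine Finset.sum_le_sum fun r _ => ?_
          rw [integral_finsetSum _ (fun s _ => hIntg r s)]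
          refine (Finset.sum_le_sum fun s _ => hval r s).trans ?_
          simp
      _ = 2 ^ k := by simp
  rw [div_le_div_iff₀ (by positivity) (by positivity)]
  have h2 : (0:ℝ) < 2 ^ k := by positivity
  nlinarith

lemma frac_cheb {p : ℝ} (hp : 0 < p) (hp1 : p < 1) {ν : Measure (ℕ → ℕ → Bool)}
    (hν : IIDBits p ν) (lam : NNReal) (k : ℕ) {ε : ℝ} (hε : 0 < ε) (A : Set (ℕ × (ℕ → ℕ → Bool)))
    (hA : ∀ ω ∈ A, ε ≤ |fracFilledPo k ω - mfill p k lam|) :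
    (poModel lam ν).real A ≤ 1 / 2 ^ k / ε ^ 2 := by
  have := hν.1
  have hbd : ∀ ω, |fracFilledPo k ω| ≤ 1 := by
    intro ω
    rw [frac_eq, abs_of_nonneg (div_nonneg (Finset.sum_nonneg fun r _ => by
      linarith [yI_le_one r ω]) (by positivity)), div_le_one (by positivity)]
    refine (Finset.sum_le_sum fun r _ => show 1 - yI r ω ≤ 1 by linarith [yI_nonneg r ω]).trans ?_
    simp
  have hIntg : Integrable (fun ω => (fracFilledPo k ω - mfill p k lam) ^ 2) (poModel lam ν) :=
    bdd_integrable (((frac_meas k).sub_const _).pow_const 2) ((1 + |mfill p k lam|) ^ 2) fun ω => by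
      rw [abs_pow]
      gcongr
      exact (abs_sub _ _).trans (by gcongr; exact hbd ω)
  have h := mul_meas_ge_le_integral_of_nonneg (μ := poModel lam ν)
    (Eventually.of_forall fun ω => sq_nonneg (fracFilledPo k ω - mfill p k lam)) hIntg (ε ^ 2)
  have h2 := h.trans (frac_second hp hp1 hν lam k)
  have h3 : (poModel lam ν).real A ≤ (poModel lam ν).real
      {ω | ε ^ 2 ≤ (fracFilledPo k ω - mfill p k lam) ^ 2} := by
    refine measureReal_mono fun ω hω => ?_
    have := hA ω hω
    simp only [Set.mem_ofPred_eq]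
    rw [← sq_abs (fracFilledPo k ω - mfill p k lam)]
    gcongr
  rw [le_div_iff₀ (by positivity)]
  have := mul_le_mul_of_nonneg_left h3 (sq_nonneg ε)
  linarith

end

lemma fillCount_succ (ω : ℕ → ℕ → Bool) (n k : ℕ) : fillCount ω n (k + 1) ≤ fillCount ω n k * 2 := by
  unfold fillCount
  have : ((Finset.univ.filter fun r : Fin k → Bool => 2 ≤ prefCount ω n k r) ×ˢ
      (Finset.univ : Finset Bool)).card =
      (Finset.univ.filter fun r : Fin k → Bool => 2 ≤ prefCount ω n k r).card * 2 := by
    rw [Finset.card_product]; simp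
  rw [← this]
  refine Finset.card_le_card_of_injOn
    (fun r : Fin (k+1) → Bool => ((fun j : Fin k => r j.castSucc), r (Fin.last k))) ?_ ?_
  · intro r hr
    simp only [Finset.coe_filter, Finset.mem_univ, true_and, Set.mem_ofPred_eq] at hr
    simp only [Finset.coe_product, Set.mem_prod, Finset.coe_filter, Finset.mem_univ, true_and,
      Set.mem_ofPred_eq, Finset.coe_univ, Set.mem_univ, and_true]
    refine hr.trans ?_
    unfold prefCount
    refine Finset.card_le_card fun i hi => ?_
    simp only [Finset.mem_filter] at hi ⊢
    exact ⟨hi.1, fun j => by simpa using hi.2 j.castSucc⟩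
  · intro r _ r' _ h
    simp only [Prod.mk.injEq] at h
    funext j
    refine Fin.lastCases h.2 (fun j => ?_) j
    exact congrFun h.1 j

lemma frac_antitone (ω : ℕ × (ℕ → ℕ → Bool)) : Antitone (fun k => fracFilledPo k ω) := by
  refine antitone_nat_of_succ_le fun k => ?_
  unfold fracFilledPo fillCountPo
  have h : (fillCount ω.2 ω.1 (k + 1) : ℝ) ≤ fillCount ω.2 ω.1 k * 2 := by
    exact_mod_cast fillCount_succ ω.2 ω.1 k
  rw [pow_succ, div_le_div_iff₀ (by positivity) (by positivity)]
  have h2 : (0:ℝ) < 2 ^ k := by positivity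
  nlinarith

lemma level_mem {α : ℝ} {k : ℕ} {ω : ℕ × (ℕ → ℕ → Bool)} (h1 : α ≤ fracFilledPo k ω)
    (h2 : fracFilledPo (k + 2) ω < α) :
    fillupLevelPo α ω = k ∨ fillupLevelPo α ω = k + 1 := by
  have hub : ∀ j ∈ {k | α ≤ fracFilledPo k ω}, j ≤ k + 1 := by
    intro j hj
    by_contra hlt
    have := frac_antitone ω (show k + 2 ≤ j by omega)
    simp only [Set.mem_ofPred_eq] at hj this
    linarith
  have a1 : k ≤ fillupLevelPo α ω := le_csSup ⟨k + 1, hub⟩ h1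
  have a2 : fillupLevelPo α ω ≤ k + 1 := csSup_le ⟨k, h1⟩ hub
  omega

/-- Probability bound at a good level. -/
lemma prob_bound {p : ℝ} (hp : 0 < p) (hp1 : p < 1) {ν : Measure (ℕ → ℕ → Bool)}
    (hν : IIDBits p ν) (lam : NNReal) (k : ℕ) {α ε : ℝ} (hε : 0 < ε)
    (h1 : α + ε ≤ mfill p k lam) (h2 : mfill p (k + 2) lam ≤ α - ε) :
    ENNReal.ofReal (1 - 2 * (1 / 2 ^ k / ε ^ 2)) ≤ poModel lam ν
      {ω | fillupLevelPo α ω = k ∨ fillupLevelPo α ω = k + 1} := by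
  have := hν.1
  set A := {ω : ℕ × (ℕ → ℕ → Bool) | fracFilledPo k ω < α}
  set B := {ω : ℕ × (ℕ → ℕ → Bool) | α ≤ fracFilledPo (k + 2) ω}
  have hA : (poModel lam ν).real A ≤ 1 / 2 ^ k / ε ^ 2 := frac_cheb hp hp1 hν lam k hε A
    fun ω hω => by
      have hω : fracFilledPo k ω < α := hω
      rw [abs_sub_comm]
      exact le_trans (by linarith) (le_abs_self _)
  have hB : (poModel lam ν).real B ≤ 1 / 2 ^ k / ε ^ 2 :=
    (frac_cheb hp hp1 hν lam (k + 2) hε B fun ω hω => by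
      have hω : α ≤ fracFilledPo (k + 2) ω := hω
      exact le_trans (by linarith) (le_abs_self _)).trans (by gcongr <;> simp)
  have hAm : MeasurableSet A := measurableSet_lt (frac_meas k) measurable_const
  have hBm : MeasurableSet B := measurableSet_le measurable_const (frac_meas (k + 2))
  have hU := (measureReal_union_le (μ := poModel lam ν) A B)
  have hc := probReal_compl_eq_one_sub (μ := poModel lam ν) (hAm.union hBm)
  have hsub : (A ∪ B)ᶜ ⊆ {ω | fillupLevelPo α ω = k ∨ fillupLevelPo α ω = k + 1} := by
    intro ω hω
    simp only [A, B, Set.mem_compl_iff, Set.mem_union, Set.mem_ofPred_eq, not_or, not_lt, not_le] at hω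
    exact level_mem hω.1 hω.2
  refine le_trans ?_ (measure_mono hsub)
  rw [ENNReal.ofReal_le_iff_le_toReal (measure_ne_top _ _)]
  change _ ≤ (poModel lam ν).real _
  rw [hc]; linarith

lemma exists_level {p : ℝ} (hp : 0 < p) (hp1 : p < 1) {α : ℝ} (hα : 0 < α) {x : ℝ} (hx : 0 ≤ x)
    {n : ℕ} (h0 : α ≤ mfill p n x) :
    ∃ K, n ≤ K ∧ α ≤ mfill p K x ∧ mfill p (K + 1) x < α := by
  classical
  have hex : ∃ m, mfill p m x < α := by
    have ht : Tendsto (fun m : ℕ => x / (2:ℝ) ^ m) atTop (nhds 0) :=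
      tendsto_const_nhds.div_atTop (tendsto_pow_atTop_atTop_of_one_lt (by norm_num))
    obtain ⟨m, hm⟩ := (ht.eventually (gt_mem_nhds hα)).exists
    exact ⟨m, (mfill_le hp hp1 m hx).trans_lt hm⟩
  have hf := Nat.find_spec hex
  have hlt : n < Nat.find hex := by
    by_contra hle
    have := mfill_antitone hp hp1 hx (not_lt.mp hle)
    simp only at this
    linarith
  obtain ⟨K, hK⟩ : ∃ K, Nat.find hex = K + 1 := ⟨Nat.find hex - 1, by omega⟩
  refine ⟨K, by omega, ?_, by rwa [← hK]⟩
  have := Nat.find_min hex (show K < Nat.find hex by omega)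
  exact not_lt.mp this

/-- Error bound. -/
noncomputable def errB (c : ℝ) (K : ℕ) : ℝ := 2 * (1 / 2 ^ (K - 1) / (c / √((K : ℝ) + 2) / 2) ^ 2)

lemma errB_tendsto {c : ℝ} (hc : 0 < c) : Tendsto (errB c) atTop (nhds 0) := by
  have h1 : Tendsto (fun n : ℕ => (n : ℝ) * (1/2 : ℝ) ^ n) atTop (nhds 0) :=
    tendsto_self_mul_const_pow_of_lt_one (by norm_num) (by norm_num)
  have h2 : Tendsto (fun n : ℕ => (1/2 : ℝ) ^ n) atTop (nhds 0) :=
    tendsto_pow_atTop_nhds_zero_of_lt_one (by norm_num) (by norm_num)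
  have h3 := (h1.const_mul (16 / c ^ 2)).add (h2.const_mul (32 / c ^ 2))
  simp only [mul_zero, add_zero] at h3
  refine h3.congr' ?_
  filter_upwards [eventually_ge_atTop 1] with K hK
  obtain ⟨m, rfl⟩ : ∃ m, K = m + 1 := ⟨K - 1, by omega⟩
  unfold errB
  have hs : √(((m + 1 : ℕ) : ℝ) + 2) ^ 2 = ((m + 1 : ℕ) : ℝ) + 2 := sq_sqrt (by positivity)
  simp only [Nat.add_sub_cancel, div_pow, hs, one_pow]
  rw [pow_succ]
  push_cast
  field_simp
  ring

lemma good_level {p α : ℝ} (hp : 0 < p) (hp1 : p < 1)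
    {ν : Measure (ℕ → ℕ → Bool)} (hν : IIDBits p ν) {c : ℝ} (hc : 0 < c) (lam : NNReal) {K : ℕ}
    (hK : 1 ≤ K)
    (h1 : α ≤ mfill p K lam) (h2 : mfill p (K + 1) lam < α)
    (hg : ∀ k : ℕ, K ≤ k + 1 → k ≤ K + 1 → c / √((K : ℝ) + 2) ≤ mfill p k lam - mfill p (k + 1) lam) :
    ∃ k : ℕ, |(k : ℝ) - K| ≤ 1 ∧ ENNReal.ofReal (1 - errB c K) ≤ poModel lam ν
      {ω | fillupLevelPo α ω = k ∨ fillupLevelPo α ω = k + 1} := by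
  set ε := c / √((K : ℝ) + 2) / 2 with hεd
  have hε : 0 < ε := by positivity
  have hge : c / √((K : ℝ) + 2) = 2 * ε := by rw [hεd]; ring
  obtain ⟨m, rfl⟩ : ∃ m, K = m + 1 := ⟨K - 1, by omega⟩
  have g0 := hg m (by omega) (by omega)
  have g1 := hg (m + 1) (by omega) (by omega)
  have g2 := hg (m + 2) (by omega) (by omega)
  rw [hge] at g0 g1 g2
  have herr : errB c (m + 1) = 2 * (1 / 2 ^ m / ε ^ 2) := by
    unfold errB; rw [Nat.add_sub_cancel, hεd]
  by_cases hcase : α + ε ≤ mfill p (m + 1) lam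
  · refine ⟨m + 1, by simp, ?_⟩
    refine le_trans ?_ (prob_bound hp hp1 hν lam (m + 1) hε hcase ?_)
    · apply ENNReal.ofReal_le_ofReal
      rw [herr]
      have : (1:ℝ) / 2 ^ (m+1) / ε ^ 2 ≤ 1 / 2 ^ m / ε ^ 2 := by gcongr <;> simp
      linarith
    · have e : m + 1 + 2 = m + 2 + 1 := by omega
      rw [e]
      have e2 : m + 1 + 1 = m + 2 := by omega
      rw [e2] at h2
      linarith
  · refine ⟨m, by simp, ?_⟩
    rw [herr]
    refine prob_bound hp hp1 hν lam m hε (by linarith) ?_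
    have e2 : m + 1 + 1 = m + 2 := by omega
    rw [e2] at h2 g1
    push Not at hcase
    linarith

/-- Theorem 2 of Janson–Szpankowski: two-point concentration of the α-fillup level in the
Poissonized model. -/
theorem fillupLevelPo_two_point_concentration
    (p q α : ℝ) (hp : 0 < p) (hp1 : p < 1) (hq : q = 1 - p) (hα : 0 < α) (hα1 : α < 1)
    (ν : Measure (ℕ → ℕ → Bool)) (hν : IIDBits p ν)
    (xα : ℝ) (hxα : ProbabilityTheory.cdf (ProbabilityTheory.gaussianReal 0 1) xα = α) :
    ∃ C > (0 : ℝ), ∃ kl : NNReal → ℕ,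
      (∀ lam : NNReal, 2 ≤ lam →
        |(kl lam : ℝ) -
            (Real.logb (1 / Real.sqrt (p * q)) lam -
              |Real.log (p / q)| / (2 * Real.log (1 / Real.sqrt (p * q)) ^ ((3 : ℝ) / 2))
                * xα * Real.sqrt (Real.log lam))| ≤ C) ∧
      Tendsto
        (fun lam : NNReal =>
          poModel lam ν
            {ω | fillupLevelPo α ω = kl lam ∨ fillupLevelPo α ω = kl lam + 1})
        atTop (nhds 1) := by
  have hν1 := hν.1
  subst hq
  set β := Real.log (1 / √(p * (1 - p))) with hβ
  set a := |Real.log (p / (1 - p))| / 2 with ha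
  have hβ0 : 0 < β := by rw [hβ]; exact beta_pos hp hp1
  have ha0 : 0 ≤ a := by positivity
  obtain ⟨c, hc, C, hC, K0, hK0, hcore⟩ := core hp hp1 hα hα1 (show stdPhi xα = α from hxα) ha hβ
  obtain ⟨C', hC', hcb⟩ := center_bound (xα := xα) ha0 hβ0 hC
  -- rewriting the centre
  have hcen : ∀ lam : NNReal, Real.logb (1 / √(p * (1 - p))) lam -
      |Real.log (p / (1 - p))| / (2 * β ^ ((3 : ℝ) / 2)) * xα * √(Real.log lam) =
      Real.log lam / β - a / β ^ ((3:ℝ)/2) * xα * √(Real.log lam) := by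
    intro lam
    rw [Real.logb, ← hβ, ha, div_div]
  simp only [hcen]
  -- per lambda choice
  have hmt : ∀ n, ∀ᶠ lam : NNReal in atTop, α ≤ mfill p n lam := by
    intro n
    have h := (mfill_tendsto hp hp1 (k := n)).comp (NNReal.tendsto_coe_atTop.mpr tendsto_id)
    filter_upwards [h.eventually (lt_mem_nhds hα1)] with lam hl using hl.le
  obtain ⟨L1, hL1⟩ := eventually_atTop.mp (hmt K0)
  set L0 := max L1 2 with hL0
  have hch : ∀ lam : NNReal, ∃ k : ℕ, (L0 ≤ lam → ∃ K : ℕ, K0 ≤ K ∧ mfill p (K + 1) lam < α ∧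
      |(k : ℝ) - (Real.log lam / β - a / β ^ ((3:ℝ)/2) * xα * √(Real.log lam))| ≤ C' + 1 ∧
      ENNReal.ofReal (1 - errB c K) ≤ poModel lam ν
        {ω | fillupLevelPo α ω = k ∨ fillupLevelPo α ω = k + 1}) ∧ (¬ L0 ≤ lam → k = 0) := by
    intro lam
    by_cases hl : L0 ≤ lam
    · obtain ⟨K, hKK, h1, h2⟩ := exists_level hp hp1 hα lam.2 (hL1 lam ((le_max_left _ _).trans hl))
      have h1 : α ≤ mfill p K lam := h1
      have h2 : mfill p (K + 1) lam < α := h2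
      have hl2 : (2:ℝ) ≤ lam := by exact_mod_cast (le_max_right _ _).trans hl
      have he : exp (Real.log lam) = lam := exp_log (by linarith)
      obtain ⟨hloc, hgap⟩ := hcore K hKK (Real.log lam) (by rwa [he]) (by rwa [he])
      rw [he] at hgap
      obtain ⟨k, hk1, hk2⟩ := good_level hp hp1 hν hc lam (hK0.trans hKK) h1 h2 hgap
      refine ⟨k, fun _ => ⟨K, hKK, h2, ?_, hk2⟩, fun h => absurd hl h⟩
      have := hcb K (Real.log lam) (Real.log_nonneg (by linarith)) hloc
      have h3 := abs_sub_le (k : ℝ) K (Real.log lam / β - a / β ^ ((3:ℝ)/2) * xα * √(Real.log lam))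
      linarith
    · exact ⟨0, fun h => absurd h hl, fun _ => rfl⟩
  choose kl hkl1 hkl2 using hch
  set D := Real.log L0 / β + a / β ^ ((3:ℝ)/2) * |xα| * √(Real.log L0) with hD
  have hlL0 : 0 ≤ Real.log L0 := Real.log_nonneg (by
    have : (2:ℝ) ≤ L0 := by exact_mod_cast le_max_right L1 2
    linarith)
  have hD0 : 0 ≤ D := by positivity
  refine ⟨C' + 1 + D, by positivity, kl, ?_, ?_⟩
  · intro lam hlam
    by_cases hl : L0 ≤ lam
    · obtain ⟨K, _, _, h, _⟩ := hkl1 lam hl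
      linarith
    · rw [hkl2 lam hl]
      have hl2 : (2:ℝ) ≤ lam := by exact_mod_cast hlam
      have hle : Real.log lam ≤ Real.log L0 := Real.log_le_log (by linarith) (by
        exact_mod_cast (not_le.mp hl).le)
      have hl0 : 0 ≤ Real.log lam := Real.log_nonneg (by linarith)
      have hb : |Real.log lam / β - a / β ^ ((3:ℝ)/2) * xα * √(Real.log lam)| ≤ D := by
        refine (abs_sub _ _).trans ?_
        rw [abs_of_nonneg (by positivity), abs_mul, abs_mul, abs_of_nonneg (a := a / _) (by positivity),
          abs_of_nonneg (a := √_) (sqrt_nonneg _)]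
        rw [hD]
        gcongr
      rw [Nat.cast_zero, zero_sub, abs_neg]
      linarith
  · rw [tendsto_order]
    constructor
    · intro b hb
      have he : Tendsto (fun K => ENNReal.ofReal (1 - errB c K)) atTop (nhds 1) := by
        have := ENNReal.tendsto_ofReal ((errB_tendsto hc).const_sub 1)
        simpa using this
      obtain ⟨n, hn⟩ := eventually_atTop.mp (he.eventually (lt_mem_nhds hb))
      filter_upwards [hmt n, eventually_ge_atTop L0] with lam h1 h2
      obtain ⟨K, _, hK, _, hP⟩ := hkl1 lam h2
      refine (hn K ?_).trans_le hP
      by_contra hlt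
      have := mfill_antitone hp hp1 lam.2 (show K + 1 ≤ n by omega)
      have h3 : mfill p n lam ≤ mfill p (K + 1) lam := this
      linarith
    · intro b hb
      exact Eventually.of_forall fun lam => prob_le_one.trans_lt hb
end
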